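/- arXiv:2408.17232 — 2 statements merged into one kernel-verified Lean document; each statement's English description precedes it below -/
import Mathlib

section
/- The number of bridges of a bubble is asymptotically normal: let c be a real number with 0 < c < 2, let q : ℕ → ℕ be any sequence with q(n)/n → c, set b̄(n) = q(n)(2n−q(n))/(2n) and σ(n) = q(n)(2n−q(n))/(2n^{3/2}). Then for every real t, the proportion (Σ_{b ≤ b̄(n) + t·σ(n)} N_{q(n),b}(n)) / (Σ_b N_{q(n),b}(n)) converges, as n → ∞, to Φ(t) = (1/√(2π)) ∫_{−∞}^{t} e^{−x²/2} dx, the standard normal cumulative distribution function. -/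
namespace ChordBubbles

/-- A linear chord diagram with `n` chords: a fixed-point-free involution of `Fin (2*n)`. -/
def IsDiagram (n : ℕ) (f : Equiv.Perm (Fin (2 * n))) : Prop :=
  (∀ i, f (f i) = i) ∧ ∀ i, f i ≠ i

/-- Vertex `i` is an endpoint of a short chord (a chord joining adjacent vertices). -/
def ShortEnd (n : ℕ) (f : Equiv.Perm (Fin (2 * n))) (i : Fin (2 * n)) : Prop :=
  (f i).val = i.val + 1 ∨ (f i).val + 1 = i.val

/-- `[a, b]` delimits a bubble: a maximal nonempty interval of vertices none of which is an
endpoint of a short chord. -/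
def IsBubble (n : ℕ) (f : Equiv.Perm (Fin (2 * n))) (a b : ℕ) : Prop :=
  a ≤ b ∧ b < 2 * n ∧
  (∀ i : Fin (2 * n), a ≤ i.val → i.val ≤ b → ¬ ShortEnd n f i) ∧
  (a = 0 ∨ ∃ j : Fin (2 * n), j.val + 1 = a ∧ ShortEnd n f j) ∧
  (b + 1 = 2 * n ∨ ∃ j : Fin (2 * n), j.val = b + 1 ∧ ShortEnd n f j)

/-- The size (number of vertices) of the bubble `[a, b]`. -/
def bubbleSize (a b : ℕ) : ℕ := b + 1 - a

/-- The number of bridges of the bubble `[a, b]` under the diagram `f`: the number of chords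
joining a vertex inside the bubble to one outside it. -/
noncomputable def bridges (n : ℕ) (f : Equiv.Perm (Fin (2 * n))) (a b : ℕ) : ℕ :=
  Nat.card {i : Fin (2 * n) // (a ≤ i.val ∧ i.val ≤ b) ∧ ¬ (a ≤ (f i).val ∧ (f i).val ≤ b)}

/-- `N n q b` : the number of pairs (diagram, bubble) where the diagram has `n` chords and the
bubble has size `q` and exactly `b` bridges. -/
noncomputable def N (n q b : ℕ) : ℕ :=
  Nat.card {p : Equiv.Perm (Fin (2 * n)) × ℕ × ℕ //
    IsDiagram n p.1 ∧ IsBubble n p.1 p.2.1 p.2.2 ∧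
    bubbleSize p.2.1 p.2.2 = q ∧ bridges n p.1 p.2.1 p.2.2 = b}

/-!
Deleting the short chords that bound a bubble of size `q` leaves a matching of the bubble's vertices
and the outer vertices in which no two neighbours inside the bubble are joined. Inclusion–exclusion
over those neighbouring pairs multiplies the number of matchings with `b` bridges by a factor close
to `exp (-(1 - b / q))`. Since `b / q` concentrates at `1 - c / 2`, this factor is asymptotically
constant and drops out of the proportion, so the bridges are distributed as in a uniformly random
matching.

For the latter, the recursion for the numbers of matchings with `b` bridges is a Stein identity. It
turns into an approximate Gaussian differential equation for the characteristic function, and Lévy's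
continuity theorem yields the normal limit.
-/

section

open Filter MeasureTheory Topology

section LevyContinuity

variable {ι : Type*}

/-- The law on `ℝ` of the random variable `x` when the index `i ∈ s` is drawn with weight `p i`;
it is a probability measure once the weights are nonnegative and sum to `1`. -/
noncomputable def weightedLaw (s : Finset ι) (p x : ι → ℝ) : Measure ℝ :=
  ∑ i ∈ s, ENNReal.ofReal (p i) • Measure.dirac (x i)

theorem integral_weightedLaw {E : Type*} [NormedAddCommGroup E] [NormedSpace ℝ E]
    [CompleteSpace E] {s : Finset ι} {p : ι → ℝ} (hp : ∀ i ∈ s, 0 ≤ p i) (x : ι → ℝ) (f : ℝ → E) :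
    ∫ y, f y ∂weightedLaw s p x = ∑ i ∈ s, p i • f (x i) := by
  rw [weightedLaw, integral_finsetSum_measure fun i _ =>
    (integrable_dirac enorm_lt_top).smul_measure ENNReal.ofReal_ne_top]
  refine Finset.sum_congr rfl fun i hi => ?_
  rw [integral_smul_measure, integral_dirac, ENNReal.toReal_ofReal (hp i hi)]

theorem charFun_weightedLaw {s : Finset ι} {p : ι → ℝ} (hp : ∀ i ∈ s, 0 ≤ p i) (x : ι → ℝ)
    (θ : ℝ) : charFun (weightedLaw s p x) θ = ∑ i ∈ s, p i • Complex.exp (θ * x i * Complex.I) := by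
  simp_rw [charFun_apply_real, integral_weightedLaw hp]

theorem weightedLaw_real_Iic {s : Finset ι} {p : ι → ℝ} (hp : ∀ i ∈ s, 0 ≤ p i) (x : ι → ℝ)
    (t : ℝ) : (weightedLaw s p x).real (Set.Iic t) = ∑ i ∈ s, if x i ≤ t then p i else 0 := by
  rw [← integral_indicator_one measurableSet_Iic, integral_weightedLaw hp]
  simp [Set.indicator_apply]

theorem isProbabilityMeasure_weightedLaw {s : Finset ι} {p : ι → ℝ} (hp : ∀ i ∈ s, 0 ≤ p i)
    (hsum : ∑ i ∈ s, p i = 1) (x : ι → ℝ) : IsProbabilityMeasure (weightedLaw s p x) :=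
  ⟨by simp [weightedLaw, ← ENNReal.ofReal_sum_of_nonneg hp, hsum]⟩

theorem gaussianReal_real_Iic (t : ℝ) :
    (ProbabilityTheory.gaussianReal 0 1).real (Set.Iic t) =
      (√(2 * Real.pi))⁻¹ * ∫ x in Set.Iic t, Real.exp (-x ^ 2 / 2) := by
  rw [Measure.real, ProbabilityTheory.gaussianReal_apply_eq_integral _ one_ne_zero,
    ENNReal.toReal_ofReal
      (integral_nonneg fun _ => ProbabilityTheory.gaussianPDFReal_nonneg _ _ _),
    ← integral_const_mul]
  simp [ProbabilityTheory.gaussianPDFReal]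

theorem gaussianReal_frontier_Iic (t : ℝ) :
    ProbabilityTheory.gaussianReal 0 1 (frontier (Set.Iic t)) = 0 :=
  ProbabilityTheory.gaussianReal_absolutelyContinuous 0 one_ne_zero (by simp)

theorem tendsto_sum_le_of_tendsto_charFun {s : ℕ → Finset ι} {p x : ℕ → ι → ℝ}
    (hp : ∀ n, ∀ i ∈ s n, 0 ≤ p n i) (hsum : ∀ᶠ n in atTop, ∑ i ∈ s n, p n i = 1)
    (hchar : ∀ θ : ℝ, Tendsto
      (fun n => ∑ i ∈ s n, p n i • Complex.exp (θ * x n i * Complex.I)) atTop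
      (𝓝 (Complex.exp (-(θ : ℂ) ^ 2 / 2)))) (t : ℝ) :
    Tendsto (fun n => ∑ i ∈ s n, if x n i ≤ t then p n i else 0) atTop
      (𝓝 ((√(2 * Real.pi))⁻¹ * ∫ x in Set.Iic t, Real.exp (-x ^ 2 / 2))) := by
  obtain ⟨k, hk⟩ := eventually_atTop.1 hsum
  let law (n : ℕ) : ProbabilityMeasure ℝ := ⟨weightedLaw (s (n + k)) (p (n + k)) (x (n + k)),
    isProbabilityMeasure_weightedLaw (hp _) (hk _ (by omega)) _⟩
  let gauss : ProbabilityMeasure ℝ := ⟨ProbabilityTheory.gaussianReal 0 1, inferInstance⟩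
  have hlaw : Tendsto law atTop (𝓝 gauss) := by
    refine ProbabilityMeasure.tendsto_of_tendsto_charFun fun θ => ?_
    have hgauss : charFun (gauss : Measure ℝ) θ = Complex.exp (-(θ : ℂ) ^ 2 / 2) :=
      (ProbabilityTheory.charFun_gaussianReal θ).trans (by simp [neg_div])
    rw [hgauss]
    exact ((tendsto_add_atTop_iff_nat k).2 (hchar θ)).congr
      fun n => (charFun_weightedLaw (hp _) _ θ).symm
  have hfrontier : gauss (frontier (Set.Iic t)) = 0 :=
    (ProbabilityMeasure.null_iff_toMeasure_null _ _).2 (gaussianReal_frontier_Iic t)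
  rw [← gaussianReal_real_Iic, ← tendsto_add_atTop_iff_nat k]
  exact ((NNReal.continuous_coe.tendsto _).comp
    (ProbabilityMeasure.tendsto_measure_of_null_frontier_of_tendsto hlaw hfrontier)).congr
      fun n => weightedLaw_real_Iic (hp _) _ t

end LevyContinuity

section GaussianODE

theorem norm_cexp_sq_half (θ : ℝ) :
    ‖Complex.exp ((θ : ℂ) ^ 2 / 2)‖ = Real.exp (θ ^ 2 / 2) := by
  rw [Complex.norm_exp]
  norm_cast

theorem norm_sub_exp_neg_sq_half_le {φ φ' : ℝ → ℂ} (hφ : ∀ x, HasDerivAt φ (φ' x) x)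
    (hφ0 : φ 0 = 1) {θ ε : ℝ} (hε : ∀ x, |x| ≤ |θ| → ‖φ' x + x * φ x‖ ≤ ε) :
    ‖φ θ - Complex.exp (-(θ : ℂ) ^ 2 / 2)‖ ≤ ε * |θ| := by
  have hε0 : 0 ≤ ε := (norm_nonneg _).trans (hε 0 (by simp))
  let G (x : ℝ) : ℂ := φ x * Complex.exp ((x : ℂ) ^ 2 / 2)
  have hG (x : ℝ) : HasDerivAt G ((φ' x + x * φ x) * Complex.exp ((x : ℂ) ^ 2 / 2)) x := by
    have hsq : HasDerivAt (fun x : ℝ => (x : ℂ) ^ 2 / 2) (x : ℂ) x := by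
      simpa using (((hasDerivAt_id x).ofReal_comp).pow 2).div_const (2 : ℂ)
    exact ((hφ x).mul hsq.cexp).congr_deriv (by ring)
  have hG0 : G 0 = 1 := by simp [G, hφ0]
  have hGθ : ‖G θ - G 0‖ ≤ ε * Real.exp (θ ^ 2 / 2) * ‖θ - 0‖ := by
    refine Convex.norm_image_sub_le_of_norm_hasDerivWithin_le (s := Set.Icc (-|θ|) |θ|)
      (fun x _ => (hG x).hasDerivWithinAt) (fun x hx => ?_) (convex_Icc _ _)
      (by simp) ⟨neg_abs_le θ, le_abs_self θ⟩
    have hxθ : |x| ≤ |θ| := abs_le.2 hx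
    rw [norm_mul, norm_cexp_sq_half]
    have hsq : x ^ 2 ≤ θ ^ 2 := sq_le_sq.2 hxθ
    gcongr
    exact hε x hxθ
  have hsub : φ θ - Complex.exp (-(θ : ℂ) ^ 2 / 2) =
      (G θ - G 0) * (Complex.exp ((θ : ℂ) ^ 2 / 2))⁻¹ := by
    rw [hG0, sub_mul, mul_inv_cancel_right₀ (Complex.exp_ne_zero _), one_mul, ← Complex.exp_neg,
      neg_div]
  rw [hsub, norm_mul, norm_inv, norm_cexp_sq_half, ← div_eq_mul_inv,
    div_le_iff₀ (Real.exp_pos _)]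
  simpa [mul_right_comm] using hGθ

end GaussianODE

section Ratios

variable {ι κ : Type*} {l : Filter κ}

theorem abs_sum_ite_mul_sub_le {s : Finset ι} {p ρ : ι → ℝ} (hp : ∀ i ∈ s, 0 ≤ p i) (r : ℝ)
    (P : ι → Prop) [DecidablePred P] :
    |∑ i ∈ s, (if P i then p i * ρ i else 0) - r * ∑ i ∈ s, if P i then p i else 0| ≤
      ∑ i ∈ s, p i * |ρ i - r| := by
  rw [Finset.mul_sum, ← Finset.sum_sub_distrib]
  refine (Finset.abs_sum_le_sum_abs _ _).trans (Finset.sum_le_sum fun i hi => ?_)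
  split_ifs
  · rw [mul_comm r, ← mul_sub, abs_mul, abs_of_nonneg (hp i hi)]
  · simpa using mul_nonneg (hp i hi) (abs_nonneg _)

theorem tendsto_sum_ite_mul {s : κ → Finset ι} {p ρ : κ → ι → ℝ}
    (hp : ∀ n, ∀ i ∈ s n, 0 ≤ p n i) {r : ℝ}
    (hρ : Tendsto (fun n => ∑ i ∈ s n, p n i * |ρ n i - r|) l (𝓝 0))
    (P : κ → ι → Prop) [∀ n, DecidablePred (P n)] {z : ℝ}
    (hz : Tendsto (fun n => ∑ i ∈ s n, if P n i then p n i else 0) l (𝓝 z)) :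
    Tendsto (fun n => ∑ i ∈ s n, if P n i then p n i * ρ n i else 0) l (𝓝 (r * z)) := by
  have hdiff := squeeze_zero_norm
    (fun n => (Real.norm_eq_abs _).trans_le (abs_sum_ite_mul_sub_le (hp n) r (P n))) hρ
  simpa using hdiff.add (hz.const_mul r)

theorem tendsto_mediant {x₁ x₂ y₁ y₂ α β : κ → ℝ} {z : ℝ} (hα : ∀ᶠ n in l, 0 ≤ α n)
    (hβ : ∀ᶠ n in l, 0 ≤ β n) (hαβ : ∀ᶠ n in l, 0 < α n + β n)
    (hy₁ : ∀ᶠ n in l, 0 < y₁ n) (hy₂ : ∀ᶠ n in l, 0 < y₂ n)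
    (h₁ : Tendsto (fun n => x₁ n / y₁ n) l (𝓝 z))
    (h₂ : Tendsto (fun n => x₂ n / y₂ n) l (𝓝 z)) :
    Tendsto (fun n => (α n * x₁ n + β n * x₂ n) / (α n * y₁ n + β n * y₂ n)) l (𝓝 z) := by
  rw [tendsto_order] at h₁ h₂ ⊢
  have hpos : ∀ᶠ n in l, 0 < α n * y₁ n + β n * y₂ n := by
    filter_upwards [hα, hβ, hαβ, hy₁, hy₂] with n hα hβ hαβ hy₁ hy₂
    rcases hα.eq_or_lt with h | h
    · rw [← h, zero_add] at hαβ
      simpa [← h] using mul_pos hαβ hy₂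
    · positivity
  refine ⟨fun a ha => ?_, fun a ha => ?_⟩
  · obtain ⟨a', ha, ha'⟩ := exists_between ha
    filter_upwards [hα, hβ, hpos, hy₁, hy₂, h₁.1 a' ha', h₂.1 a' ha']
      with n hα hβ hpos hy₁ hy₂ h₁ h₂
    rw [lt_div_iff₀ hy₁] at h₁
    rw [lt_div_iff₀ hy₂] at h₂
    rw [lt_div_iff₀ hpos]
    nlinarith
  · obtain ⟨a', ha', ha⟩ := exists_between ha
    filter_upwards [hα, hβ, hpos, hy₁, hy₂, h₁.2 a' ha', h₂.2 a' ha']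
      with n hα hβ hpos hy₁ hy₂ h₁ h₂
    rw [div_lt_iff₀ hy₁] at h₁
    rw [div_lt_iff₀ hy₂] at h₂
    rw [div_lt_iff₀ hpos]
    nlinarith

end Ratios

section Weights
open scoped Nat

/-- `stubWeight q b` is the number of ways to choose an ordered list of `b` of `q` vertices (the
feet of the bridges) and to match the other vertices perfectly among themselves. -/
noncomputable def stubWeight (q b : ℕ) : ℝ :=
  if b ≤ q ∧ Even (q - b) then q ! / (q - b)‼ else 0

/-- `bridgeWeight q m b` is the number of perfect matchings of a `q`-set and a disjoint `m`-set
having exactly `b` bridges between them. -/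
noncomputable def bridgeWeight (q m b : ℕ) : ℝ := stubWeight q b * stubWeight m b / b !

theorem stubWeight_nonneg (q b : ℕ) : 0 ≤ stubWeight q b := by
  unfold stubWeight; split_ifs <;> positivity

theorem stubWeight_of_lt {q b : ℕ} (h : q < b) : stubWeight q b = 0 :=
  if_neg fun hb => h.not_ge hb.1

theorem stubWeight_add (b k : ℕ) :
    stubWeight (b + k) b = if Even k then ((b + k)! : ℝ) / k‼ else 0 := by
  simp [stubWeight]

theorem stubWeight_succ_succ (q b : ℕ) :
    stubWeight (q + 1) (b + 1) = (q + 1) * stubWeight q b := by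
  simp only [stubWeight, Nat.add_le_add_iff_right, Nat.add_sub_add_right, mul_ite, mul_zero,
    Nat.factorial_succ]
  push_cast
  rw [mul_div_assoc]

theorem stubWeight_add_two_right (q b : ℕ) :
    stubWeight q (b + 2) = (q - b) * stubWeight q b := by
  rcases lt_or_ge q b with h | h
  · simp [stubWeight_of_lt h, stubWeight_of_lt (show q < b + 2 by omega)]
  obtain ⟨k, rfl⟩ := Nat.exists_eq_add_of_le h
  rcases k with _ | _ | k
  · simp [stubWeight_of_lt]
  · simp [stubWeight_of_lt, stubWeight_add]
  · rw [stubWeight_add, show b + (k + 1 + 1) = b + 2 + k by ring, stubWeight_add]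
    have := (Nat.doubleFactorial_pos k).ne'
    simp only [add_assoc, Nat.reduceAdd, Nat.even_add, even_two, iff_true, mul_ite, mul_zero,
      Nat.doubleFactorial_add_two]
    push_cast
    split_ifs
    · field_simp
      ring
    · rfl

theorem stubWeight_add_two_left (q b : ℕ) :
    stubWeight (q + 2) b * (q + 2 - b : ℕ) = (q + 2) * (q + 1) * stubWeight q b := by
  rcases lt_or_ge q b with h | h
  · rw [stubWeight_of_lt h, mul_zero, mul_eq_zero]
    rcases (by omega : b = q + 1 ∨ q + 2 ≤ b) with rfl | h
    · left; simp [stubWeight_add (q + 1) 1]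
    · right; simp [h]
  obtain ⟨k, rfl⟩ := Nat.exists_eq_add_of_le h
  rw [stubWeight_add, add_assoc, stubWeight_add, Nat.add_sub_cancel_left]
  have := (Nat.doubleFactorial_pos k).ne'
  simp only [← add_assoc, Nat.even_add, even_two, iff_true, ite_mul, zero_mul, mul_ite, mul_zero,
    Nat.doubleFactorial_add_two, Nat.factorial_succ]
  push_cast
  split_ifs
  · field_simp
    ring
  · rfl

theorem bridgeWeight_nonneg (q m b : ℕ) : 0 ≤ bridgeWeight q m b :=
  div_nonneg (mul_nonneg (stubWeight_nonneg _ _) (stubWeight_nonneg _ _)) (Nat.cast_nonneg _)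

theorem bridgeWeight_of_lt_left {q b : ℕ} (m : ℕ) (h : q < b) : bridgeWeight q m b = 0 := by
  simp [bridgeWeight, stubWeight_of_lt h]

theorem bridgeWeight_comm (q m b : ℕ) : bridgeWeight q m b = bridgeWeight m q b := by
  rw [bridgeWeight, bridgeWeight, mul_comm (stubWeight q b)]

theorem bridgeWeight_add_two (q m b : ℕ) :
    bridgeWeight q m (b + 2) * ((b + 1) * (b + 2)) =
      bridgeWeight q m b * ((q - b) * (m - b)) := by
  simp only [bridgeWeight, stubWeight_add_two_right, Nat.factorial_succ]
  push_cast
  field_simp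
  ring

theorem bridgeWeight_mod_two_pos {q m : ℕ} (h : Even (q + m)) : 0 < bridgeWeight q m (q % 2) := by
  have hpos (k : ℕ) : 0 < stubWeight k (k % 2) := by
    have := Nat.doubleFactorial_pos (k - k % 2)
    rw [stubWeight, if_pos ⟨Nat.mod_le _ _, by rw [Nat.even_iff]; omega⟩]
    positivity
  have hmod : m % 2 = q % 2 := by rw [Nat.even_iff] at h; omega
  exact div_pos (mul_pos (hpos q) (hmod ▸ hpos m)) (by positivity)

theorem bridgeWeight_zero_zero (b : ℕ) : bridgeWeight 0 0 b = if b = 0 then 1 else 0 := by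
  rcases b with _ | b <;> simp [bridgeWeight, stubWeight]

theorem bridgeWeight_succ_zero (q m : ℕ) :
    bridgeWeight (q + 1) m 0 = q * bridgeWeight (q - 1) m 0 := by
  rcases q with _ | q
  · simp [bridgeWeight, stubWeight]
  · have hstub : stubWeight (q + 2) 0 = (q + 1) * stubWeight q 0 := by
      have h := stubWeight_add_two_left q 0
      push_cast at h
      refine mul_right_cancel₀ (b := (q : ℝ) + 2) (by positivity) ?_
      linear_combination h
    simp [bridgeWeight, hstub, mul_assoc]

/-- The first of `q + 1` inner vertices is matched either to one of the other `q` inner vertices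
or, by a bridge, to one of the `m` outer vertices. -/
theorem bridgeWeight_succ_succ (q m b : ℕ) :
    bridgeWeight (q + 1) m (b + 1) =
      q * bridgeWeight (q - 1) m (b + 1) + m * bridgeWeight q (m - 1) b := by
  rcases m with _ | m
  · simp [bridgeWeight, stubWeight_of_lt]
  have hstub : (q - b) * stubWeight q b = q * stubWeight (q - 1) (b + 1) := by
    rw [← stubWeight_add_two_right]
    rcases q with _ | q
    · simp [stubWeight_of_lt]
    · simp [stubWeight_succ_succ]
  simp only [bridgeWeight, stubWeight_succ_succ, Nat.factorial_succ, Nat.add_sub_cancel]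
  push_cast
  field_simp
  linear_combination stubWeight m b * hstub

theorem bridgeWeight_zero_succ (m b : ℕ) :
    bridgeWeight 0 (m + 1) b = m * bridgeWeight 0 (m - 1) b := by
  rcases b with _ | b
  · rw [bridgeWeight_comm, bridgeWeight_succ_zero, bridgeWeight_comm]
  · simp [bridgeWeight_of_lt_left]

end Weights

section PathMatchings

/-- The sum of `(-1) ^ k * w k` over all matchings, with `k` the number of edges, of the path on
`p` vertices; it performs inclusion-exclusion over sets of disjoint short chords. -/
def pathMatchingSum (p : ℕ) (w : ℕ → ℝ) : ℝ :=
  ∑ k ∈ Finset.range (p + 1), (-1) ^ k * (p - k).choose k * w k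

theorem pathMatchingSum_zero (w : ℕ → ℝ) : pathMatchingSum 0 w = w 0 := by
  simp [pathMatchingSum]

theorem pathMatchingSum_one (w : ℕ → ℝ) : pathMatchingSum 1 w = w 0 := by
  simp [pathMatchingSum, Finset.sum_range_succ]

theorem choose_path_succ_succ (p k : ℕ) :
    (p + 1 - k).choose (k + 1) = (p - k).choose (k + 1) + (p - k).choose k := by
  rcases le_or_gt k p with h | h
  · rw [Nat.succ_sub h, Nat.choose_succ_succ, add_comm]
  · simp [Nat.choose_eq_zero_of_lt, Nat.sub_eq_zero_of_le h.le, Nat.sub_eq_zero_of_le h,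
      Nat.zero_lt_of_lt h]

theorem pathMatchingSum_add_two (p : ℕ) (w : ℕ → ℝ) :
    pathMatchingSum (p + 2) w =
      pathMatchingSum (p + 1) w - pathMatchingSum p (fun k => w (k + 1)) := by
  have hextend : pathMatchingSum p (fun k => w (k + 1)) =
      ∑ k ∈ Finset.range (p + 2), (-1) ^ k * (p - k).choose k * w (k + 1) := by
    rw [Finset.sum_range_succ, pathMatchingSum]
    simp
  have hextend' : pathMatchingSum (p + 1) w =
      ∑ k ∈ Finset.range (p + 3), (-1) ^ k * (p + 1 - k).choose k * w k := by
    rw [Finset.sum_range_succ, pathMatchingSum]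
    simp
  rw [hextend, hextend', pathMatchingSum, Finset.sum_range_succ', Finset.sum_range_succ' _ (p + 2),
    add_sub_right_comm, ← Finset.sum_sub_distrib]
  congr 1
  refine Finset.sum_congr rfl fun k _ => ?_
  rw [show p + 2 - (k + 1) = p + 1 - k by omega, show p + 1 - (k + 1) = p - k by omega,
    choose_path_succ_succ]
  push_cast
  ring

end PathMatchings

section Avoidance
open scoped Nat

/-- The ratio of `(q - k).choose k * stubWeight (q - 2 * k) b` to `stubWeight q b`: the `k`-th term
(up to sign) in the inclusion-exclusion for `avoidFactor`. The subtractions truncate at `0`, and a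
vanishing factor of the product is what kills all terms with `k > q`. -/
noncomputable def avoidTerm (q b k : ℕ) : ℝ :=
  (∏ j ∈ Finset.range k, ((q - b - 2 * j : ℕ) : ℝ) / (q - j : ℕ)) / k !

/-- The proportion of the matchings counted by `bridgeWeight q m b`, the `q` vertices being in a
row, in which no two consecutive ones of them are matched. It does not depend on `m`. -/
noncomputable def avoidFactor (q b : ℕ) : ℝ :=
  ∑ k ∈ Finset.range (q + 1), (-1) ^ k * avoidTerm q b k

theorem avoidTerm_nonneg (q b k : ℕ) : 0 ≤ avoidTerm q b k := by unfold avoidTerm; positivity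

theorem avoidTerm_le (q b k : ℕ) : avoidTerm q b k ≤ 1 / k ! := by
  unfold avoidTerm
  gcongr
  refine Finset.prod_le_one (fun j _ => by positivity) fun j _ => ?_
  refine div_le_one_of_le₀ ?_ (Nat.cast_nonneg _)
  exact_mod_cast (by omega : q - b - 2 * j ≤ q - j)

theorem avoidTerm_eq_zero {q b k : ℕ} (h : q - b + 2 ≤ 2 * k) : avoidTerm q b k = 0 := by
  rw [avoidTerm, Finset.prod_eq_zero (i := k - 1) (by rw [Finset.mem_range]; omega), zero_div]
  rw [show q - b - 2 * (k - 1) = 0 by omega, Nat.cast_zero, zero_div]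

theorem avoidTerm_succ {q k : ℕ} (b : ℕ) (h : k < q) :
    avoidTerm q b (k + 1) * ((k + 1) * (q - k : ℕ)) = avoidTerm q b k * (q - b - 2 * k : ℕ) := by
  have hqk : ((q - k : ℕ) : ℝ) ≠ 0 := by exact_mod_cast (by omega : q - k ≠ 0)
  rw [avoidTerm, avoidTerm, Finset.prod_range_succ, Nat.factorial_succ]
  push_cast
  field_simp

theorem choose_add_one_mul (r k : ℕ) :
    (r + k + 1).choose (k + 1) * ((k + 1) * (r + k + 2)) =
      (r + k + 2).choose k * ((r + 2) * (r + 1)) := by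
  have h₂ := Nat.choose_mul_succ_eq (r + k + 1) k
  have h₃ := Nat.choose_succ_right_eq (r + k + 1) k
  rw [show r + k + 1 + 1 - k = r + 2 by omega] at h₂
  rw [show r + k + 1 - k = r + 1 by omega] at h₃
  calc (r + k + 1).choose (k + 1) * ((k + 1) * (r + k + 2))
      = (r + k + 1).choose k * (r + k + 1 + 1) * (r + 1) := by
        rw [← mul_assoc, h₃]; ring
    _ = (r + k + 2).choose k * ((r + 2) * (r + 1)) := by rw [h₂]; ring

theorem choose_mul_stubWeight_of_le {q k : ℕ} (b : ℕ) (hk : 2 * k ≤ q) :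
    (q - k).choose k * stubWeight (q - 2 * k) b = avoidTerm q b k * stubWeight q b := by
  induction k with
  | zero => simp [avoidTerm]
  | succ k ih =>
    specialize ih (by omega)
    obtain ⟨r, rfl⟩ := Nat.exists_eq_add_of_le' hk
    have hT := avoidTerm_succ b (show k < r + 2 * (k + 1) by omega)
    have hchoose : ((r + k + 1).choose (k + 1) : ℝ) * ((k + 1) * (r + k + 2)) =
      (r + k + 2).choose k * ((r + 2) * (r + 1)) := by exact_mod_cast choose_add_one_mul r k
    simp only [show r + 2 * (k + 1) - 2 * (k + 1) = r by omega,
      show r + 2 * (k + 1) - (k + 1) = r + k + 1 by omega,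
      show r + 2 * (k + 1) - 2 * k = r + 2 by omega,
      show r + 2 * (k + 1) - k = r + k + 2 by omega,
      show r + 2 * (k + 1) - b - 2 * k = r + 2 - b by omega] at ih hT ⊢
    push_cast at hT
    refine mul_right_cancel₀ (b := ((k : ℝ) + 1) * (r + k + 2)) (by positivity) ?_
    linear_combination stubWeight r b * hchoose - (r + k + 2).choose k * stubWeight_add_two_left r b
      + (r + 2 - b : ℕ) * ih - stubWeight (r + 2 * (k + 1)) b * hT

theorem choose_mul_stubWeight (q b k : ℕ) :
    (q - k).choose k * stubWeight (q - 2 * k) b = avoidTerm q b k * stubWeight q b := by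
  rcases le_or_gt (2 * k) q with hk | hk
  · exact choose_mul_stubWeight_of_le b hk
  rw [Nat.choose_eq_zero_of_lt (by omega), Nat.cast_zero, zero_mul, eq_comm, mul_eq_zero]
  refine or_iff_not_imp_right.2 fun hstub => avoidTerm_eq_zero ?_
  have hbq : b ≤ q ∧ Even (q - b) := by
    by_contra h
    exact hstub (if_neg h)
  have := Nat.even_iff.1 hbq.2
  omega

theorem pathMatchingSum_bridgeWeight (q m b : ℕ) :
    pathMatchingSum q (fun k => bridgeWeight (q - 2 * k) m b) =
      bridgeWeight q m b * avoidFactor q b := by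
  rw [pathMatchingSum, avoidFactor, Finset.mul_sum]
  refine Finset.sum_congr rfl fun k _ => ?_
  rw [bridgeWeight, bridgeWeight]
  linear_combination (-1) ^ k * (stubWeight m b / b !) * choose_mul_stubWeight q b k

theorem summable_one_div_factorial : Summable (fun k : ℕ => 1 / (k ! : ℝ)) := by
  simpa using Real.summable_pow_div_factorial 1

theorem norm_neg_one_pow_mul_avoidTerm_le (q b k : ℕ) :
    ‖(-1) ^ k * avoidTerm q b k‖ ≤ 1 / k ! := by
  rw [norm_mul, norm_pow, norm_neg, norm_one, one_pow, one_mul,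
    Real.norm_of_nonneg (avoidTerm_nonneg q b k)]
  exact avoidTerm_le q b k

theorem avoidFactor_eq_tsum (q b : ℕ) : avoidFactor q b = ∑' k, (-1) ^ k * avoidTerm q b k := by
  refine (tsum_eq_sum fun k hk => ?_).symm
  rw [Finset.mem_range] at hk
  rw [avoidTerm_eq_zero (by omega), mul_zero]

theorem abs_avoidFactor_le (q b : ℕ) : |avoidFactor q b| ≤ Real.exp 1 := by
  rw [avoidFactor_eq_tsum, ← Real.norm_eq_abs, Real.exp_eq_exp_ℝ, NormedSpace.exp_eq_tsum_div]
  simp only [one_pow]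
  exact tsum_of_norm_bounded summable_one_div_factorial.hasSum
    (norm_neg_one_pow_mul_avoidTerm_le q b)

end Avoidance

section AvoidanceLimit
open scoped Nat

variable {ι : Type*} {l : Filter ι} {q b : ι → ℕ} {y : ℝ}

theorem tendsto_avoidTerm_factor (hq : Tendsto q l atTop)
    (hb : Tendsto (fun i => (b i : ℝ) / q i) l (𝓝 y)) (hy : y < 1) (j : ℕ) :
    Tendsto (fun i => ((q i - b i - 2 * j : ℕ) : ℝ) / (q i - j : ℕ)) l (𝓝 (1 - y)) := by
  have hinv : Tendsto (fun i => 1 / (q i : ℝ)) l (𝓝 0) :=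
    tendsto_one_div_atTop_nhds_zero_nat.comp hq
  have hnum : Tendsto (fun i => 1 - (b i : ℝ) / q i - 2 * j * (1 / (q i : ℝ))) l (𝓝 (1 - y)) := by
    simpa using (tendsto_const_nhds.sub hb).sub (hinv.const_mul (2 * (j : ℝ)))
  have hden : Tendsto (fun i => 1 - j * (1 / (q i : ℝ))) l (𝓝 1) := by
    simpa using (tendsto_const_nhds (x := (1 : ℝ))).sub (hinv.const_mul (j : ℝ))
  have hquot := hnum.div hden one_ne_zero
  rw [div_one] at hquot
  refine hquot.congr' ?_
  filter_upwards [hq.eventually_gt_atTop j, hnum.eventually (lt_mem_nhds (sub_pos.2 hy))]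
    with i hj hpos
  have hq0 : (0 : ℝ) < q i := by exact_mod_cast (by omega : 0 < q i)
  have hscale : 1 - (b i : ℝ) / q i - 2 * j * (1 / (q i : ℝ)) = (q i - b i - 2 * j) / q i := by
    field_simp
  have hlt : b i + 2 * j < q i := by
    rw [hscale, div_pos_iff_of_pos_right hq0] at hpos
    exact_mod_cast (by linarith : (b i : ℝ) + 2 * j < q i)
  rw [Pi.div_apply, hscale, Nat.sub_sub, Nat.cast_sub hlt.le, Nat.cast_sub hj.le]
  have : (0 : ℝ) < q i - j := sub_pos.2 (by exact_mod_cast hj)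
  push_cast
  field_simp
  ring

theorem tendsto_avoidFactor (hq : Tendsto q l atTop)
    (hb : Tendsto (fun i => (b i : ℝ) / q i) l (𝓝 y)) (hy : y < 1) :
    Tendsto (fun i => avoidFactor (q i) (b i)) l (𝓝 (Real.exp (-(1 - y)))) := by
  have hterm (k : ℕ) : Tendsto (fun i => (-1) ^ k * avoidTerm (q i) (b i) k) l
      (𝓝 ((-(1 - y)) ^ k / k !)) := by
    have h := ((tendsto_finsetProd (Finset.range k) fun j _ =>
      tendsto_avoidTerm_factor hq hb hy j).div_const (k ! : ℝ)).const_mul ((-1 : ℝ) ^ k)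
    rwa [Finset.prod_const, Finset.card_range, ← mul_div_assoc, ← neg_pow (1 - y)] at h
  simp only [avoidFactor_eq_tsum, Real.exp_eq_exp_ℝ, NormedSpace.exp_eq_tsum_div]
  exact tendsto_tsum_of_dominated_convergence summable_one_div_factorial hterm
    (Eventually.of_forall fun i k => norm_neg_one_pow_mul_avoidTerm_le (q i) (b i) k)

end AvoidanceLimit

section BridgeLaw

/-- The probability that a uniformly random perfect matching of a `q`-set and a disjoint `m`-set
has exactly `b` bridges; identically `0` (division by `0`) if `q + m` is odd. -/
noncomputable def bridgeProb (q m b : ℕ) : ℝ :=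
  bridgeWeight q m b / ∑ j ∈ Finset.range (q + 1), bridgeWeight q m j

/-- The expectation of a function of the number of bridges under `bridgeProb q m`. -/
noncomputable def bridgeExpect (q m : ℕ) {E : Type*} [AddCommGroup E] [Module ℝ E] :
    (ℕ → E) →ₗ[ℝ] E :=
  ∑ b ∈ Finset.range (q + 1), bridgeProb q m b • LinearMap.proj b

/-- The mean of the law `bridgeProb q m`. -/
noncomputable def bridgeMean (q m : ℕ) : ℝ := q * m / (q + m - 1)

variable {q m : ℕ}

theorem sum_bridgeWeight_pos (h : Even (q + m)) :
    0 < ∑ b ∈ Finset.range (q + 1), bridgeWeight q m b :=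
  Finset.sum_pos' (fun b _ => bridgeWeight_nonneg q m b) ⟨q % 2,
    Finset.mem_range_succ_iff.2 (Nat.mod_le _ _), bridgeWeight_mod_two_pos h⟩

theorem bridgeProb_nonneg (q m b : ℕ) : 0 ≤ bridgeProb q m b :=
  div_nonneg (bridgeWeight_nonneg q m b) (Finset.sum_nonneg fun j _ => bridgeWeight_nonneg q m j)

theorem sum_bridgeProb (h : Even (q + m)) :
    ∑ b ∈ Finset.range (q + 1), bridgeProb q m b = 1 := by
  simp_rw [bridgeProb, ← Finset.sum_div]
  exact div_self (sum_bridgeWeight_pos h).ne'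

theorem bridgeProb_of_lt_left {b : ℕ} (h : q < b) : bridgeProb q m b = 0 := by
  rw [bridgeProb, bridgeWeight_of_lt_left m h, zero_div]

theorem bridgeProb_of_lt_right {b : ℕ} (h : m < b) : bridgeProb q m b = 0 := by
  rw [bridgeProb, bridgeWeight_comm, bridgeWeight_of_lt_left q h, zero_div]

theorem bridgeProb_add_two (q m b : ℕ) :
    bridgeProb q m (b + 2) * ((b + 1) * (b + 2)) = bridgeProb q m b * ((q - b) * (m - b)) := by
  rw [bridgeProb, bridgeProb, div_mul_eq_mul_div, bridgeWeight_add_two, div_mul_eq_mul_div]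

theorem bridgeExpect_apply (q m : ℕ) {E : Type*} [AddCommGroup E] [Module ℝ E] (g : ℕ → E) :
    bridgeExpect q m g = ∑ b ∈ Finset.range (q + 1), bridgeProb q m b • g b := by
  simp [bridgeExpect]

theorem bridgeExpect_const (h : Even (q + m)) {E : Type*} [AddCommGroup E] [Module ℝ E] (x : E) :
    bridgeExpect q m (fun _ => x) = x := by
  rw [bridgeExpect_apply, ← Finset.sum_smul, sum_bridgeProb h, one_smul]

theorem bridgeExpect_const_mul (c : ℂ) (g : ℕ → ℂ) :
    bridgeExpect q m (fun b => c * g b) = c * bridgeExpect q m g := by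
  simp_rw [bridgeExpect_apply, Finset.mul_sum, mul_smul_comm]

theorem bridgeExpect_mono {f g : ℕ → ℝ} (h : ∀ b ≤ q, b ≤ m → f b ≤ g b) :
    bridgeExpect q m f ≤ bridgeExpect q m g := by
  simp_rw [bridgeExpect_apply, smul_eq_mul]
  refine Finset.sum_le_sum fun b hb => ?_
  rcases le_or_gt b m with hbm | hbm
  · exact mul_le_mul_of_nonneg_left (h b (Finset.mem_range_succ_iff.1 hb) hbm)
      (bridgeProb_nonneg q m b)
  · simp [bridgeProb_of_lt_right hbm]

theorem norm_bridgeExpect_le {E : Type*} [NormedAddCommGroup E] [NormedSpace ℝ E] (g : ℕ → E) :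
    ‖bridgeExpect q m g‖ ≤ bridgeExpect q m (fun b => ‖g b‖) := by
  simp_rw [bridgeExpect_apply]
  refine (norm_sum_le _ _).trans_eq (Finset.sum_congr rfl fun b _ => ?_)
  rw [norm_smul, Real.norm_of_nonneg (bridgeProb_nonneg q m b), smul_eq_mul]

theorem bridgeExpect_shift {E : Type*} [AddCommGroup E] [Module ℝ E] (g : ℕ → E) :
    bridgeExpect q m (fun b => (b * (b - 1) : ℝ) • g (b - 2)) =
      bridgeExpect q m (fun b => ((q - b) * (m - b) : ℝ) • g b) := by
  have hextend : bridgeExpect q m (fun b => (b * (b - 1) : ℝ) • g (b - 2)) =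
      ∑ b ∈ Finset.range (q + 3), (bridgeProb q m b * (b * (b - 1))) • g (b - 2) := by
    rw [Finset.sum_range_succ, Finset.sum_range_succ, bridgeExpect_apply,
      bridgeProb_of_lt_left (show q < q + 1 by omega),
      bridgeProb_of_lt_left (show q < q + 2 by omega)]
    simp [mul_smul]
  rw [hextend, Finset.sum_range_succ', Finset.sum_range_succ', bridgeExpect_apply]
  simp only [Nat.cast_zero, zero_mul, mul_zero, zero_smul, add_zero, zero_add, Nat.cast_one,
    sub_self]
  refine Finset.sum_congr rfl fun b _ => ?_
  rw [smul_smul, ← bridgeProb_add_two, show b + 1 + 1 - 2 = b by omega]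
  congr 1
  push_cast
  ring

theorem mul_bridgeMean (q m : ℕ) : (q + m - 1) * bridgeMean q m = q * m := by
  rcases eq_or_ne ((q : ℝ) + m - 1) 0 with h | h
  · have hqm : q + m = 1 := by exact_mod_cast sub_eq_zero.1 h
    rcases (by omega : q = 0 ∨ m = 0) with h | h <;> simp_all
  · exact mul_div_cancel₀ _ h

theorem bridgeExpect_stein {E : Type*} [AddCommGroup E] [Module ℝ E] (g : ℕ → E) :
    (q + m - 1 : ℝ) • bridgeExpect q m (fun b => (b - bridgeMean q m) • g b) =
      bridgeExpect q m (fun b => (b * (b - 1) : ℝ) • (g b - g (b - 2))) := by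
  have hquad (b : ℕ) : ((q - b) * (m - b) : ℝ) =
      b * (b - 1) - (q + m - 1) * (b - bridgeMean q m) := by
    linear_combination -mul_bridgeMean q m
  have hshift := bridgeExpect_shift (q := q) (m := m) g
  simp_rw [hquad, sub_smul (_ * _ : ℝ), mul_smul (_ - _ : ℝ)] at hshift
  simp_rw [smul_sub]
  have hsub (f₁ f₂ : ℕ → E) : bridgeExpect q m (fun b => f₁ b - f₂ b) =
    bridgeExpect q m f₁ - bridgeExpect q m f₂ := map_sub _ f₁ f₂
  have hsmul (a : ℝ) (f : ℕ → E) : bridgeExpect q m (fun b => a • f b) =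
    a • bridgeExpect q m f := map_smul _ a f
  rw [hsub, hsmul] at hshift
  rw [hsub, hshift, sub_sub_cancel]

end BridgeLaw

section BridgeMoments

variable {q m : ℕ}

theorem bridgeMean_nonneg (h : 2 ≤ q + m) : 0 ≤ bridgeMean q m := by
  have h' : (2 : ℝ) ≤ q + m := by exact_mod_cast h
  exact div_nonneg (by positivity) (by linarith)

theorem bridgeMean_le (h : 2 ≤ q + m) : bridgeMean q m ≤ (q + m) / 2 := by
  have h' : (2 : ℝ) ≤ q + m := by exact_mod_cast h
  rw [bridgeMean, div_le_iff₀ (by linarith)]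
  nlinarith [sq_nonneg ((q : ℝ) - m)]

theorem bridgeMean_sq_div_le (h : 2 ≤ q + m) :
    bridgeMean q m ^ 2 / (q + m - 1) ≤ (q + m) / 2 := by
  have h' : (2 : ℝ) ≤ q + m := by exact_mod_cast h
  rw [div_le_iff₀ (by linarith)]
  calc bridgeMean q m ^ 2 ≤ ((q + m) / 2) ^ 2 :=
        pow_le_pow_left₀ (bridgeMean_nonneg h) (bridgeMean_le h) 2
    _ ≤ (q + m) / 2 * (q + m - 1) := by nlinarith

theorem bridgeExpect_sub_bridgeMean (h : 2 ≤ q + m) :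
    bridgeExpect q m (fun b => (b : ℝ) - bridgeMean q m) = 0 := by
  have h' : (2 : ℝ) ≤ q + m := by exact_mod_cast h
  have hstein := bridgeExpect_stein (q := q) (m := m) fun _ => (1 : ℝ)
  simp only [smul_eq_mul, mul_one, sub_self, mul_zero] at hstein
  rw [show bridgeExpect q m (fun _ => (0 : ℝ)) = 0 from map_zero _] at hstein
  exact (mul_eq_zero.1 hstein).resolve_left (by linarith)

theorem bridgeExpect_sq_sub_bridgeMean_le (heven : Even (q + m)) (h : 2 ≤ q + m) :
    bridgeExpect q m (fun b => ((b : ℝ) - bridgeMean q m) ^ 2) ≤ (q + m) / 2 := by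
  have h' : (2 : ℝ) ≤ q + m := by exact_mod_cast h
  have hcenter : bridgeExpect q m (fun b => ((b : ℝ) - bridgeMean q m) ^ 2) =
      bridgeExpect q m (fun b => ((b : ℝ) - bridgeMean q m) • (b : ℝ)) := by
    rw [← sub_eq_zero, ← map_sub, ← smul_zero (-bridgeMean q m),
      ← bridgeExpect_sub_bridgeMean h, ← map_smul]
    congr 1
    ext b
    simp only [Pi.sub_apply, Pi.smul_apply, smul_eq_mul]
    ring
  have hbound : (0 : ℝ) ≤ (q + m - 1) * ((q + m) / 2) :=
    mul_nonneg (by linarith) (by linarith)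
  have hdiff : bridgeExpect q m (fun b => (b * (b - 1) : ℝ) • ((b : ℝ) - (b - 2 : ℕ))) ≤
      (q + m - 1) * ((q + m) / 2) := by
    rw [← bridgeExpect_const (q := q) (m := m) heven ((q + m - 1) * ((q + m) / 2) : ℝ)]
    refine bridgeExpect_mono fun b hbq hbm => ?_
    rcases b with _ | _ | b
    · simpa using hbound
    · simpa using hbound
    · have hb : 2 * ((b + 1 + 1 : ℕ) : ℝ) ≤ q + m := by
        exact_mod_cast (by omega : 2 * (b + 1 + 1) ≤ q + m)
      rw [show b + 1 + 1 - 2 = b by omega, smul_eq_mul]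
      push_cast at hb ⊢
      nlinarith
  rw [hcenter]
  refine le_of_mul_le_mul_left ?_ (show (0 : ℝ) < q + m - 1 by linarith)
  rw [← smul_eq_mul, bridgeExpect_stein]
  exact hdiff

theorem bridgeExpect_abs_sub_bridgeMean_le (heven : Even (q + m)) (h : 2 ≤ q + m) :
    bridgeExpect q m (fun b => |(b : ℝ) - bridgeMean q m|) ≤ √(q + m) := by
  have h' : (2 : ℝ) ≤ q + m := by exact_mod_cast h
  have hsqrt : 0 < √(q + m : ℝ) := Real.sqrt_pos.2 (by linarith)
  have hsq : √(q + m : ℝ) ^ 2 = q + m := Real.sq_sqrt (by linarith)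
  have hyoung :
      bridgeExpect q m ((2 * √(q + m : ℝ)) • fun b : ℕ => |(b : ℝ) - bridgeMean q m|) ≤
        bridgeExpect q m
          ((fun _ : ℕ => (q + m : ℝ)) + fun b : ℕ => ((b : ℝ) - bridgeMean q m) ^ 2) := by
    refine bridgeExpect_mono fun b _ _ => ?_
    simp only [Pi.smul_apply, Pi.add_apply, smul_eq_mul]
    nlinarith [sq_nonneg (√(q + m : ℝ) - |(b : ℝ) - bridgeMean q m|),
      sq_abs ((b : ℝ) - bridgeMean q m)]
  rw [map_smul, map_add, bridgeExpect_const heven, smul_eq_mul] at hyoung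
  nlinarith [bridgeExpect_sq_sub_bridgeMean_le heven h]

end BridgeMoments

section BridgeCharFun

/-- The characteristic function of the centred number of bridges under `bridgeProb q m`. -/
noncomputable def bridgeCharFun (q m : ℕ) (u : ℝ) : ℂ :=
  bridgeExpect q m fun b => Complex.exp ((u * (b - bridgeMean q m) : ℝ) * Complex.I)

variable {q m : ℕ}

theorem bridgeCharFun_zero (heven : Even (q + m)) : bridgeCharFun q m 0 = 1 := by
  simp [bridgeCharFun, bridgeExpect_const heven]

theorem norm_bridgeCharFun_le (heven : Even (q + m)) (u : ℝ) : ‖bridgeCharFun q m u‖ ≤ 1 :=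
  (norm_bridgeExpect_le _).trans_eq <| by
    simp_rw [Complex.norm_exp_ofReal_mul_I]
    exact bridgeExpect_const heven 1

theorem hasDerivAt_bridgeCharFun (u : ℝ) :
    HasDerivAt (bridgeCharFun q m) (Complex.I * bridgeExpect q m fun b =>
      (b - bridgeMean q m : ℝ) • Complex.exp ((u * (b - bridgeMean q m) : ℝ) * Complex.I)) u := by
  rw [← bridgeExpect_const_mul]
  unfold bridgeCharFun
  simp_rw [bridgeExpect_apply]
  refine HasDerivAt.fun_sum fun b _ => HasDerivAt.fun_const_smul _ ?_
  have hlin : HasDerivAt (fun u : ℝ => ((u * (b - bridgeMean q m) : ℝ) : ℂ) * Complex.I)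
      ((b - bridgeMean q m : ℝ) * Complex.I) u := by
    simpa using ((hasDerivAt_id u).mul_const (b - bridgeMean q m)).ofReal_comp.mul_const Complex.I
  exact hlin.cexp.congr_deriv (by rw [Complex.real_smul]; ring)

theorem bridgeExpect_stein_cexp (u : ℝ) :
    (q + m - 1 : ℝ) • bridgeExpect q m (fun b =>
      (b - bridgeMean q m : ℝ) • Complex.exp ((u * (b - bridgeMean q m) : ℝ) * Complex.I)) =
    (1 - Complex.exp (Complex.I * (-2 * u : ℝ))) * bridgeExpect q m (fun b =>
      (b * (b - 1) : ℝ) • Complex.exp ((u * (b - bridgeMean q m) : ℝ) * Complex.I)) := by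
  rw [bridgeExpect_stein, ← bridgeExpect_const_mul]
  congr 1
  ext b
  rcases b with _ | _ | b
  · simp
  · simp
  rw [show b + 1 + 1 - 2 = b by omega, mul_smul_comm, sub_mul, one_mul, ← Complex.exp_add]
  congr 4
  push_cast
  ring

theorem norm_bridgeExpect_mul_pred_sub_le (heven : Even (q + m)) (h : 2 ≤ q + m)
    {f : ℕ → ℂ} (hf : ∀ b, ‖f b‖ = 1) :
    ‖bridgeExpect q m (fun b => (b * (b - 1) : ℝ) • f b) -
      (bridgeMean q m ^ 2 : ℝ) • bridgeExpect q m f‖ ≤ 2 * (q + m) * √(q + m) := by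
  have h' : (2 : ℝ) ≤ q + m := by exact_mod_cast h
  have hsqrt : 1 ≤ √(q + m : ℝ) := Real.one_le_sqrt.2 (by linarith)
  rw [← map_smul, ← map_sub]
  calc _ ≤ bridgeExpect q m (((q + m : ℝ) • fun b : ℕ => |(b : ℝ) - bridgeMean q m|) +
          fun _ : ℕ => (q + m : ℝ)) := by
        refine (norm_bridgeExpect_le _).trans (bridgeExpect_mono fun b hbq hbm => ?_)
        have hb : 2 * (b : ℝ) ≤ q + m := by exact_mod_cast (by omega : 2 * b ≤ q + m)
        have hmean := bridgeMean_le h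
        have hmean0 := bridgeMean_nonneg h
        simp only [Pi.sub_apply, Pi.smul_apply, Pi.add_apply, smul_eq_mul]
        rw [← sub_smul, norm_smul, hf, mul_one, Real.norm_eq_abs,
          show (b * (b - 1) - bridgeMean q m ^ 2 : ℝ) =
            (b + bridgeMean q m) * (b - bridgeMean q m) - b by ring]
        refine (abs_sub _ _).trans (add_le_add ?_ ?_)
        · rw [abs_mul, abs_of_nonneg (by positivity)]
          exact mul_le_mul_of_nonneg_right (by linarith) (abs_nonneg _)
        · rw [Nat.abs_cast]
          linarith
    _ ≤ (q + m) * √(q + m) + (q + m) := by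
        rw [map_add, map_smul, bridgeExpect_const heven, smul_eq_mul]
        gcongr
        exact bridgeExpect_abs_sub_bridgeMean_le heven h
    _ ≤ _ := by nlinarith

theorem deriv_bridgeCharFun_add (h : 2 ≤ q + m) (u : ℝ) :
    deriv (bridgeCharFun q m) u +
        (2 * (bridgeMean q m ^ 2 / (q + m - 1)) * u : ℝ) * bridgeCharFun q m u =
      -Complex.I * (Complex.exp (Complex.I * (-2 * u : ℝ)) - 1 - Complex.I * (-2 * u : ℝ)) *
          (bridgeMean q m ^ 2 / (q + m - 1) : ℝ) * bridgeCharFun q m u -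
        Complex.I * (Complex.exp (Complex.I * (-2 * u : ℝ)) - 1) * ((q + m - 1 : ℝ)⁻¹ •
          (bridgeExpect q m (fun b =>
            (b * (b - 1) : ℝ) • Complex.exp ((u * (b - bridgeMean q m) : ℝ) * Complex.I)) -
          (bridgeMean q m ^ 2 : ℝ) • bridgeCharFun q m u)) := by
  have h' : (2 : ℝ) ≤ q + m := by exact_mod_cast h
  have hL : (q + m - 1 : ℝ) ≠ 0 := by linarith
  rw [(hasDerivAt_bridgeCharFun u).deriv, ← inv_smul_smul₀ hL (bridgeExpect q m _),
    bridgeExpect_stein_cexp, smul_sub, smul_smul, ← div_eq_inv_mul]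
  simp only [Complex.real_smul]
  push_cast
  linear_combination (2 * (bridgeMean q m ^ 2 / (q + m - 1)) * u * bridgeCharFun q m u : ℂ) *
    Complex.I_sq

/-- The differential equation of the characteristic function of a centred Gaussian of variance
`2 * bridgeMean q m ^ 2 / (q + m - 1)`, up to a small error. -/
theorem norm_deriv_bridgeCharFun_add_le (heven : Even (q + m)) (h : 2 ≤ q + m) {u : ℝ}
    (hu : 2 * |u| ≤ 1) :
    ‖deriv (bridgeCharFun q m) u +
      (2 * (bridgeMean q m ^ 2 / (q + m - 1)) * u : ℝ) * bridgeCharFun q m u‖ ≤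
      2 * u ^ 2 * (q + m) + 8 * |u| * √(q + m) := by
  have h' : (2 : ℝ) ≤ q + m := by exact_mod_cast h
  have hL : (0 : ℝ) < q + m - 1 := by linarith
  have hκ_le := bridgeMean_sq_div_le h
  have hz : ‖Complex.I * (-2 * u : ℝ)‖ = 2 * |u| := by simp
  rw [deriv_bridgeCharFun_add h]
  set κ := bridgeMean q m ^ 2 / (q + m - 1 : ℝ)
  have hκ : 0 ≤ κ := div_nonneg (sq_nonneg _) hL.le
  refine (norm_sub_le _ _).trans (add_le_add ?_ ?_)
  · simp only [norm_mul _ (bridgeCharFun q m u), norm_mul _ (Complex.ofReal _),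
      norm_mul (-Complex.I), norm_neg, Complex.norm_I, one_mul, Complex.norm_of_nonneg hκ]
    calc _ ≤ (2 * |u|) ^ 2 * ((q + m) / 2) * 1 := by
          gcongr
          · exact hz ▸ Complex.norm_exp_sub_one_sub_id_le (hz ▸ hu)
          · exact norm_bridgeCharFun_le heven u
      _ = _ := by rw [mul_pow, sq_abs]; ring
  · have hexp : ‖Complex.exp (Complex.I * (-2 * u : ℝ)) - 1‖ ≤ 2 * |u| :=
      Real.norm_exp_I_mul_ofReal_sub_one_le.trans_eq (by simp)
    rw [norm_mul, norm_mul, norm_smul, Complex.norm_I, one_mul, norm_inv, Real.norm_of_nonneg hL.le]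
    calc _ ≤ 2 * |u| * ((q + m - 1 : ℝ)⁻¹ * (2 * (q + m) * √(q + m))) := by
          gcongr
          exact norm_bridgeExpect_mul_pred_sub_le heven h fun b =>
            Complex.norm_exp_ofReal_mul_I _
      _ = 4 * |u| * √(q + m) * ((q + m) / (q + m - 1)) := by ring
      _ ≤ 4 * |u| * √(q + m) * 2 := by
          gcongr
          rw [div_le_iff₀ hL]
          linarith
      _ = _ := by ring

end BridgeCharFun

section BridgeCLT

theorem norm_bridgeCharFun_sub_le {q m : ℕ} (heven : Even (q + m)) (h : 2 ≤ q + m) {θ a : ℝ}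
    (ha : 2 * |θ * a| ≤ 1) :
    ‖bridgeCharFun q m (θ * a) - Complex.exp (-(θ : ℂ) ^ 2 / 2)‖ ≤
      (|a| * (2 * (θ * a) ^ 2 * (q + m) + 8 * |θ * a| * √(q + m)) +
        |θ| * |1 - 2 * (a ^ 2 * (bridgeMean q m ^ 2 / (q + m - 1)))|) * |θ| := by
  set κ := bridgeMean q m ^ 2 / (q + m - 1 : ℝ)
  have hderiv (x : ℝ) : HasDerivAt (fun x => bridgeCharFun q m (x * a))
      (a • deriv (bridgeCharFun q m) (x * a)) x :=
    HasDerivAt.scomp (h := fun x => x * a) x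
      (hasDerivAt_bridgeCharFun (x * a)).differentiableAt.hasDerivAt (hasDerivAt_mul_const a)
  refine norm_sub_exp_neg_sq_half_le hderiv (by rw [zero_mul, bridgeCharFun_zero heven])
    fun x hx => ?_
  have hxa : |x * a| ≤ |θ * a| := by
    rw [abs_mul, abs_mul]
    exact mul_le_mul_of_nonneg_right hx (abs_nonneg a)
  have hsplit : a • deriv (bridgeCharFun q m) (x * a) + x * bridgeCharFun q m (x * a) =
      a • (deriv (bridgeCharFun q m) (x * a) +
        (2 * κ * (x * a) : ℝ) * bridgeCharFun q m (x * a)) +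
      (x * (1 - 2 * (a ^ 2 * κ)) : ℝ) * bridgeCharFun q m (x * a) := by
    simp only [Complex.real_smul]
    push_cast
    ring
  rw [hsplit]
  refine (norm_add_le _ _).trans (add_le_add ?_ ?_)
  · rw [norm_smul, Real.norm_eq_abs]
    gcongr
    refine (norm_deriv_bridgeCharFun_add_le heven h (by linarith)).trans ?_
    have hsq : (x * a) ^ 2 ≤ (θ * a) ^ 2 := sq_le_sq.2 hxa
    gcongr
  · rw [norm_mul, Complex.norm_real, Real.norm_eq_abs, abs_mul]
    exact (mul_le_of_le_one_right (by positivity) (norm_bridgeCharFun_le heven _)).trans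
      (mul_le_mul_of_nonneg_right hx (abs_nonneg _))

variable {ι : Type*} {l : Filter ι} {q m : ι → ℕ} {a : ι → ℝ} {s : ℝ}

theorem tendsto_bridgeCharFun (heven : ∀ᶠ i in l, Even (q i + m i))
    (hL : Tendsto (fun i => (q i + m i : ℝ)) l atTop)
    (ha : Tendsto (fun i => a i * √(q i + m i)) l (𝓝 s))
    (hκ : Tendsto (fun i => a i ^ 2 * (bridgeMean (q i) (m i) ^ 2 / (q i + m i - 1))) l
      (𝓝 (1 / 2))) (θ : ℝ) :
    Tendsto (fun i => bridgeCharFun (q i) (m i) (θ * a i)) l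
      (𝓝 (Complex.exp (-(θ : ℂ) ^ 2 / 2))) := by
  have hsqrt : Tendsto (fun i => √(q i + m i : ℝ)) l atTop := Real.tendsto_sqrt_atTop.comp hL
  have hsq : ∀ᶠ i in l, √(q i + m i : ℝ) ≠ 0 := hsqrt.eventually_ne_atTop 0
  have ha0 : Tendsto a l (𝓝 0) := by
    refine (ha.div_atTop hsqrt).congr' ?_
    filter_upwards [hsq] with i hi
    exact mul_div_cancel_right₀ _ hi
  have hsmall : ∀ᶠ i in l, 2 * |θ * a i| ≤ 1 :=
    (((ha0.const_mul θ).abs.const_mul 2).eventually_lt_const (by simp)).mono fun _ => le_of_lt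
  have hbound : Tendsto (fun i =>
      (2 * |a i| * θ ^ 2 * (a i * √(q i + m i)) ^ 2 + 8 * |a i| * |θ| * |a i * √(q i + m i)| +
        |θ| * |1 - 2 * (a i ^ 2 * (bridgeMean (q i) (m i) ^ 2 / (q i + m i - 1)))|) * |θ|)
      l (𝓝 0) := by
    convert (((((ha0.abs.const_mul 2).mul_const (θ ^ 2)).mul (ha.pow 2)).add
      (((ha0.abs.const_mul 8).mul_const |θ|).mul ha.abs)).add
      (((hκ.const_mul 2).const_sub 1).abs.const_mul |θ|)).mul_const |θ| using 2
    simp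
  refine tendsto_iff_norm_sub_tendsto_zero.2 (squeeze_zero' (.of_forall fun _ => norm_nonneg _)
    ?_ hbound)
  filter_upwards [heven, hL.eventually_ge_atTop 2, hsmall] with i hi h2 hs
  refine (norm_bridgeCharFun_sub_le hi (by exact_mod_cast h2) hs).trans_eq ?_
  rw [mul_pow (a i), Real.sq_sqrt (by positivity), abs_mul, abs_mul (a i),
    abs_of_nonneg (Real.sqrt_nonneg _)]
  ring

theorem tendsto_sum_bridgeProb {q m : ℕ → ℕ} {a y : ℕ → ℝ}
    (heven : ∀ᶠ n in atTop, Even (q n + m n))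
    (hL : Tendsto (fun n => (q n + m n : ℝ)) atTop atTop)
    (ha : Tendsto (fun n => a n * √(q n + m n)) atTop (𝓝 s))
    (hκ : Tendsto (fun n => a n ^ 2 * (bridgeMean (q n) (m n) ^ 2 / (q n + m n - 1))) atTop
      (𝓝 (1 / 2)))
    (hy : Tendsto (fun n => a n * (bridgeMean (q n) (m n) - y n)) atTop (𝓝 0)) (t : ℝ) :
    Tendsto (fun n => ∑ b ∈ Finset.range (q n + 1),
        if a n * (b - y n) ≤ t then bridgeProb (q n) (m n) b else 0) atTop
      (𝓝 ((√(2 * Real.pi))⁻¹ * ∫ x in Set.Iic t, Real.exp (-x ^ 2 / 2))) := by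
  refine tendsto_sum_le_of_tendsto_charFun (fun n b _ => bridgeProb_nonneg (q n) (m n) b)
    (heven.mono fun n hn => sum_bridgeProb hn) (fun θ => ?_) t
  have hphase : Tendsto (fun n => Complex.exp ((θ * (a n * (bridgeMean (q n) (m n) - y n)) : ℝ) *
      Complex.I)) atTop (𝓝 1) := by
    have hcont : Continuous fun x : ℝ => Complex.exp ((θ * x : ℝ) * Complex.I) := by fun_prop
    simpa [Function.comp_def] using (hcont.tendsto 0).comp hy
  have hmul := hphase.mul (tendsto_bridgeCharFun heven hL ha hκ θ)
  rw [one_mul] at hmul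
  refine hmul.congr fun n => ?_
  rw [bridgeCharFun, ← bridgeExpect_const_mul, bridgeExpect_apply]
  refine Finset.sum_congr rfl fun b _ => ?_
  rw [← Complex.exp_add]
  congr 2
  push_cast
  ring

end BridgeCLT

section ScalingRegime

/-- The centring `b̄ = q (2n - q) / (2n)` of the number of bridges of a bubble of size `q`. -/
noncomputable def bridgeCenter (n q : ℕ) : ℝ := q * (2 * n - q) / (2 * n)

/-- The scale `σ = q (2n - q) / (2 n^(3/2))` of the number of bridges of a bubble of size `q`. -/
noncomputable def bridgeScale (n q : ℕ) : ℝ := q * (2 * n - q) / (2 * (n : ℝ) ^ ((3 : ℝ) / 2))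

theorem bridgeScale_eq_sqrt_mul {n : ℕ} (hn : n ≠ 0) (q : ℕ) :
    bridgeScale n q = √n * ((q / n : ℝ) * (2 - q / n) / 2) := by
  have hn0 : (n : ℝ) ≠ 0 := Nat.cast_ne_zero.2 hn
  have hsqrt : √(n : ℝ) ≠ 0 := (Real.sqrt_pos.2 (by positivity)).ne'
  have hpow : (n : ℝ) ^ ((3 : ℝ) / 2) = n * √n := by
    rw [Real.sqrt_eq_rpow, ← Real.rpow_one_add' n.cast_nonneg (by norm_num)]
    norm_num
  rw [bridgeScale, hpow]
  field_simp
  rw [Real.sq_sqrt n.cast_nonneg]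
  ring

variable {c : ℝ} {q : ℕ → ℕ}

theorem tendsto_atTop_of_div_tendsto (hc : 0 < c)
    (hq : Tendsto (fun n => (q n : ℝ) / n) atTop (𝓝 c)) : Tendsto q atTop atTop := by
  refine tendsto_natCast_atTop_iff.1 ((hq.pos_mul_atTop hc tendsto_natCast_atTop_atTop).congr' ?_)
  filter_upwards [eventually_ne_atTop 0] with n hn
  exact div_mul_cancel₀ _ (Nat.cast_ne_zero.2 hn)

theorem eventually_add_le_two_mul (hc : c < 2)
    (hq : Tendsto (fun n => (q n : ℝ) / n) atTop (𝓝 c)) (d : ℕ) :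
    ∀ᶠ n in atTop, q n + d ≤ 2 * n := by
  have hadd : Tendsto (fun n : ℕ => (q n : ℝ) / n + d / n) atTop (𝓝 (c + 0)) :=
    hq.add (tendsto_const_div_atTop_nhds_zero_nat _)
  filter_upwards [hadd.eventually_lt_const (by simpa using hc), eventually_gt_atTop 0] with n h hn
  rw [← add_div, div_lt_iff₀ (Nat.cast_pos.2 hn)] at h
  exact_mod_cast h.le

theorem even_add_two_mul_sub {n q d : ℕ} (hd : Even d) (h : q + d ≤ 2 * n) :
    Even (q + (2 * n - q - d)) := by
  rw [show q + (2 * n - q - d) = 2 * n - d by omega]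
  exact (even_two_mul n).tsub hd

theorem tendsto_bridgeScale_div_sqrt (hq : Tendsto (fun n => (q n : ℝ) / n) atTop (𝓝 c)) :
    Tendsto (fun n => bridgeScale n (q n) / √n) atTop (𝓝 (c * (2 - c) / 2)) := by
  refine ((hq.mul (hq.const_sub 2)).div_const 2).congr' ?_
  filter_upwards [eventually_ne_atTop 0] with n hn
  have hsqrt : √(n : ℝ) ≠ 0 := (Real.sqrt_pos.2 (by positivity)).ne'
  rw [bridgeScale_eq_sqrt_mul hn, mul_div_cancel_left₀ _ hsqrt]

theorem tendsto_bridgeScale_atTop (hc0 : 0 < c) (hc2 : c < 2)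
    (hq : Tendsto (fun n => (q n : ℝ) / n) atTop (𝓝 c)) :
    Tendsto (fun n => bridgeScale n (q n)) atTop atTop := by
  have hpos : 0 < c * (2 - c) / 2 := by have := sub_pos.2 hc2; positivity
  refine ((tendsto_bridgeScale_div_sqrt hq).pos_mul_atTop hpos
    (Real.tendsto_sqrt_atTop.comp tendsto_natCast_atTop_atTop)).congr' ?_
  filter_upwards [eventually_ne_atTop 0] with n hn
  exact div_mul_cancel₀ _ (Real.sqrt_pos.2 (by positivity)).ne'

theorem bridgeMean_sub_bridgeCenter {n q d : ℕ} (h : q + d ≤ 2 * n) (hd : d + 2 ≤ 2 * n) :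
    bridgeMean q (2 * n - q - d) - bridgeCenter n q =
      (q / n : ℝ) * (2 - q / n * (d + 1)) / (2 * (2 - (d + 1) / n)) := by
  have hn : (n : ℝ) ≠ 0 := by norm_cast; omega
  have hd' : (2 * n - (d + 1) : ℝ) ≠ 0 := by
    have : (d + 2 : ℝ) ≤ 2 * n := by exact_mod_cast hd
    linarith
  rw [bridgeMean, bridgeCenter, Nat.sub_sub, Nat.cast_sub h]
  push_cast
  rw [show (q + (2 * n - (q + d)) - 1 : ℝ) = 2 * n - (d + 1) by ring,
    show (2 - (d + 1) / n : ℝ) = (2 * n - (d + 1)) / n by field_simp]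
  field_simp
  ring

theorem tendsto_bridgeMean_sub_bridgeCenter (hc : c < 2)
    (hq : Tendsto (fun n => (q n : ℝ) / n) atTop (𝓝 c)) (d : ℕ) :
    Tendsto (fun n => bridgeMean (q n) (2 * n - q n - d) - bridgeCenter n (q n)) atTop
      (𝓝 (c * (2 - c * (d + 1)) / 4)) := by
  have hd : Tendsto (fun n : ℕ => (d + 1 : ℝ) / n) atTop (𝓝 0) :=
    tendsto_const_div_atTop_nhds_zero_nat _
  have hlim := (hq.mul ((hq.mul_const (d + 1 : ℝ)).const_sub 2)).div
    ((hd.const_sub 2).const_mul 2) (by norm_num)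
  rw [show (2 * (2 - 0) : ℝ) = 4 by norm_num] at hlim
  refine hlim.congr' ?_
  filter_upwards [eventually_add_le_two_mul hc hq d, eventually_ge_atTop (d + 2)] with n hn hd
  exact (bridgeMean_sub_bridgeCenter hn (by omega)).symm

theorem tendsto_add_sub_div (hc : c < 2)
    (hq : Tendsto (fun n => (q n : ℝ) / n) atTop (𝓝 c)) (d : ℕ) (x : ℝ) :
    Tendsto (fun n => (q n + (2 * n - q n - d : ℕ) - x : ℝ) / n) atTop (𝓝 2) := by
  have hlim : Tendsto (fun n : ℕ => 2 - (d + x) / n) atTop (𝓝 (2 - 0)) :=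
    (tendsto_const_div_atTop_nhds_zero_nat _).const_sub 2
  rw [sub_zero] at hlim
  refine hlim.congr' ?_
  filter_upwards [eventually_add_le_two_mul hc hq d, eventually_ne_atTop 0] with n hn hn0
  have : (n : ℝ) ≠ 0 := Nat.cast_ne_zero.2 hn0
  rw [Nat.sub_sub, Nat.cast_sub hn]
  push_cast
  field_simp
  ring

theorem tendsto_bridgeMean_div (hc : c < 2)
    (hq : Tendsto (fun n => (q n : ℝ) / n) atTop (𝓝 c)) (d : ℕ) :
    Tendsto (fun n => bridgeMean (q n) (2 * n - q n - d) / n) atTop (𝓝 (c * (2 - c) / 2)) := by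
  have hcenter : Tendsto (fun n => bridgeCenter n (q n) / n) atTop (𝓝 (c * (2 - c) / 2)) := by
    refine ((hq.mul (hq.const_sub 2)).div_const 2).congr' ?_
    filter_upwards [eventually_ne_atTop 0] with n hn
    have : (n : ℝ) ≠ 0 := Nat.cast_ne_zero.2 hn
    rw [bridgeCenter]
    field_simp
  have hdiff := (tendsto_bridgeMean_sub_bridgeCenter hc hq d).div_atTop
    tendsto_natCast_atTop_atTop
  simpa [← add_div] using hdiff.add hcenter

theorem tendsto_size_div (hc : c < 2)
    (hq : Tendsto (fun n => (q n : ℝ) / n) atTop (𝓝 c)) (d : ℕ) :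
    Tendsto (fun n => (q n + (2 * n - q n - d : ℕ) : ℝ) / n) atTop (𝓝 2) := by
  simpa using tendsto_add_sub_div hc hq d 0

theorem tendsto_inv_bridgeScale_mul_sqrt (hc0 : 0 < c) (hc2 : c < 2)
    (hq : Tendsto (fun n => (q n : ℝ) / n) atTop (𝓝 c)) (d : ℕ) :
    Tendsto (fun n => (bridgeScale n (q n))⁻¹ * √(q n + (2 * n - q n - d : ℕ))) atTop
      (𝓝 (√2 / (c * (2 - c) / 2))) := by
  have hs : c * (2 - c) / 2 ≠ 0 := by have := sub_pos.2 hc2; positivity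
  refine (((Real.continuous_sqrt.tendsto 2).comp (tendsto_size_div hc2 hq d)).div
    (tendsto_bridgeScale_div_sqrt hq) hs).congr' ?_
  filter_upwards [eventually_ne_atTop 0] with n hn
  have hsqrt : √(n : ℝ) ≠ 0 := (Real.sqrt_pos.2 (by positivity)).ne'
  rw [Pi.div_apply, Function.comp_apply, Real.sqrt_div (by positivity),
    div_div_div_cancel_right₀ hsqrt, div_eq_inv_mul]

theorem tendsto_inv_bridgeScale_sq_mul (hc0 : 0 < c) (hc2 : c < 2)
    (hq : Tendsto (fun n => (q n : ℝ) / n) atTop (𝓝 c)) (d : ℕ) :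
    Tendsto (fun n => (bridgeScale n (q n))⁻¹ ^ 2 * (bridgeMean (q n) (2 * n - q n - d) ^ 2 /
      (q n + (2 * n - q n - d : ℕ) - 1))) atTop (𝓝 (1 / 2)) := by
  have hs : c * (2 - c) / 2 ≠ 0 := by have := sub_pos.2 hc2; positivity
  have hlim := (((tendsto_bridgeMean_div hc2 hq d).pow 2).div
    ((tendsto_bridgeScale_div_sqrt hq).pow 2) (pow_ne_zero 2 hs)).div
      (tendsto_add_sub_div hc2 hq d 1) two_ne_zero
  rw [div_self (pow_ne_zero 2 hs)] at hlim
  refine hlim.congr' ?_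
  filter_upwards [eventually_ne_atTop 0] with n hn
  have hn0 : (n : ℝ) ≠ 0 := Nat.cast_ne_zero.2 hn
  rw [Pi.div_apply, Pi.div_apply, div_pow _ √(n : ℝ), Real.sq_sqrt n.cast_nonneg]
  field_simp

theorem tendsto_sum_bridgeProb_scaled (hc0 : 0 < c) (hc2 : c < 2)
    (hq : Tendsto (fun n => (q n : ℝ) / n) atTop (𝓝 c)) {d : ℕ} (hd : Even d) (t : ℝ) :
    Tendsto (fun n => ∑ b ∈ Finset.range (q n + 1),
        if b ≤ bridgeCenter n (q n) + t * bridgeScale n (q n)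
          then bridgeProb (q n) (2 * n - q n - d) b else 0) atTop
      (𝓝 ((√(2 * Real.pi))⁻¹ * ∫ x in Set.Iic t, Real.exp (-x ^ 2 / 2))) := by
  have hscale := tendsto_bridgeScale_atTop hc0 hc2 hq
  have heven : ∀ᶠ n in atTop, Even (q n + (2 * n - q n - d)) :=
    (eventually_add_le_two_mul hc2 hq d).mono fun n => even_add_two_mul_sub hd
  have hsize : Tendsto (fun n => (q n + (2 * n - q n - d : ℕ) : ℝ)) atTop atTop := by
    refine ((tendsto_size_div hc2 hq d).pos_mul_atTop two_pos
      tendsto_natCast_atTop_atTop).congr' ?_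
    filter_upwards [eventually_ne_atTop 0] with n hn
    exact div_mul_cancel₀ _ (Nat.cast_ne_zero.2 hn)
  have hcenter : Tendsto (fun n => (bridgeScale n (q n))⁻¹ *
      (bridgeMean (q n) (2 * n - q n - d) - bridgeCenter n (q n))) atTop (𝓝 0) := by
    simpa [div_eq_inv_mul] using
      (tendsto_bridgeMean_sub_bridgeCenter hc2 hq d).div_atTop hscale
  refine (tendsto_sum_bridgeProb heven hsize (tendsto_inv_bridgeScale_mul_sqrt hc0 hc2 hq d)
    (tendsto_inv_bridgeScale_sq_mul hc0 hc2 hq d) hcenter t).congr' ?_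
  filter_upwards [hscale.eventually_gt_atTop 0] with n hn
  refine Finset.sum_congr rfl fun b _ => if_congr ?_ rfl rfl
  rw [inv_mul_le_iff₀ hn, sub_le_iff_le_add', mul_comm t]

end ScalingRegime

section Concentration

variable {c : ℝ} {q : ℕ → ℕ}

theorem exists_abs_avoidFactor_sub_lt {y : ℝ} (hy : y < 1) {ε : ℝ} (hε : 0 < ε) :
    ∃ δ > 0, ∀ᶠ q : ℕ in atTop, ∀ b : ℕ, |(b : ℝ) / q - y| < δ →
      |avoidFactor q b - Real.exp (-(1 - y))| < ε := by
  let l : Filter (ℕ × ℕ) := comap (fun p => (p.1, (p.2 : ℝ) / p.1)) (atTop ×ˢ 𝓝 y)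
  have hlim : Tendsto (fun p : ℕ × ℕ => avoidFactor p.1 p.2) l (𝓝 (Real.exp (-(1 - y)))) := by
    have hcoord : Tendsto (fun p : ℕ × ℕ => (p.1, (p.2 : ℝ) / p.1)) l (atTop ×ˢ 𝓝 y) :=
      tendsto_comap
    exact tendsto_avoidFactor hcoord.fst hcoord.snd hy
  obtain ⟨p, hp, s, hs, hps⟩ := eventually_prod_iff.1
    (eventually_comap.1 ((Metric.tendsto_nhds.1 hlim) ε hε))
  obtain ⟨δ, hδ, hball⟩ := Metric.eventually_nhds_iff.1 hs
  exact ⟨δ, hδ, hp.mono fun q hq b hb => hps hq (hball hb) (q, b) rfl⟩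

theorem bridgeExpect_sq_div_sub_le {q m : ℕ} (heven : Even (q + m)) (h : 2 ≤ q + m) (y : ℝ) :
    bridgeExpect q m (fun b => ((b : ℝ) / q - y) ^ 2) ≤
      (q + m) / (q : ℝ) ^ 2 + 2 * (bridgeMean q m / q - y) ^ 2 := by
  set μ := bridgeMean q m
  calc _ ≤ bridgeExpect q m (((2 / (q : ℝ) ^ 2) • fun b : ℕ => ((b : ℝ) - μ) ^ 2) +
          fun _ : ℕ => 2 * (μ / q - y) ^ 2) := by
        refine bridgeExpect_mono fun b _ _ => ?_
        simp only [Pi.add_apply, Pi.smul_apply, smul_eq_mul]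
        rw [show (b : ℝ) / q - y = (b - μ) / q + (μ / q - y) by ring, div_mul_eq_mul_div,
          mul_div_assoc, ← div_pow, ← mul_add]
        exact add_sq_le
    _ ≤ 2 / (q : ℝ) ^ 2 * ((q + m) / 2) + 2 * (μ / q - y) ^ 2 := by
        rw [map_add, map_smul, bridgeExpect_const heven, smul_eq_mul]
        gcongr
        exact bridgeExpect_sq_sub_bridgeMean_le heven h
    _ = _ := by ring

theorem tendsto_bridgeExpect_sq_sub (hc0 : 0 < c) (hc2 : c < 2)
    (hq : Tendsto (fun n => (q n : ℝ) / n) atTop (𝓝 c)) {d : ℕ} (hd : Even d) :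
    Tendsto (fun n => bridgeExpect (q n) (2 * n - q n - d)
      fun b => ((b : ℝ) / q n - (1 - c / 2)) ^ 2) atTop (𝓝 0) := by
  have hmean : Tendsto (fun n => bridgeMean (q n) (2 * n - q n - d) / q n) atTop
      (𝓝 (1 - c / 2)) := by
    have hlim := (tendsto_bridgeMean_div hc2 hq d).div hq hc0.ne'
    rw [show c * (2 - c) / 2 / c = 1 - c / 2 by field_simp] at hlim
    refine hlim.congr' ?_
    filter_upwards [eventually_ne_atTop 0] with n hn
    exact div_div_div_cancel_right₀ (Nat.cast_ne_zero.2 hn) _ _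
  have hvar : Tendsto (fun n => (q n + (2 * n - q n - d : ℕ) : ℝ) / (q n : ℝ) ^ 2) atTop
      (𝓝 0) := by
    refine (((tendsto_size_div hc2 hq d).div hq hc0.ne').div_atTop
      (tendsto_natCast_atTop_atTop.comp (tendsto_atTop_of_div_tendsto hc0 hq))).congr' ?_
    filter_upwards [eventually_ne_atTop 0] with n hn
    rw [Pi.div_apply, div_div_div_cancel_right₀ (Nat.cast_ne_zero.2 hn), div_div,
      Function.comp_apply, ← sq]
  have hbound := hvar.add (((hmean.sub_const (1 - c / 2)).pow 2).const_mul 2)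
  rw [sub_self, zero_pow two_ne_zero, mul_zero, add_zero] at hbound
  refine squeeze_zero' (.of_forall fun n => ?_) ?_ hbound
  · rw [bridgeExpect_apply]
    exact Finset.sum_nonneg fun b _ => mul_nonneg (bridgeProb_nonneg _ _ _) (sq_nonneg _)
  filter_upwards [eventually_add_le_two_mul hc2 hq d,
    (tendsto_atTop_of_div_tendsto hc0 hq).eventually_gt_atTop 0] with n hn hq0
  have heven := even_add_two_mul_sub hd hn
  exact bridgeExpect_sq_div_sub_le heven (by obtain ⟨k, hk⟩ := heven; omega) _

theorem tendsto_bridgeExpect_abs_avoidFactor_sub (hc0 : 0 < c) (hc2 : c < 2)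
    (hq : Tendsto (fun n => (q n : ℝ) / n) atTop (𝓝 c)) {d : ℕ} (hd : Even d) :
    Tendsto (fun n => bridgeExpect (q n) (2 * n - q n - d)
      fun b => |avoidFactor (q n) b - Real.exp (-(c / 2))|) atTop (𝓝 0) := by
  set M := Real.exp 1 + Real.exp (-(c / 2))
  have hM (q b : ℕ) : |avoidFactor q b - Real.exp (-(c / 2))| ≤ M :=
    (abs_sub _ _).trans (add_le_add (abs_avoidFactor_le q b) (Real.abs_exp _).le)
  refine tendsto_order.2 ⟨fun ε hε => .of_forall fun n => hε.trans_le ?_, fun ε hε => ?_⟩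
  · rw [bridgeExpect_apply]
    exact Finset.sum_nonneg fun b _ => mul_nonneg (bridgeProb_nonneg _ _ _) (abs_nonneg _)
  obtain ⟨δ, hδ, hclose⟩ := exists_abs_avoidFactor_sub_lt (show 1 - c / 2 < 1 by linarith)
    (half_pos hε)
  rw [sub_sub_cancel] at hclose
  have htail := (tendsto_bridgeExpect_sq_sub hc0 hc2 hq hd).const_mul (M / δ ^ 2)
  rw [mul_zero] at htail
  filter_upwards [htail.eventually_lt_const (half_pos hε),
    (tendsto_atTop_of_div_tendsto hc0 hq).eventually hclose,
    eventually_add_le_two_mul hc2 hq d] with n htail hclose hn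
  have heven := even_add_two_mul_sub hd hn
  calc _ ≤ bridgeExpect (q n) (2 * n - q n - d) ((fun _ : ℕ => ε / 2) +
          (M / δ ^ 2) • fun b : ℕ => ((b : ℝ) / q n - (1 - c / 2)) ^ 2) := by
        refine bridgeExpect_mono fun b _ _ => ?_
        simp only [Pi.add_apply, Pi.smul_apply, smul_eq_mul]
        rcases lt_or_ge |(b : ℝ) / q n - (1 - c / 2)| δ with hb | hb
        · exact (hclose b hb).le.trans (le_add_of_nonneg_right (by positivity))
        · refine (hM (q n) b).trans (le_add_of_nonneg_of_le (half_pos hε).le ?_)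
          rw [div_mul_eq_mul_div, le_div_iff₀ (by positivity), ← sq_abs (_ - _)]
          gcongr
    _ = ε / 2 + M / δ ^ 2 * _ := by
        rw [map_add, map_smul, bridgeExpect_const heven, smul_eq_mul]
    _ < ε := by linarith

end Concentration

section AvoidingBlocks

/-- The weighted count, over the bridge numbers selected by `P`, of the perfect matchings of a
`q`-set and a disjoint `m`-set in which no chord joins two consecutive elements of the `q`-set. -/
noncomputable def avoidingCount (q m : ℕ) (P : ℕ → Prop) [DecidablePred P] : ℝ :=
  ∑ b ∈ Finset.range (q + 1), if P b then bridgeWeight q m b * avoidFactor q b else 0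

variable {c : ℝ} {q : ℕ → ℕ}

theorem tendsto_avoidingCount_div_sum_bridgeWeight (hc0 : 0 < c) (hc2 : c < 2)
    (hq : Tendsto (fun n => (q n : ℝ) / n) atTop (𝓝 c)) {d : ℕ} (hd : Even d)
    {P : ℕ → ℕ → Prop} [∀ n, DecidablePred (P n)] {z : ℝ}
    (hP : Tendsto (fun n => ∑ b ∈ Finset.range (q n + 1),
      if P n b then bridgeProb (q n) (2 * n - q n - d) b else 0) atTop (𝓝 z)) :
    Tendsto (fun n => avoidingCount (q n) (2 * n - q n - d) (P n) /
      ∑ b ∈ Finset.range (q n + 1), bridgeWeight (q n) (2 * n - q n - d) b) atTop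
      (𝓝 (Real.exp (-(c / 2)) * z)) := by
  have hconc := tendsto_bridgeExpect_abs_avoidFactor_sub hc0 hc2 hq hd
  simp_rw [bridgeExpect_apply, smul_eq_mul] at hconc
  refine (tendsto_sum_ite_mul (fun n b _ => bridgeProb_nonneg _ _ _) hconc P hP).congr fun n => ?_
  rw [avoidingCount, Finset.sum_div]
  refine Finset.sum_congr rfl fun b _ => ?_
  split_ifs
  · rw [bridgeProb, div_mul_eq_mul_div]
  · rw [zero_div]

theorem tendsto_avoidingCount_true (hc0 : 0 < c) (hc2 : c < 2)
    (hq : Tendsto (fun n => (q n : ℝ) / n) atTop (𝓝 c)) {d : ℕ} (hd : Even d) :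
    Tendsto (fun n => avoidingCount (q n) (2 * n - q n - d) (fun _ => True) /
      ∑ b ∈ Finset.range (q n + 1), bridgeWeight (q n) (2 * n - q n - d) b) atTop
      (𝓝 (Real.exp (-(c / 2)))) := by
  rw [← mul_one (Real.exp _)]
  refine tendsto_avoidingCount_div_sum_bridgeWeight hc0 hc2 hq hd
    (tendsto_const_nhds.congr' ?_)
  filter_upwards [eventually_add_le_two_mul hc2 hq d] with n hn
  simp only [if_true]
  exact (sum_bridgeProb (even_add_two_mul_sub hd hn)).symm

theorem eventually_avoidingCount_pos (hc0 : 0 < c) (hc2 : c < 2)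
    (hq : Tendsto (fun n => (q n : ℝ) / n) atTop (𝓝 c)) {d : ℕ} (hd : Even d) :
    ∀ᶠ n in atTop, 0 < avoidingCount (q n) (2 * n - q n - d) fun _ => True := by
  filter_upwards [(tendsto_avoidingCount_true hc0 hc2 hq hd).eventually_const_lt
    (Real.exp_pos _)] with n hn
  by_contra! h
  exact hn.not_ge (div_nonpos_of_nonpos_of_nonneg h
    (Finset.sum_nonneg fun b _ => bridgeWeight_nonneg _ _ b))

theorem tendsto_avoidingCount_ratio (hc0 : 0 < c) (hc2 : c < 2)
    (hq : Tendsto (fun n => (q n : ℝ) / n) atTop (𝓝 c)) {d : ℕ} (hd : Even d) (t : ℝ) :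
    Tendsto (fun n => avoidingCount (q n) (2 * n - q n - d)
        (fun b => (b : ℝ) ≤ bridgeCenter n (q n) + t * bridgeScale n (q n)) /
      avoidingCount (q n) (2 * n - q n - d) fun _ => True) atTop
      (𝓝 ((√(2 * Real.pi))⁻¹ * ∫ x in Set.Iic t, Real.exp (-x ^ 2 / 2))) := by
  have hlim := (tendsto_avoidingCount_div_sum_bridgeWeight hc0 hc2 hq hd
    (tendsto_sum_bridgeProb_scaled hc0 hc2 hq hd t)).div
      (tendsto_avoidingCount_true hc0 hc2 hq hd) (Real.exp_pos _).ne'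
  rw [mul_div_cancel_left₀ _ (Real.exp_pos _).ne'] at hlim
  refine hlim.congr' ?_
  filter_upwards [(tendsto_avoidingCount_true hc0 hc2 hq hd).eventually_const_lt
    (Real.exp_pos _)] with n hn
  exact div_div_div_cancel_right₀ (fun h => by simp [h] at hn) _ _

end AvoidingBlocks

section Swap
open Equiv
open scoped Finset

variable {α : Type*} [DecidableEq α] {I : Finset α} {u v : α} {g : Perm α}

/-- The number of chords of the matching `f` with exactly one endpoint in `I`. -/
def bridgeCount (I : Finset α) (f : Perm α) : ℕ := #{i ∈ I | f i ∉ I}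

theorem mul_swap_apply_left (hv : g v = v) : (g * swap u v) u = v := by simp [hv]

theorem mul_swap_apply_of_ne {x : α} (hu : x ≠ u) (hv : x ≠ v) : (g * swap u v) x = g x := by
  simp [swap_apply_of_ne_of_ne hu hv]

theorem bridgeCount_mul_swap_of_iff (h : u ∈ I ↔ v ∈ I) (hu : g u = u) (hv : g v = v) :
    bridgeCount I (g * swap u v) = bridgeCount I g := by
  unfold bridgeCount
  congr 1
  refine Finset.filter_congr fun x _ => ?_
  rw [Perm.mul_apply, swap_apply_def]
  split_ifs <;> simp_all

theorem bridgeCount_mul_swap_of_mem_of_notMem (huI : u ∈ I) (hvI : v ∉ I) (hu : g u = u)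
    (hv : g v = v) : bridgeCount I (g * swap u v) = bridgeCount I g + 1 := by
  unfold bridgeCount
  rw [← Finset.card_insert_of_notMem (a := u) (by simp [hu, huI])]
  congr 1
  ext x
  rw [Finset.mem_filter, Finset.mem_insert, Finset.mem_filter, Perm.mul_apply, swap_apply_def]
  split_ifs <;> simp_all

end Swap

section Matchings
open Equiv
open scoped Finset

variable {α : Type*} [Fintype α] [DecidableEq α] {S : Finset α} {u v : α} {f g : Perm α}

/-- The perfect matchings of the vertex set `S`, encoded as the involutions with support `S`. -/
def matchings (S : Finset α) : Finset (Perm α) := {f | f * f = 1 ∧ f.support = S}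

theorem mem_matchings : f ∈ matchings S ↔ f * f = 1 ∧ f.support = S := by simp [matchings]

theorem apply_eq_self_of_mem_matchings (hf : f ∈ matchings S) (hu : u ∉ S) : f u = u := by
  rwa [← Perm.notMem_support, (mem_matchings.1 hf).2]

theorem apply_apply_of_mem_matchings (hf : f ∈ matchings S) (x : α) : f (f x) = x := by
  rw [← Perm.mul_apply, (mem_matchings.1 hf).1, Perm.one_apply]

theorem matchings_empty : matchings (∅ : Finset α) = {1} := by
  ext f
  rw [mem_matchings, Perm.support_eq_empty_iff, Finset.mem_singleton]
  exact ⟨And.right, fun h => ⟨by rw [h, mul_one], h⟩⟩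

theorem mul_swap_mem_matchings_iff (huS : u ∈ S) (hvS : v ∈ S) (huv : u ≠ v) (hu : g u = u)
    (hv : g v = v) : g * swap u v ∈ matchings S ↔ g ∈ matchings ((S.erase u).erase v) := by
  have hdisj : g.Disjoint (swap u v) := fun x => by
    rcases eq_or_ne x u with rfl | hxu
    · exact .inl hu
    rcases eq_or_ne x v with rfl | hxv
    · exact .inl hv
    exact .inr (swap_apply_of_ne_of_ne hxu hxv)
  have hsq : g * swap u v * (g * swap u v) = g * g := by
    rw [hdisj.commute.symm.mul_mul_mul_comm, swap_mul_self, mul_one]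
  have hsupp : (g * swap u v).support = g.support ∪ {u, v} := by
    rw [hdisj.support_mul, Perm.support_swap huv]
  have hu' : u ∉ g.support := Perm.notMem_support.2 hu
  have hv' : v ∉ g.support := Perm.notMem_support.2 hv
  rw [mem_matchings, mem_matchings, hsq, hsupp]
  refine and_congr_right fun _ => ⟨?_, fun h => ?_⟩
  · rintro rfl
    ext x
    simp only [Finset.mem_erase, Finset.mem_union, Finset.mem_insert, Finset.mem_singleton]
    grind
  · rw [h]
    ext x
    simp only [Finset.mem_erase, Finset.mem_union, Finset.mem_insert, Finset.mem_singleton]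
    grind

theorem card_matchings_filter_apply_eq (huS : u ∈ S) (hvS : v ∈ S) (huv : u ≠ v)
    (P : Perm α → Prop) [DecidablePred P] :
    #{f ∈ matchings S | f u = v ∧ P f} =
      #{g ∈ matchings ((S.erase u).erase v) | P (g * swap u v)} := by
  refine Finset.card_bij' (fun f _ => f * swap u v) (fun g _ => g * swap u v) ?_ ?_
    (fun f _ => by rw [mul_assoc, swap_mul_self, mul_one])
    (fun g _ => by rw [mul_assoc, swap_mul_self, mul_one])
  · intro f hf
    obtain ⟨hf, huv', hP⟩ := Finset.mem_filter.1 hf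
    have hvu : f v = u := by rw [← huv', apply_apply_of_mem_matchings hf]
    rw [Finset.mem_filter, mul_assoc, swap_mul_self, mul_one,
      ← mul_swap_mem_matchings_iff huS hvS huv (by simp [hvu])
        (by simp [huv']), mul_assoc,
      swap_mul_self, mul_one]
    exact ⟨hf, hP⟩
  · intro g hg
    obtain ⟨hg, hP⟩ := Finset.mem_filter.1 hg
    have hu : g u = u := apply_eq_self_of_mem_matchings hg (by simp)
    have hv : g v = v := apply_eq_self_of_mem_matchings hg (by simp)
    rw [Finset.mem_filter, mul_swap_mem_matchings_iff huS hvS huv hu hv]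
    exact ⟨hg, mul_swap_apply_left hv, hP⟩

theorem card_matchings_filter (huS : u ∈ S) (P : Perm α → Prop) [DecidablePred P] :
    #{f ∈ matchings S | P f} =
      ∑ v ∈ S.erase u, #{g ∈ matchings ((S.erase u).erase v) | P (g * swap u v)} := by
  rw [Finset.card_eq_sum_card_fiberwise (f := fun f => f u) (t := S.erase u)]
  · refine Finset.sum_congr rfl fun v hv => ?_
    obtain ⟨hvu, hvS⟩ := Finset.mem_erase.1 hv
    rw [← card_matchings_filter_apply_eq huS hvS hvu.symm, Finset.filter_filter]
    simp only [and_comm]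
  · intro f hf
    have hsupp := (mem_matchings.1 (Finset.mem_filter.1 hf).1).2
    have hfu : u ∈ f.support := hsupp ▸ huS
    rw [Finset.mem_coe, Finset.mem_erase, ← hsupp, Perm.apply_mem_support]
    exact ⟨Perm.mem_support.1 hfu, hfu⟩

end Matchings

section EraseErase
open scoped Finset

variable {α : Type*} [DecidableEq α] {S I : Finset α} {u v : α}

theorem erase_erase_sdiff_of_mem (hu : u ∈ I) (hv : v ∈ I) : (S.erase u).erase v \ I = S \ I := by
  grind

theorem erase_erase_inter_of_notMem (hu : u ∉ I) (hv : v ∉ I) :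
    (S.erase u).erase v ∩ I = S ∩ I := by
  grind

theorem card_erase_erase (hu : u ∈ S) (hv : v ∈ S.erase u) : #((S.erase u).erase v) = #S - 2 := by
  rw [Finset.card_erase_of_mem hv, Finset.card_erase_of_mem hu, Nat.sub_sub]

theorem card_erase_erase_inter (hu : u ∈ S ∩ I) (hv : v ∈ (S ∩ I).erase u) :
    #((S.erase u).erase v ∩ I) = #(S ∩ I) - 2 := by
  rw [Finset.erase_inter, Finset.erase_inter, card_erase_erase hu hv]

theorem card_erase_erase_sdiff (hu : u ∈ S \ I) (hv : v ∈ (S \ I).erase u) :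
    #((S.erase u).erase v \ I) = #(S \ I) - 2 := by
  rw [Finset.erase_sdiff_comm, Finset.erase_sdiff_comm, card_erase_erase hu hv]

theorem card_erase_erase_inter_of_mem_sdiff (hu : u ∈ S ∩ I) (hv : v ∈ S \ I) :
    #((S.erase u).erase v ∩ I) = #(S ∩ I) - 1 := by
  rw [← Finset.card_erase_of_mem hu]
  exact congrArg Finset.card (by grind)

theorem card_erase_erase_sdiff_of_mem_sdiff (hu : u ∈ S ∩ I) (hv : v ∈ S \ I) :
    #((S.erase u).erase v \ I) = #(S \ I) - 1 := by
  rw [← Finset.card_erase_of_mem hv]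
  exact congrArg Finset.card (by grind)

end EraseErase

section MatchingCount
open Equiv
open scoped Finset

variable {α : Type*} [Fintype α] [DecidableEq α] {S I : Finset α} {u v : α}

/-- The number of perfect matchings of `S` with exactly `b` bridges between `S ∩ I` and `S \ I`. -/
def bridgeMatchingCount (I S : Finset α) (b : ℕ) : ℕ := #{f ∈ matchings S | bridgeCount I f = b}

theorem card_bridgeCount_mul_swap_of_iff (h : u ∈ I ↔ v ∈ I) (huS : u ∉ S) (hvS : v ∉ S) (b : ℕ) :
    #{g ∈ matchings S | bridgeCount I (g * swap u v) = b} = bridgeMatchingCount I S b := by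
  refine congrArg Finset.card (Finset.filter_congr fun g hg => ?_)
  rw [bridgeCount_mul_swap_of_iff h (apply_eq_self_of_mem_matchings hg huS)
    (apply_eq_self_of_mem_matchings hg hvS)]

theorem card_bridgeCount_mul_swap_of_mem_of_notMem (huI : u ∈ I) (hvI : v ∉ I) (huS : u ∉ S)
    (hvS : v ∉ S) (b : ℕ) :
    #{g ∈ matchings S | bridgeCount I (g * swap u v) = b} =
      if b = 0 then 0 else bridgeMatchingCount I S (b - 1) := by
  have hcount (g : Perm α) (hg : g ∈ matchings S) :
      bridgeCount I (g * swap u v) = bridgeCount I g + 1 :=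
    bridgeCount_mul_swap_of_mem_of_notMem huI hvI (apply_eq_self_of_mem_matchings hg huS)
      (apply_eq_self_of_mem_matchings hg hvS)
  rw [Finset.filter_congr fun g hg => by rw [hcount g hg]]
  cases b <;> simp [bridgeMatchingCount]

theorem bridgeMatchingCount_empty (I : Finset α) (b : ℕ) :
    bridgeMatchingCount I ∅ b = if b = 0 then 1 else 0 := by
  have hone : bridgeCount I (1 : Perm α) = 0 :=
    Finset.card_eq_zero.2 (Finset.filter_eq_empty_iff.2 fun _ hi h => h hi)
  rw [bridgeMatchingCount, matchings_empty, Finset.filter_singleton, hone]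
  simp only [eq_comm (a := 0), apply_ite Finset.card, Finset.card_singleton, Finset.card_empty]

theorem bridgeMatchingCount_of_disjoint (hdisj : Disjoint S I) (hu : u ∈ S) (b : ℕ) :
    bridgeMatchingCount I S b =
      ∑ v ∈ S.erase u, bridgeMatchingCount I ((S.erase u).erase v) b := by
  rw [bridgeMatchingCount, card_matchings_filter hu]
  refine Finset.sum_congr rfl fun v hv => card_bridgeCount_mul_swap_of_iff ?_ (by simp) (by simp) b
  exact iff_of_false (Finset.disjoint_left.1 hdisj hu)
    (Finset.disjoint_left.1 hdisj (Finset.mem_of_mem_erase hv))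

theorem bridgeMatchingCount_of_mem (huS : u ∈ S) (huI : u ∈ I) (b : ℕ) :
    bridgeMatchingCount I S b =
      ∑ v ∈ (S ∩ I).erase u, bridgeMatchingCount I ((S.erase u).erase v) b +
      ∑ v ∈ S \ I,
        if b = 0 then 0 else bridgeMatchingCount I ((S.erase u).erase v) (b - 1) := by
  rw [bridgeMatchingCount, card_matchings_filter huS, ← Finset.sum_inter_add_sum_sdiff _ I,
    Finset.erase_inter, Finset.erase_sdiff_comm,
    Finset.erase_eq_of_notMem fun h => (Finset.mem_sdiff.1 h).2 huI]
  refine congrArg₂ _ (Finset.sum_congr rfl fun v hv => ?_) (Finset.sum_congr rfl fun v hv => ?_)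
  · have hvI : v ∈ I := (Finset.mem_inter.1 (Finset.mem_of_mem_erase hv)).2
    exact card_bridgeCount_mul_swap_of_iff (iff_of_true huI hvI) (by simp) (by simp) b
  · exact card_bridgeCount_mul_swap_of_mem_of_notMem huI (Finset.mem_sdiff.1 hv).2 (by simp)
      (by simp) b

theorem bridgeMatchingCount_eq_bridgeWeight_of_disjoint (hdisj : Disjoint S I) (b : ℕ) :
    (bridgeMatchingCount I S b : ℝ) = bridgeWeight 0 #S b := by
  induction hs : #S using Nat.strong_induction_on generalizing S with
  | _ s ih =>
  subst hs
  rcases S.eq_empty_or_nonempty with rfl | ⟨u, hu⟩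
  · simp [bridgeMatchingCount_empty, bridgeWeight_zero_zero]
  obtain ⟨m, hm⟩ := Nat.exists_eq_succ_of_ne_zero (Finset.card_ne_zero_of_mem hu)
  have hterm (v : α) (hv : v ∈ S.erase u) :
      (bridgeMatchingCount I ((S.erase u).erase v) b : ℝ) = bridgeWeight 0 (m - 1) b := by
    have hcard : #((S.erase u).erase v) = m - 1 := by
      rw [card_erase_erase hu hv, hm]
      rfl
    have hsub : (S.erase u).erase v ⊆ S := (Finset.erase_subset _ _).trans (Finset.erase_subset _ _)
    rw [ih _ (by lia) (hdisj.mono_left hsub) rfl, hcard]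
  rw [bridgeMatchingCount_of_disjoint hdisj hu, Nat.cast_sum, Finset.sum_congr rfl hterm,
    Finset.sum_const, Finset.card_erase_of_mem hu, hm, bridgeWeight_zero_succ, nsmul_eq_mul]
  rfl

theorem bridgeMatchingCount_eq_bridgeWeight (I S : Finset α) (b : ℕ) :
    (bridgeMatchingCount I S b : ℝ) = bridgeWeight #(S ∩ I) #(S \ I) b := by
  induction hs : #S using Nat.strong_induction_on generalizing S b with
  | _ s ih =>
  subst hs
  rcases (S ∩ I).eq_empty_or_nonempty with hSI | ⟨u, hu⟩
  · have hdisj : Disjoint S I := Finset.disjoint_iff_inter_eq_empty.2 hSI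
    rw [bridgeMatchingCount_eq_bridgeWeight_of_disjoint hdisj, hSI,
      Finset.sdiff_eq_self_of_disjoint hdisj, Finset.card_empty]
  · obtain ⟨huS, huI⟩ := Finset.mem_inter.1 hu
    have hlt (v : α) : #((S.erase u).erase v) < #S :=
      Finset.card_erase_le.trans_lt (Finset.card_erase_lt_of_mem huS)
    have hsame (v : α) (hv : v ∈ (S ∩ I).erase u) :
        (bridgeMatchingCount I ((S.erase u).erase v) b : ℝ) =
          bridgeWeight (#(S ∩ I) - 2) #(S \ I) b := by
      rw [ih _ (hlt v) _ _ rfl, card_erase_erase_inter hu hv,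
        erase_erase_sdiff_of_mem huI (Finset.mem_inter.1 (Finset.mem_of_mem_erase hv)).2]
    have hdiff (v : α) (hv : v ∈ S \ I) (b : ℕ) :
        (bridgeMatchingCount I ((S.erase u).erase v) b : ℝ) =
          bridgeWeight (#(S ∩ I) - 1) (#(S \ I) - 1) b := by
      rw [ih _ (hlt v) _ _ rfl, card_erase_erase_inter_of_mem_sdiff hu hv,
        card_erase_erase_sdiff_of_mem_sdiff hu hv]
    obtain ⟨k, hk⟩ := Nat.exists_eq_succ_of_ne_zero (Finset.card_ne_zero_of_mem hu)
    rw [bridgeMatchingCount_of_mem huS huI, Nat.cast_add, Nat.cast_sum, Nat.cast_sum,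
      Finset.sum_congr rfl hsame, Finset.sum_const, Finset.card_erase_of_mem hu, nsmul_eq_mul]
    rcases b with _ | b
    · simp [hk, bridgeWeight_succ_zero]
    · simp only [Nat.succ_ne_zero, if_false, Nat.add_sub_cancel]
      rw [Finset.sum_congr rfl fun v hv => hdiff v hv b, Finset.sum_const, nsmul_eq_mul, hk,
        bridgeWeight_succ_succ]
      rfl

end MatchingCount

section AvoidsConsecutive
open Equiv
open scoped Finset

variable {α : Type*} {v : ℕ → α} {p : ℕ}

/-- No chord of the matching `f` joins two consecutive vertices of the path
`v 0, v 1, …, v (p - 1)`. -/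
def AvoidsConsecutive (v : ℕ → α) (p : ℕ) (f : Perm α) : Prop :=
  ∀ i < p - 1, f (v i) ≠ v (i + 1)

instance [DecidableEq α] : DecidablePred (AvoidsConsecutive v p) := fun f =>
  inferInstanceAs (Decidable (∀ i < p - 1, f (v i) ≠ v (i + 1)))

variable {f g : Perm α} {S I : Finset α} {u w : α} {b : ℕ}

theorem avoidsConsecutive_of_le_one (hp : p ≤ 1) : AvoidsConsecutive v p f :=
  fun _ hi => absurd hi (by lia)

theorem avoidsConsecutive_add_two :
    AvoidsConsecutive v (p + 2) f ↔ f (v p) ≠ v (p + 1) ∧ AvoidsConsecutive v (p + 1) f := by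
  refine ⟨fun h => ⟨h p (by lia), fun i hi => h i (by lia)⟩, fun ⟨hp, h⟩ i hi => ?_⟩
  rcases eq_or_ne i p with rfl | hip
  · exact hp
  · exact h i (by lia)

theorem avoidsConsecutive_succ_of_apply_eq_self (hne : ∀ i < p, v i ≠ v p) (hf : f (v p) = v p) :
    AvoidsConsecutive v (p + 1) f ↔ AvoidsConsecutive v p f := by
  refine ⟨fun h i hi => h i (by lia), fun h i hi hfi => ?_⟩
  rcases eq_or_ne (i + 1) p with rfl | hip
  · exact hne i (by lia) (f.injective (hfi.trans hf.symm))
  · exact h i (by lia) hfi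

variable [DecidableEq α]

theorem avoidsConsecutive_mul_swap (hne : ∀ i < p - 1, v i ≠ u ∧ v i ≠ w) :
    AvoidsConsecutive v p (g * swap u w) ↔ AvoidsConsecutive v p g :=
  forall₂_congr fun i hi => by rw [mul_swap_apply_of_ne (hne i hi).1 (hne i hi).2]

variable [Fintype α]

/-- The number of perfect matchings of `S` with `b` bridges and no chord joining consecutive
vertices of the path `v 0, …, v (p - 1)`. -/
def avoidingMatchingCount (I S : Finset α) (v : ℕ → α) (p b : ℕ) : ℕ :=
  #{f ∈ matchings S | bridgeCount I f = b ∧ AvoidsConsecutive v p f}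

theorem avoidingMatchingCount_of_le_one (hp : p ≤ 1) :
    avoidingMatchingCount I S v p b = bridgeMatchingCount I S b :=
  congrArg Finset.card <| Finset.filter_congr fun _ _ =>
    and_iff_left (avoidsConsecutive_of_le_one hp)

theorem avoidingMatchingCount_add_two (hinj : Set.InjOn v (Set.Iio (p + 2)))
    (hv : ∀ i < p + 2, v i ∈ S ∩ I) :
    avoidingMatchingCount I S v (p + 2) b +
      avoidingMatchingCount I ((S.erase (v p)).erase (v (p + 1))) v p b =
      avoidingMatchingCount I S v (p + 1) b := by
  have hne {i j : ℕ} (hj : j < p + 2) (hij : i < j) : v i ≠ v j := fun h =>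
    hij.ne (hinj (hij.trans hj) hj h)
  have hvp := Finset.mem_inter.1 (hv p (by lia))
  have hvp' := Finset.mem_inter.1 (hv (p + 1) (by lia))
  have hchord : #{f ∈ matchings S | f (v p) = v (p + 1) ∧ bridgeCount I f = b ∧
      AvoidsConsecutive v (p + 1) f} =
      avoidingMatchingCount I ((S.erase (v p)).erase (v (p + 1))) v p b := by
    rw [card_matchings_filter_apply_eq hvp.1 hvp'.1 (hne (by lia) (by lia))]
    refine congrArg Finset.card (Finset.filter_congr fun g hg => ?_)
    have hu : g (v p) = v p := apply_eq_self_of_mem_matchings hg (by simp)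
    have hw : g (v (p + 1)) = v (p + 1) := apply_eq_self_of_mem_matchings hg (by simp)
    rw [bridgeCount_mul_swap_of_iff (iff_of_true hvp.2 hvp'.2) hu hw,
      avoidsConsecutive_mul_swap fun i hi => ⟨hne (by lia) (by lia), hne (by lia) (by lia)⟩,
      avoidsConsecutive_succ_of_apply_eq_self (fun i hi => hne (by lia) hi) hu]
  rw [← hchord, avoidingMatchingCount, avoidingMatchingCount, add_comm,
    ← Finset.card_filter_add_card_filter_not
      (s := {f ∈ matchings S | bridgeCount I f = b ∧ AvoidsConsecutive v (p + 1) f})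
      (fun f => f (v p) = v (p + 1)), Finset.filter_filter, Finset.filter_filter]
  simp only [avoidsConsecutive_add_two, ne_eq, and_comm, and_assoc]

theorem avoidingMatchingCount_eq_pathMatchingSum (hinj : Set.InjOn v (Set.Iio p))
    (hv : ∀ i < p, v i ∈ S ∩ I) :
    (avoidingMatchingCount I S v p b : ℝ) =
      pathMatchingSum p fun k => bridgeWeight (#(S ∩ I) - 2 * k) #(S \ I) b := by
  induction p using Nat.twoStepInduction generalizing S with
  | zero =>
    rw [avoidingMatchingCount_of_le_one zero_le_one, bridgeMatchingCount_eq_bridgeWeight,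
      pathMatchingSum_zero, mul_zero, Nat.sub_zero]
  | one =>
    rw [avoidingMatchingCount_of_le_one le_rfl, bridgeMatchingCount_eq_bridgeWeight,
      pathMatchingSum_one, mul_zero, Nat.sub_zero]
  | more p ih₀ ih₁ =>
    have hne {i j : ℕ} (hj : j < p + 2) (hij : i < j) : v i ≠ v j := fun h =>
      hij.ne (hinj (hij.trans hj) hj h)
    have hvp := hv p (by lia)
    have hvp' := hv (p + 1) (by lia)
    have hmem : v (p + 1) ∈ (S ∩ I).erase (v p) :=
      Finset.mem_erase.2 ⟨(hne (by lia) (by lia)).symm, hvp'⟩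
    have hrest (i : ℕ) (hi : i < p) : v i ∈ (S.erase (v p)).erase (v (p + 1)) ∩ I := by
      rw [Finset.erase_inter, Finset.erase_inter]
      exact Finset.mem_erase.2 ⟨hne (by lia) (by lia),
        Finset.mem_erase.2 ⟨hne (by lia) hi, hv i (by lia)⟩⟩
    have h₀ := ih₀ (hinj.mono (Set.Iio_subset_Iio (by lia))) hrest
    have h₁ := ih₁ (hinj.mono (Set.Iio_subset_Iio (by lia))) fun i hi => hv i (by lia)
    rw [card_erase_erase_inter hvp hmem, erase_erase_sdiff_of_mem (Finset.mem_inter.1 hvp).2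
      (Finset.mem_inter.1 hvp').2] at h₀
    simp only [Nat.sub_sub, add_comm 2, ← mul_add_one] at h₀
    rw [pathMatchingSum_add_two, ← h₁, ← avoidingMatchingCount_add_two hinj hv, Nat.cast_add, h₀,
      add_sub_cancel_right]

theorem avoidingMatchingCount_eq_mul_avoidFactor {q : ℕ} (hinj : Set.InjOn v (Set.Iio q))
    (hv : ∀ i < q, v i ∈ S ∩ I) (hcard : #(S ∩ I) = q) :
    (avoidingMatchingCount I S v q b : ℝ) = bridgeWeight q #(S \ I) b * avoidFactor q b := by
  rw [avoidingMatchingCount_eq_pathMatchingSum hinj hv, hcard, pathMatchingSum_bridgeWeight]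

end AvoidsConsecutive

section ForcedChords
open Equiv
open scoped Finset

variable {α : Type*} [DecidableEq α] {S I : Finset α} {v : ℕ → α} {p b : ℕ}
  {u w u' w' : α} {g : Perm α}

theorem avoiding_mul_swap_iff (hv : ∀ i < p, v i ∈ I) (huI : u ∉ I) (hwI : w ∉ I) (hu : g u = u)
    (hw : g w = w) :
    bridgeCount I (g * swap u w) = b ∧ AvoidsConsecutive v p (g * swap u w) ↔
      bridgeCount I g = b ∧ AvoidsConsecutive v p g := by
  rw [bridgeCount_mul_swap_of_iff (iff_of_false huI hwI) hu hw, avoidsConsecutive_mul_swap]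
  intro i hi
  have hvi : v i ∈ I := hv i (by lia)
  exact ⟨ne_of_mem_of_not_mem hvi huI, ne_of_mem_of_not_mem hvi hwI⟩

variable [Fintype α]

theorem card_avoiding_apply_eq (hinj : Set.InjOn v (Set.Iio p)) (hv : ∀ i < p, v i ∈ S ∩ I)
    (hcard : #(S ∩ I) = p) (hu : u ∈ S \ I) (hw : w ∈ (S \ I).erase u) :
    (#{f ∈ matchings S | f u = w ∧ bridgeCount I f = b ∧ AvoidsConsecutive v p f} : ℝ) =
      bridgeWeight p (#(S \ I) - 2) b * avoidFactor p b := by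
  obtain ⟨huS, huI⟩ := Finset.mem_sdiff.1 hu
  obtain ⟨hwu, hwSI⟩ := Finset.mem_erase.1 hw
  obtain ⟨hwS, hwI⟩ := Finset.mem_sdiff.1 hwSI
  have hinter : (S.erase u).erase w ∩ I = S ∩ I := erase_erase_inter_of_notMem huI hwI
  rw [← card_erase_erase_sdiff hu hw, ← avoidingMatchingCount_eq_mul_avoidFactor hinj
      (by rwa [hinter]) (by rwa [hinter]), avoidingMatchingCount,
    card_matchings_filter_apply_eq huS hwS hwu.symm]
  refine congrArg (fun s => (#s : ℝ)) (Finset.filter_congr fun g hg => ?_)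
  exact avoiding_mul_swap_iff (fun i hi => (Finset.mem_inter.1 (hv i hi)).2) huI hwI
    (apply_eq_self_of_mem_matchings hg (by simp)) (apply_eq_self_of_mem_matchings hg (by simp))

theorem card_avoiding_apply_eq_apply_eq (hinj : Set.InjOn v (Set.Iio p))
    (hv : ∀ i < p, v i ∈ S ∩ I) (hcard : #(S ∩ I) = p) (hu : u ∈ S \ I)
    (hw : w ∈ (S \ I).erase u) (hu' : u' ∈ ((S \ I).erase u).erase w)
    (hw' : w' ∈ (((S \ I).erase u).erase w).erase u') :
    (#{f ∈ matchings S |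
        f u = w ∧ f u' = w' ∧ bridgeCount I f = b ∧ AvoidsConsecutive v p f} : ℝ) =
      bridgeWeight p (#(S \ I) - 4) b * avoidFactor p b := by
  obtain ⟨huS, huI⟩ := Finset.mem_sdiff.1 hu
  obtain ⟨hwu, hwSI⟩ := Finset.mem_erase.1 hw
  obtain ⟨hwS, hwI⟩ := Finset.mem_sdiff.1 hwSI
  have hinter : (S.erase u).erase w ∩ I = S ∩ I := erase_erase_inter_of_notMem huI hwI
  have hrest : #((S.erase u).erase w \ I) - 2 = #(S \ I) - 4 := by
    rw [card_erase_erase_sdiff hu hw, Nat.sub_sub]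
  rw [← Finset.erase_sdiff_comm, ← Finset.erase_sdiff_comm] at hu' hw'
  rw [← hrest, ← card_avoiding_apply_eq hinj (by rwa [hinter]) (by rwa [hinter]) hu' hw',
    card_matchings_filter_apply_eq huS hwS hwu.symm]
  refine congrArg (fun s => (#s : ℝ)) (Finset.filter_congr fun g hg => ?_)
  obtain ⟨hu'w, hu'S⟩ := Finset.mem_erase.1 (Finset.mem_sdiff.1 hu').1
  rw [mul_swap_apply_of_ne (Finset.ne_of_mem_erase hu'S) hu'w,
    avoiding_mul_swap_iff (fun i hi => (Finset.mem_inter.1 (hv i hi)).2) huI hwI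
      (apply_eq_self_of_mem_matchings hg (by simp)) (apply_eq_self_of_mem_matchings hg (by simp))]

end ForcedChords

section Bubbles
open scoped Finset

/-- The vertices at positions `a, …, a + q - 1`. -/
def block (n a q : ℕ) : Finset (Fin (2 * n)) := {i | a ≤ i.val ∧ i.val < a + q}

variable {n a q b : ℕ} {f : Equiv.Perm (Fin (2 * n))}

theorem bridges_eq_bridgeCount (hq : 1 ≤ q) :
    bridges n f a (a + q - 1) = bridgeCount (block n a q) f := by
  have hle (x : ℕ) : x ≤ a + q - 1 ↔ x < a + q := by lia
  rw [bridges, bridgeCount, Nat.card_eq_fintype_card, Fintype.card_subtype, block,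
    Finset.filter_filter]
  simp only [hle, Finset.mem_filter_univ]

theorem isDiagram_iff_mem_matchings : IsDiagram n f ↔ f ∈ matchings Finset.univ := by
  rw [IsDiagram, mem_matchings, Equiv.ext_iff, Finset.eq_univ_iff_forall]
  simp only [Equiv.Perm.mul_apply, Equiv.Perm.one_apply, Equiv.Perm.mem_support]

/-- The number of pairs consisting of a linear chord diagram with `n` chords and a bubble of it
occupying the positions `a, …, a + q - 1` and having `b` bridges. -/
noncomputable def bubbleCountAt (n q b a : ℕ) : ℕ :=
  Nat.card {f : Equiv.Perm (Fin (2 * n)) //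
    IsDiagram n f ∧ IsBubble n f a (a + q - 1) ∧ bridges n f a (a + q - 1) = b}

theorem N_eq_sum_bubbleCountAt (hq : 1 ≤ q) :
    N n q b = ∑ a ∈ Finset.range (2 * n), bubbleCountAt n q b a := by
  have hend {a c : ℕ} (hac : a ≤ c) : bubbleSize a c = q ↔ c = a + q - 1 := by
    rw [bubbleSize]
    lia
  rw [Finset.sum_range, N]
  simp only [bubbleCountAt]
  rw [← Nat.card_sigma]
  refine Nat.card_congr
    { toFun := fun ⟨⟨f, a, c⟩, h⟩ => ⟨⟨a, h.2.1.1.trans_lt h.2.1.2.1⟩, f, h.1, ?_⟩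
      invFun := fun ⟨a, f, h⟩ => ⟨⟨f, a, a + q - 1⟩, h.1, h.2.1, (hend (by lia)).2 rfl, h.2.2⟩
      left_inv := fun ⟨⟨f, a, c⟩, h⟩ => ?_
      right_inv := fun _ => rfl }
  · rw [← (hend h.2.1.1).1 h.2.2.1]
    exact ⟨h.2.1, h.2.2.2⟩
  · have hc := (hend h.2.1.1).1 h.2.2.1
    exact Subtype.ext (congrArg (fun c => (f, a, c)) hc.symm)

variable [NeZero n]

/-- The vertex of a linear chord diagram with `n` chords at position `i < 2 * n`; larger positions
are reduced modulo `2 * n`. -/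
def vertex (n : ℕ) [NeZero n] (i : ℕ) : Fin (2 * n) := Fin.ofNat (2 * n) i

variable {i j : ℕ}

theorem val_vertex (hi : i < 2 * n) : (vertex n i).val = i := Nat.mod_eq_of_lt hi

theorem vertex_val (x : Fin (2 * n)) : vertex n x.val = x := Fin.ext (val_vertex x.isLt)

theorem vertex_inj (hi : i < 2 * n) (hj : j < 2 * n) : vertex n i = vertex n j ↔ i = j := by
  rw [Fin.ext_iff, val_vertex hi, val_vertex hj]

theorem vertex_mem_block_iff (hi : i < 2 * n) : vertex n i ∈ block n a q ↔ a ≤ i ∧ i < a + q := by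
  rw [block, Finset.mem_filter_univ, val_vertex hi]

theorem injOn_vertex_add (haq : a + q ≤ 2 * n) :
    Set.InjOn (fun i => vertex n (a + i)) (Set.Iio q) := fun i hi j hj hij => by
  rw [Set.mem_Iio] at hi hj
  exact Nat.add_left_cancel ((vertex_inj (by lia) (by lia)).1 hij)

theorem card_block (haq : a + q ≤ 2 * n) : #(block n a q) = q := by
  have himage : block n a q = (Finset.range q).image fun i => vertex n (a + i) := by
    ext x
    simp only [block, Finset.mem_filter_univ, Finset.mem_image, Finset.mem_range]
    refine ⟨fun hx => ⟨x.val - a, by lia, ?_⟩, ?_⟩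
    · rw [Nat.add_sub_cancel' hx.1, vertex_val]
    · rintro ⟨i, hi, rfl⟩
      rw [val_vertex (by lia)]
      lia
  rw [himage, Finset.card_image_of_injOn (by simpa using injOn_vertex_add haq), Finset.card_range]

/-- The vertices at positions `i` and `i + 1` are joined by a (short) chord of `f`. -/
def ShortChordAt (n i : ℕ) [NeZero n] (f : Equiv.Perm (Fin (2 * n))) : Prop :=
  i + 1 < 2 * n ∧ f (vertex n i) = vertex n (i + 1)

instance : DecidablePred (ShortChordAt n i) := fun f =>
  inferInstanceAs (Decidable (i + 1 < 2 * n ∧ f (vertex n i) = vertex n (i + 1)))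

theorem not_shortChordAt_succ (hf : ∀ x, f (f x) = x) (h : ShortChordAt n i f) :
    ¬ShortChordAt n (i + 1) f := fun ⟨hlt, h'⟩ => by
  rw [← h.2, hf, vertex_inj (by lia) hlt] at h'
  lia

theorem shortEnd_vertex_iff (hf : ∀ x, f (f x) = x) (hi : i < 2 * n) :
    ShortEnd n f (vertex n i) ↔
      ShortChordAt n i f ∨ 1 ≤ i ∧ ShortChordAt n (i - 1) f := by
  have hright : (f (vertex n i)).val = i + 1 ↔ ShortChordAt n i f := by
    refine ⟨fun h => ⟨h ▸ (f _).isLt, ?_⟩, fun ⟨hi', h⟩ => by rw [h, val_vertex hi']⟩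
    rw [← h, vertex_val]
  have hleft : (f (vertex n i)).val + 1 = i ↔ 1 ≤ i ∧ ShortChordAt n (i - 1) f := by
    refine ⟨fun h => ⟨by lia, by lia, ?_⟩, fun ⟨hi', _, h⟩ => ?_⟩
    · rw [← Nat.eq_sub_of_add_eq h, vertex_val, hf, h]
    · rw [Nat.sub_add_cancel hi'] at h
      rw [← h, hf, val_vertex (by lia), Nat.sub_add_cancel hi']
  rw [ShortEnd, val_vertex hi, hright, hleft]

theorem avoidsConsecutive_vertex_add_iff (haq : a + q ≤ 2 * n) :
    AvoidsConsecutive (fun i => vertex n (a + i)) q f ↔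
      ∀ i, a ≤ i → i + 1 < a + q → ¬ShortChordAt n i f := by
  refine ⟨fun h i ha hi hshort => h (i - a) (by lia) ?_,
    fun h i hi hshort => h (a + i) (by lia) (by lia) ⟨by lia, hshort⟩⟩
  simpa only [← add_assoc, Nat.add_sub_cancel' ha] using hshort.2

theorem isBubble_iff_shortChordAt (hq : 1 ≤ q) (haq : a + q ≤ 2 * n) (hf : ∀ x, f (f x) = x) :
    IsBubble n f a (a + q - 1) ↔
      (∀ i, a ≤ i → i < a + q → ¬(ShortChordAt n i f ∨ 1 ≤ i ∧ ShortChordAt n (i - 1) f)) ∧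
      (a = 0 ∨ ShortChordAt n (a - 1) f ∨ 2 ≤ a ∧ ShortChordAt n (a - 2) f) ∧
      (a + q = 2 * n ∨ ShortChordAt n (a + q) f ∨ ShortChordAt n (a + q - 1) f) := by
  have hexists (i : ℕ) (hi : i < 2 * n) : (∃ x : Fin (2 * n), x.val = i ∧ ShortEnd n f x) ↔
      ShortChordAt n i f ∨ 1 ≤ i ∧ ShortChordAt n (i - 1) f := by
    rw [← shortEnd_vertex_iff hf hi]
    refine ⟨fun ⟨x, hx, h⟩ => ?_, fun h => ⟨_, val_vertex hi, h⟩⟩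
    rwa [← hx, vertex_val]
  have hinside : (∀ x : Fin (2 * n), a ≤ x.val → x.val ≤ a + q - 1 → ¬ShortEnd n f x) ↔
      ∀ i, a ≤ i → i < a + q → ¬(ShortChordAt n i f ∨ 1 ≤ i ∧ ShortChordAt n (i - 1) f) := by
    refine ⟨fun h i ha hi hi' => ?_, fun h x ha hx hx' => ?_⟩
    · obtain ⟨x, rfl, hx⟩ := (hexists i (by lia)).2 hi'
      exact h x ha (by lia) hx
    · exact h x ha (by lia) ((hexists x x.isLt).1 ⟨x, rfl, hx'⟩)
  have hleft : (a = 0 ∨ ∃ x : Fin (2 * n), x.val + 1 = a ∧ ShortEnd n f x) ↔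
      a = 0 ∨ ShortChordAt n (a - 1) f ∨ 2 ≤ a ∧ ShortChordAt n (a - 2) f := by
    rcases a with _ | a
    · simp
    · simp only [add_left_inj, hexists a (by lia), Nat.add_sub_cancel, Nat.reduceSubDiff,
        Nat.reduceLeDiff]
  have hright : (a + q - 1 + 1 = 2 * n ∨
        ∃ x : Fin (2 * n), x.val = a + q - 1 + 1 ∧ ShortEnd n f x) ↔
      a + q = 2 * n ∨ ShortChordAt n (a + q) f ∨ ShortChordAt n (a + q - 1) f := by
    rw [Nat.sub_add_cancel (by lia)]
    rcases haq.eq_or_lt with haq | haq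
    · simp [haq]
    · rw [hexists _ haq, and_iff_right (by lia : 1 ≤ a + q)]
  rw [IsBubble, hinside, hleft, hright]
  exact ⟨And.right ∘ And.right, fun h => ⟨by lia, by lia, h⟩⟩

theorem isBubble_iff (hq : 1 ≤ q) (haq : a + q ≤ 2 * n) (hf : ∀ x, f (f x) = x) :
    IsBubble n f a (a + q - 1) ↔
      (a = 0 ∨ 2 ≤ a ∧ ShortChordAt n (a - 2) f) ∧
      (a + q = 2 * n ∨ ShortChordAt n (a + q) f) ∧
      AvoidsConsecutive (fun i => vertex n (a + i)) q f := by
  rw [isBubble_iff_shortChordAt hq haq hf, avoidsConsecutive_vertex_add_iff haq]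
  constructor
  · rintro ⟨hinside, hleft, hright⟩
    refine ⟨hleft.imp_right fun h => h.resolve_left fun h => ?_,
      hright.imp_right fun h => h.resolve_right fun h => ?_,
      fun i ha hi h => hinside i ha (by lia) (.inl h)⟩
    · rcases a.eq_zero_or_pos with rfl | ha
      · exact hinside 0 le_rfl (by lia) (.inl h)
      · exact hinside a le_rfl (by lia) (.inr ⟨ha, h⟩)
    · exact hinside _ (by lia) (by lia) (.inl h)
  · rintro ⟨hleft, hright, havoid⟩
    refine ⟨fun i ha hi => ?_, hleft.imp_right .inr, hright.imp_right .inl⟩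
    rintro (h | ⟨hi', h⟩)
    · rcases eq_or_ne (i + 1) (a + q) with hiq | hiq
      · have hlt : i + 1 < 2 * n := h.1
        exact not_shortChordAt_succ hf h (hiq ▸ hright.resolve_left (by lia))
      · exact havoid i ha (by lia) h
    · rcases eq_or_ne i a with rfl | hia
      · obtain ⟨ha₂, h'⟩ := hleft.resolve_left (by lia)
        exact not_shortChordAt_succ hf h' (by rwa [show i - 2 + 1 = i - 1 by lia])
      · exact havoid (i - 1) (by lia) (by lia) h

theorem bubbleCountAt_eq_card (hq : 1 ≤ q) (haq : a + q ≤ 2 * n) :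
    bubbleCountAt n q b a = #{f ∈ matchings (Finset.univ : Finset (Fin (2 * n))) |
      (a = 0 ∨ 2 ≤ a ∧ ShortChordAt n (a - 2) f) ∧
      (a + q = 2 * n ∨ ShortChordAt n (a + q) f) ∧
      bridgeCount (block n a q) f = b ∧ AvoidsConsecutive (fun i => vertex n (a + i)) q f} := by
  refine Nat.subtype_card _ fun f => ?_
  rw [Finset.mem_filter, ← isDiagram_iff_mem_matchings, bridges_eq_bridgeCount hq]
  refine and_congr_right fun hf => ?_
  rw [isBubble_iff hq haq hf.1]
  tauto

theorem bubbleCountAt_eq_zero (hq : 1 ≤ q) (ha : a = 1 ∨ 2 * n < a + q ∨ a + q + 1 = 2 * n) :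
    bubbleCountAt n q b a = 0 := by
  rcases lt_or_ge (2 * n) (a + q) with haq | haq
  · rw [bubbleCountAt, Nat.card_eq_zero]
    exact .inl ⟨fun ⟨f, _, h, _⟩ => by have := h.2.1; lia⟩
  · rw [bubbleCountAt_eq_card hq haq, Finset.card_eq_zero, Finset.filter_eq_empty_iff]
    rintro f - ⟨h₁, h₂, -⟩
    have h₂' := h₂.imp_right And.left
    lia

theorem mem_univ_sdiff_block_iff (hi : i < 2 * n) :
    vertex n i ∈ Finset.univ \ block n a q ↔ i < a ∨ a + q ≤ i := by
  rw [Finset.mem_sdiff, vertex_mem_block_iff hi, and_iff_right (Finset.mem_univ _)]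
  lia

theorem vertex_add_mem_univ_inter_block (haq : a + q ≤ 2 * n) (hi : i < q) :
    vertex n (a + i) ∈ Finset.univ ∩ block n a q := by
  rw [Finset.univ_inter, vertex_mem_block_iff (by lia)]
  lia

theorem card_univ_sdiff_block (haq : a + q ≤ 2 * n) :
    #(Finset.univ \ block n a q) = 2 * n - q := by
  rw [Finset.card_sdiff_of_subset (Finset.subset_univ _), card_block haq, Finset.card_fin]

theorem card_avoiding_shortChordAt (haq : a + q ≤ 2 * n) (hi : i + 1 < a ∨ a + q ≤ i)
    (hin : i + 1 < 2 * n) :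
    (#{f ∈ matchings (Finset.univ : Finset (Fin (2 * n))) | ShortChordAt n i f ∧
      bridgeCount (block n a q) f = b ∧ AvoidsConsecutive (fun i => vertex n (a + i)) q f} : ℝ) =
      bridgeWeight q (2 * n - q - 2) b * avoidFactor q b := by
  rw [← card_univ_sdiff_block haq, ← card_avoiding_apply_eq (injOn_vertex_add haq)
    (fun j hj => vertex_add_mem_univ_inter_block haq hj)
    (by rw [Finset.univ_inter, card_block haq])
    ((mem_univ_sdiff_block_iff (by lia : i < 2 * n)).2 (by lia))
    (Finset.mem_erase.2 ⟨mt (vertex_inj hin (by lia)).1 (by lia),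
      (mem_univ_sdiff_block_iff hin).2 (by lia)⟩)]
  simp only [ShortChordAt, hin, true_and]

theorem card_avoiding_shortChordAt_shortChordAt (hi : i + 1 < a) (hj : a + q ≤ j)
    (hjn : j + 1 < 2 * n) :
    (#{f ∈ matchings (Finset.univ : Finset (Fin (2 * n))) | ShortChordAt n i f ∧
      ShortChordAt n j f ∧ bridgeCount (block n a q) f = b ∧
      AvoidsConsecutive (fun i => vertex n (a + i)) q f} : ℝ) =
      bridgeWeight q (2 * n - q - 4) b * avoidFactor q b := by
  have haq : a + q ≤ 2 * n := by lia
  have hin : i + 1 < 2 * n := by lia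
  have hne {k l : ℕ} (hk : k < 2 * n) (hl : l < 2 * n) (hkl : k ≠ l) : vertex n k ≠ vertex n l :=
    mt (vertex_inj hk hl).1 hkl
  rw [← card_univ_sdiff_block haq, ← card_avoiding_apply_eq_apply_eq (injOn_vertex_add haq)
    (fun j hj => vertex_add_mem_univ_inter_block haq hj)
    (by rw [Finset.univ_inter, card_block haq])
    ((mem_univ_sdiff_block_iff (by lia : i < 2 * n)).2 (by lia))
    (w := vertex n (i + 1)) (u' := vertex n j) (w' := vertex n (j + 1))]
  · simp only [ShortChordAt, hin, hjn, true_and]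
  · simp only [Finset.mem_erase, mem_univ_sdiff_block_iff hin]
    exact ⟨hne (by lia) (by lia) (by lia), by lia⟩
  · simp only [Finset.mem_erase, mem_univ_sdiff_block_iff (by lia : j < 2 * n)]
    exact ⟨hne (by lia) (by lia) (by lia), hne (by lia) (by lia) (by lia), by lia⟩
  · simp only [Finset.mem_erase, mem_univ_sdiff_block_iff hjn]
    exact ⟨hne (by lia) (by lia) (by lia), hne (by lia) (by lia) (by lia),
      hne (by lia) (by lia) (by lia), by lia⟩

theorem bubbleCountAt_zero (hq : 1 ≤ q) (hqn : q + 2 ≤ 2 * n) :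
    (bubbleCountAt n q b 0 : ℝ) = bridgeWeight q (2 * n - q - 2) b * avoidFactor q b := by
  rw [bubbleCountAt_eq_card hq (by lia), ← card_avoiding_shortChordAt (a := 0) (i := 0 + q)
    (by lia) (by lia) (by lia)]
  have hne : ¬0 + q = 2 * n := by lia
  simp only [hne, true_or, true_and, false_or]

theorem bubbleCountAt_of_add_eq (hq : 1 ≤ q) (ha : 2 ≤ a) (haq : a + q = 2 * n) :
    (bubbleCountAt n q b a : ℝ) = bridgeWeight q (2 * n - q - 2) b * avoidFactor q b := by
  rw [bubbleCountAt_eq_card hq haq.le, ← card_avoiding_shortChordAt (a := a) (i := a - 2)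
    haq.le (by lia) (by lia)]
  have hne : ¬a = 0 := by lia
  simp only [hne, ha, haq, true_or, true_and, false_or]

theorem bubbleCountAt_of_mem_Icc (hq : 1 ≤ q) (ha : a ∈ Finset.Icc 2 (2 * n - q - 2)) :
    (bubbleCountAt n q b a : ℝ) = bridgeWeight q (2 * n - q - 4) b * avoidFactor q b := by
  rw [Finset.mem_Icc] at ha
  rw [bubbleCountAt_eq_card hq (by lia), ← card_avoiding_shortChordAt_shortChordAt (a := a)
    (i := a - 2) (by lia) le_rfl (by lia)]
  have hne : ¬a = 0 := by lia
  have hne' : ¬a + q = 2 * n := by lia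
  simp only [hne, hne', ha.1, true_and, false_or]

theorem N_eq_bridgeWeight (hq : 1 ≤ q) (hqn : q + 4 ≤ 2 * n) :
    (N n q b : ℝ) = 2 * (bridgeWeight q (2 * n - q - 2) b * avoidFactor q b) +
      (2 * n - q - 3 : ℝ) * (bridgeWeight q (2 * n - q - 4) b * avoidFactor q b) := by
  have hsub : insert 0 (insert (2 * n - q) (Finset.Icc 2 (2 * n - q - 2))) ⊆
      Finset.range (2 * n) := fun a => by
    simp only [Finset.mem_insert, Finset.mem_Icc, Finset.mem_range]
    lia
  have hzero (a : ℕ) (_ : a ∈ Finset.range (2 * n))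
      (ha : a ∉ insert 0 (insert (2 * n - q) (Finset.Icc 2 (2 * n - q - 2)))) :
      bubbleCountAt n q b a = 0 := by
    simp only [Finset.mem_insert, Finset.mem_Icc] at ha
    exact bubbleCountAt_eq_zero hq (by lia)
  have h₀ : 0 ∉ insert (2 * n - q) (Finset.Icc 2 (2 * n - q - 2)) := by
    simp only [Finset.mem_insert, Finset.mem_Icc]
    lia
  have h₁ : 2 * n - q ∉ Finset.Icc 2 (2 * n - q - 2) := by
    rw [Finset.mem_Icc]
    lia
  have hcard : ((2 * n - q - 2 + 1 - 2 : ℕ) : ℝ) = 2 * n - q - 3 := by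
    rw [show 2 * n - q - 2 + 1 - 2 = 2 * n - (q + 3) by lia, Nat.cast_sub (by lia)]
    push_cast
    ring
  rw [N_eq_sum_bubbleCountAt hq, ← Finset.sum_subset hsub hzero,
    Finset.sum_insert h₀, Finset.sum_insert h₁, Nat.cast_add, Nat.cast_add,
    Nat.cast_sum, bubbleCountAt_zero hq (by lia), bubbleCountAt_of_add_eq hq (by lia) (by lia),
    Finset.sum_congr rfl fun a ha => bubbleCountAt_of_mem_Icc hq ha, Finset.sum_const,
    Nat.card_Icc, nsmul_eq_mul, hcard]
  ring

end Bubbles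

theorem sum_N_eq_avoidingCount {n q : ℕ} (hq : 1 ≤ q) (hqn : q + 4 ≤ 2 * n) (P : ℕ → Prop)
    [DecidablePred P] :
    ∑ b ∈ Finset.range (2 * n + 1), (if P b then (N n q b : ℝ) else 0) =
      2 * avoidingCount q (2 * n - q - 2) P +
        (2 * n - q - 3 : ℝ) * avoidingCount q (2 * n - q - 4) P := by
  have : NeZero n := ⟨by lia⟩
  have hvanish (b : ℕ) (hb : b ∉ Finset.range (q + 1)) : (N n q b : ℝ) = 0 := by
    have hlt : q < b := by simpa [Nat.lt_succ_iff] using hb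
    rw [N_eq_bridgeWeight hq hqn, bridgeWeight_of_lt_left _ hlt, bridgeWeight_of_lt_left _ hlt]
    ring
  rw [← Finset.sum_subset (Finset.range_mono (by lia : q + 1 ≤ 2 * n + 1))
    fun b _ hb => by rw [hvanish b hb, ite_self]]
  simp only [avoidingCount, Finset.mul_sum, ← Finset.sum_add_distrib]
  refine Finset.sum_congr rfl fun b _ => ?_
  split_ifs
  · exact N_eq_bridgeWeight hq hqn
  · ring

end

/-- Asymptotic normality of the number of bridges: for bubbles of size `q n ~ c·n` with
`0 < c < 2`, the proportion of (diagram, bubble) pairs with at most `b̄ + t·σ` bridges, where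
`b̄ = q(2n-q)/(2n)` and `σ = q(2n-q)/(2n^{3/2})`, tends to the standard normal CDF `Φ(t)`. -/
theorem bridges_asymptotically_normal (c : ℝ) (hc0 : 0 < c) (hc2 : c < 2) (q : ℕ → ℕ)
    (hq : Filter.Tendsto (fun n => (q n : ℝ) / n) Filter.atTop (nhds c)) (t : ℝ) :
    Filter.Tendsto
      (fun n =>
        (∑ b ∈ Finset.range (2 * n + 1),
          if (b : ℝ) ≤ (q n : ℝ) * (2 * (n : ℝ) - (q n : ℝ)) / (2 * (n : ℝ))
              + t * ((q n : ℝ) * (2 * (n : ℝ) - (q n : ℝ)) / (2 * (n : ℝ) ^ ((3 : ℝ) / 2)))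
            then (N n (q n) b : ℝ) else 0) /
        (∑ b ∈ Finset.range (2 * n + 1), (N n (q n) b : ℝ)))
      Filter.atTop
      (nhds ((Real.sqrt (2 * Real.pi))⁻¹ * ∫ x in Set.Iic t, Real.exp (-x ^ 2 / 2))) := by
  have hsize := eventually_add_le_two_mul hc2 hq 4
  have hβ : ∀ᶠ n in Filter.atTop, (0 : ℝ) ≤ 2 * n - q n - 3 := hsize.mono fun n hn => by
    have : (q n + 4 : ℝ) ≤ 2 * n := by exact_mod_cast hn
    linarith
  refine (tendsto_mediant (α := fun _ => 2) (.of_forall fun _ => two_pos.le) hβ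
    (hβ.mono fun n hn => by linarith)
    (eventually_avoidingCount_pos hc0 hc2 hq even_two)
    (eventually_avoidingCount_pos hc0 hc2 hq (d := 4) (by decide))
    (tendsto_avoidingCount_ratio hc0 hc2 hq even_two t)
    (tendsto_avoidingCount_ratio hc0 hc2 hq (by decide) t)).congr' ?_
  filter_upwards [hsize, (tendsto_atTop_of_div_tendsto hc0 hq).eventually_ge_atTop 1]
    with n hqn hq1
  have htotal := sum_N_eq_avoidingCount hq1 hqn fun _ => True
  simp only [if_true] at htotal
  rw [htotal, ← sum_N_eq_avoidingCount hq1 hqn]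
  rfl

end ChordBubbles
end

section
/- For each fixed integer k ≥ 1, as n → ∞ the number R_{n,k} of crystallized diagrams with n chords and exactly k short chords satisfies R_{n,k} / [ (k+1)^{−1/2} · 2^{n+1/2} · e^{k−n} · k^{n−k/2} · π^{k/2} · ((n−k)/(k+1))^{n−k/2} ] → 1. -/
/-!
Removing the short chords of a crystallized diagram with `k` short and `m` long chords leaves a
perfect matching of `2 * m` vertices and a weakly increasing map recording in which of the `k + 1`
gaps between short chords each vertex lies; being crystallized means that no long chord has both
ends in the same gap. Letting all permutations act on the `2 * m` vertices turns this into a count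
of colorings, `2 ^ m * m! * R (m + k) k = ∑ g, ∏ a, |g⁻¹ a|!`, where `g` runs over the colorings of
`2 * m` points by the gaps that are proper for one fixed matching.

By Dirichlet's formula `∏ a, (s a)! = (∑ a, s a + k)! * ∫ ∏ a, x a ^ s a` over the standard simplex
of `ℝ ^ (k + 1)`, the right-hand side becomes `(2 * m + k)! * ∫ (1 - ‖x‖ ^ 2) ^ m`: each chord of
the matching contributes the factor `∑_{a ≠ b} x a * x b = 1 - ‖x‖ ^ 2`. This factor is largest at
the centroid of the simplex, where Laplace's method reduces the integral to a Gaussian one on the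
hyperplane `∑ a, x a = 0`. The factorials are handled by Stirling's formula.
-/

namespace ChordBubbles

/-- A diagram is crystallized when all its bubbles are empty, i.e., no chord joins two vertices
lying in the same bubble. -/
def Crystallized (n : ℕ) (f : Equiv.Perm (Fin (2 * n))) : Prop :=
  ∀ a b, IsBubble n f a b → ∀ i : Fin (2 * n),
    a ≤ i.val → i.val ≤ b → ¬ (a ≤ (f i).val ∧ (f i).val ≤ b)

/-- The number of short chords of a diagram. -/
noncomputable def shortChords (n : ℕ) (f : Equiv.Perm (Fin (2 * n))) : ℕ :=
  Nat.card {i : Fin (2 * n) // (f i).val = i.val + 1}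

/-- `R n k` : the number of crystallized diagrams with `n` chords, exactly `k` of them short. -/
noncomputable def R (n k : ℕ) : ℕ :=
  Nat.card {f : Equiv.Perm (Fin (2 * n)) //
    IsDiagram n f ∧ Crystallized n f ∧ shortChords n f = k}

section Vertex

variable {p k : ℕ} {c : Fin p →o Fin (k + 1)}

/-- The vertices of a diagram with `p` vertices on long chords and `k` short chords, where `c i` is
the number of short chords to the left of the `i`-th long vertex: `long i` is that vertex and
`short j b` is the left (`b = false`) or right (`b = true`) endpoint of the `j`-th short chord. -/
inductive Vertex (c : Fin p →o Fin (k + 1)) : Type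
  | long (i : Fin p)
  | short (j : Fin k) (b : Bool)

namespace Vertex

/-- The `p` long vertices and the `2 * k` short ones; only used to count them. -/
def equivSum : Vertex c ≃ Fin p ⊕ Fin k × Bool where
  toFun
    | long i => Sum.inl i
    | short j b => Sum.inr (j, b)
  invFun := Sum.elim long fun x => short x.1 x.2
  left_inv x := by cases x <;> rfl
  right_inv x := by rcases x with i | ⟨j, b⟩ <;> rfl

instance : Fintype (Vertex c) := Fintype.ofEquiv _ equivSum.symm

/-- The function on vertices with values `t` on long vertices and `s`, `s'` on the left and right
endpoints of short chords. -/
def elim {α : Type*} (t : Fin p → α) (s s' : Fin k → α) : Vertex c → α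
  | long i => t i
  | short j b => cond b (s' j) (s j)

theorem card_eq : Fintype.card (Vertex c) = p + k * 2 := by
  simp [Fintype.card_congr (equivSum (c := c))]

/-- The sort key for the left-to-right order of the vertices: the long vertices with `c i = a` form
block `2 * a`, and the `j`-th short chord is block `2 * j + 1`. -/
def key : Vertex c → ℕ ×ₗ ℕ
  | long i => toLex (2 * (c i : ℕ), (i : ℕ))
  | short j b => toLex (2 * (j : ℕ) + 1, b.toNat)

theorem key_injective : Function.Injective (key (c := c)) := by
  rintro (i | ⟨j, b⟩) (i' | ⟨j', b'⟩) h <;>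
    simp only [key, toLex_inj, Prod.mk.injEq] at h
  · simp [Fin.ext h.2]
  · omega
  · omega
  · obtain rfl : j = j' := by omega
    cases b <;> cases b' <;> simp_all

instance : LinearOrder (Vertex c) := LinearOrder.lift' key key_injective

theorem lt_iff_key_lt {x y : Vertex c} : x < y ↔ key x < key y := Iff.rfl

@[simp]
theorem long_lt_long {i i' : Fin p} : (long i : Vertex c) < long i' ↔ i < i' := by
  have hc : i < i' → (c i : ℕ) ≤ c i' := fun h => c.monotone h.le
  have hc' : i' ≤ i → (c i' : ℕ) ≤ c i := fun h => c.monotone h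
  simp only [lt_iff_key_lt, key, Prod.Lex.toLex_lt_toLex]
  omega

@[simp]
theorem long_lt_short {i : Fin p} {j : Fin k} {b : Bool} :
    (long i : Vertex c) < short j b ↔ (c i : ℕ) ≤ j := by
  simp only [lt_iff_key_lt, key, Prod.Lex.toLex_lt_toLex]
  omega

@[simp]
theorem short_lt_long {i : Fin p} {j : Fin k} {b : Bool} :
    (short j b : Vertex c) < long i ↔ (j : ℕ) < c i := by
  simp only [lt_iff_key_lt, key, Prod.Lex.toLex_lt_toLex]
  omega

@[simp]
theorem short_lt_short {j j' : Fin k} {b b' : Bool} :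
    (short j b : Vertex c) < short j' b' ↔ j < j' ∨ j = j' ∧ b < b' := by
  simp only [lt_iff_key_lt, key, Prod.Lex.toLex_lt_toLex]
  cases b <;> cases b' <;> simp
  all_goals omega

theorem short_false_covBy_short_true (j : Fin k) :
    (short j false : Vertex c) ⋖ short j true := by
  refine ⟨by simp, ?_⟩
  rintro (i | ⟨j', b⟩) h h'
  · simp only [short_lt_long, long_lt_short] at h h'
    omega
  · cases b <;> simp at h h' <;> omega

theorem exists_short_mem_uIcc_iff {i i' : Fin p} :
    (∃ j b, (short j b : Vertex c) ∈ Set.uIcc (long i) (long i')) ↔ c i ≠ c i' := by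
  simp only [Set.mem_uIcc, ← not_lt, long_lt_short, short_lt_long, ne_eq, Fin.ext_iff]
  constructor
  · rintro ⟨j, -, h⟩
    omega
  · intro h
    exact ⟨⟨min (c i) (c i'), by omega⟩, false, by simp only; omega⟩

theorem eq_of_long_covBy_long {i i' : Fin p} (h : (long i : Vertex c) ⋖ long i') :
    c i = c i' := by
  by_contra hne
  obtain ⟨j, b, hj⟩ := exists_short_mem_uIcc_iff.2 hne
  rw [Set.uIcc_of_le h.le] at hj
  exact h.2 (lt_of_le_of_ne hj.1 nofun) (lt_of_le_of_ne hj.2 nofun)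

/-- The involution pairing the endpoints of each short chord and acting as `h` on long vertices. -/
def mate (c : Fin p →o Fin (k + 1)) (h : Equiv.Perm (Fin p)) : Equiv.Perm (Vertex c) where
  toFun
    | long i => long (h i)
    | short j b => short j !b
  invFun
    | long i => long (h.symm i)
    | short j b => short j !b
  left_inv x := by cases x <;> simp
  right_inv x := by cases x <;> simp

@[simp]
theorem mate_long (h : Equiv.Perm (Fin p)) (i : Fin p) : mate c h (long i) = long (h i) := rfl

@[simp]
theorem mate_short (h : Equiv.Perm (Fin p)) (j : Fin k) (b : Bool) :
    mate c h (short j b) = short j !b := rfl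

end Vertex

end Vertex

section Crystallized

variable {n : ℕ} {f : Equiv.Perm (Fin (2 * n))}

theorem shortEnd_iff_covBy {i : Fin (2 * n)} : ShortEnd n f i ↔ i ⋖ f i ∨ f i ⋖ i := by
  simp only [ShortEnd, Fin.covBy_iff, Nat.covBy_iff_add_one_eq]
  omega

theorem IsDiagram.shortEnd_apply (hf : IsDiagram n f) {i : Fin (2 * n)} :
    ShortEnd n f (f i) ↔ ShortEnd n f i := by
  rw [shortEnd_iff_covBy, shortEnd_iff_covBy, hf.1, or_comm]

theorem exists_lower_boundary (P : ℕ → Prop) (u : ℕ) :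
    ∃ a ≤ u, (∀ i, a ≤ i → i < u → ¬P i) ∧ (a = 0 ∨ ∃ j, j + 1 = a ∧ P j) := by
  induction u with
  | zero => exact ⟨0, le_rfl, by omega, Or.inl rfl⟩
  | succ u ih =>
    by_cases hu : P u
    · exact ⟨u + 1, le_rfl, by omega, Or.inr ⟨u, rfl, hu⟩⟩
    · obtain ⟨a, hau, hfree, hbd⟩ := ih
      refine ⟨a, by omega, fun i hi hiu => ?_, hbd⟩
      rcases Nat.lt_succ_iff_lt_or_eq.1 hiu with h | rfl
      exacts [hfree i hi h, hu]

theorem exists_upper_boundary (P : ℕ → Prop) {v N : ℕ} (hv : v < N) :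
    ∃ b, v ≤ b ∧ b < N ∧ (∀ i, v < i → i ≤ b → ¬P i) ∧ (b + 1 = N ∨ P (b + 1)) := by
  induction N, hv using Nat.le_induction with
  | base => exact ⟨v, le_rfl, v.lt_succ_self, by omega, Or.inl rfl⟩
  | succ N _ ih =>
    obtain ⟨b, hvb, hbN, hfree, hbd⟩ := ih
    by_cases hb : P (b + 1)
    · exact ⟨b, hvb, by omega, hfree, Or.inr hb⟩
    · obtain rfl : b + 1 = N := hbd.resolve_right hb
      refine ⟨b + 1, by omega, by omega, fun i hi hib => ?_, Or.inl rfl⟩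
      rcases Nat.le_succ_iff.1 hib with h | rfl
      exacts [hfree i hi h, hb]

theorem exists_isBubble_of_forall_mem_Icc {u v : Fin (2 * n)} (huv : u ≤ v)
    (h : ∀ i ∈ Set.Icc u v, ¬ShortEnd n f i) :
    ∃ a b : ℕ, a ≤ u ∧ (v : ℕ) ≤ b ∧ IsBubble n f a b := by
  let P (i : ℕ) : Prop := ∃ hi : i < 2 * n, ShortEnd n f ⟨i, hi⟩
  obtain ⟨a, hau, hafree, ha⟩ := exists_lower_boundary P u
  obtain ⟨b, hvb, hbn, hbfree, hb⟩ := exists_upper_boundary P v.isLt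
  refine ⟨a, b, hau, hvb, (hau.trans huv).trans hvb, hbn, fun i hai hib hi => ?_,
    ha.imp_right fun ⟨j, hja, hj, hjs⟩ => ⟨⟨j, hj⟩, hja, hjs⟩,
    hb.imp_right fun ⟨hb, hbs⟩ => ⟨⟨b + 1, hb⟩, rfl, hbs⟩⟩
  rcases lt_or_ge i u with hiu | hui
  · exact hafree i hai hiu ⟨i.isLt, hi⟩
  · rcases le_or_gt i v with hiv | hvi
    · exact h i ⟨hui, hiv⟩ hi
    · exact hbfree i hvi hib ⟨i.isLt, hi⟩

theorem crystallized_iff :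
    Crystallized n f ↔ ∀ i, ∃ j ∈ Set.uIcc i (f i), ShortEnd n f j := by
  constructor
  · intro hf i
    by_contra! hfree
    obtain ⟨a, b, ha, hb, hab⟩ := exists_isBubble_of_forall_mem_Icc inf_le_sup hfree
    have hi : a ≤ (i : ℕ) ∧ (i : ℕ) ≤ b := ⟨ha.trans inf_le_left, le_sup_left.trans hb⟩
    have hfi : a ≤ (f i : ℕ) ∧ (f i : ℕ) ≤ b := ⟨ha.trans inf_le_right, le_sup_right.trans hb⟩
    exact hf a b hab i hi.1 hi.2 hfi
  · intro hf a b hab i hai hib hfi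
    obtain ⟨j, hj, hjs⟩ := hf i
    have := Set.mem_uIcc.1 hj
    simp only [Fin.le_def] at this
    exact hab.2.2.1 j (by omega) (by omega) hjs

theorem IsDiagram.card_shortEnd (hf : IsDiagram n f) :
    Nat.card {i // ShortEnd n f i} = 2 * shortChords n f := by
  classical
  have hdisj : Disjoint (fun i => (f i).val = i.val + 1) (fun i => (f i).val + 1 = i.val) :=
    Pi.disjoint_iff.2 fun i => Prop.disjoint_iff.2 (by omega)
  have hright : Fintype.card {i // (f i).val + 1 = i.val} =
      Fintype.card {i // (f i).val = i.val + 1} :=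
    Fintype.card_congr (f.subtypeEquiv fun i => by rw [hf.1, eq_comm])
  calc
    Nat.card {i // ShortEnd n f i}
      = Fintype.card {i // (f i).val = i.val + 1 ∨ (f i).val + 1 = i.val} := by
        rw [← Nat.card_eq_fintype_card]; rfl
    _ = Fintype.card {i // (f i).val = i.val + 1} + Fintype.card {i // (f i).val + 1 = i.val} :=
        Fintype.card_subtype_or_disjoint _ _ hdisj
    _ = 2 * shortChords n f := by
        rw [hright, shortChords, Nat.card_eq_fintype_card]
        exact (Nat.two_mul _).symm

theorem IsDiagram.card_not_shortEnd (hf : IsDiagram n f) :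
    Nat.card {i // ¬ShortEnd n f i} = 2 * n - 2 * shortChords n f := by
  classical
  rw [← hf.card_shortEnd, Nat.card_eq_fintype_card, Nat.card_eq_fintype_card,
    Fintype.card_subtype_compl, Fintype.card_fin]

end Crystallized

section Merge

variable {p k : ℕ}

theorem exists_orderHom_lt_iff {α : Type*} [LinearOrder α] {t : Fin p → α} {s : Fin k → α}
    (ht : Monotone t) (hs : Monotone s) :
    ∃ c : Fin p →o Fin (k + 1), ∀ (i : Fin p) (j : Fin k), (j : ℕ) < c i ↔ s j < t i := by
  let count (i : Fin p) : ℕ := (Finset.univ.filter fun j => s j < t i).card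
  have hcount (i : Fin p) : count i < k + 1 :=
    Nat.lt_succ_iff.2 ((Finset.card_filter_le _ _).trans (by simp))
  refine ⟨⟨fun i => ⟨count i, hcount i⟩, fun i i' hi => ?_⟩, fun i j =>
    Tuple.lt_card_lt_iff_apply_lt_of_monotone hs⟩
  exact Fin.mk_le_mk.2 <| Finset.card_le_card
    (Finset.monotone_filter_right _ fun j _ (hj : s j < t i) => hj.trans_le (ht hi))

theorem strictMono_elim {α : Type*} [LinearOrder α] {c : Fin p →o Fin (k + 1)} {t : Fin p → α}
    {s s' : Fin k → α} (ht : StrictMono t) (hs : StrictMono s) (hss' : ∀ j, s j ⋖ s' j)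
    (hne : ∀ j j', s' j ≠ s j') (hts : ∀ i j, t i ≠ s j) (hts' : ∀ i j, t i ≠ s' j)
    (hc : ∀ (i : Fin p) (j : Fin k), (j : ℕ) < c i ↔ s j < t i) :
    StrictMono (Vertex.elim t s s' : Vertex c → α) := by
  have hlower (j b) : s j ≤ cond b (s' j) (s j) := by cases b; exacts [le_rfl, (hss' j).le]
  have hupper (j b) : cond b (s' j) (s j) ≤ s' j := by cases b; exacts [(hss' j).le, le_rfl]
  rintro (i | ⟨j, b⟩) (i' | ⟨j', b'⟩) hlt
  · exact ht (by simpa using hlt)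
  · rw [Vertex.long_lt_short, ← not_lt, hc, not_lt] at hlt
    exact (hlt.lt_of_ne (hts i j')).trans_le (hlower j' b')
  · rw [Vertex.short_lt_long, hc] at hlt
    exact (hupper j b).trans_lt (((hss' j).ge_of_gt hlt).lt_of_ne (hts' i' j).symm)
  · rcases Vertex.short_lt_short.1 hlt with hj | ⟨rfl, hb⟩
    · exact (hupper j b).trans_lt
        ((((hss' j).ge_of_gt (hs hj)).lt_of_ne (hne j j')).trans_le (hlower j' b'))
    · obtain ⟨rfl, rfl⟩ := Bool.lt_iff.1 hb
      exact (hss' j).lt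

end Merge

section InsertShort

open Vertex

variable {m k : ℕ} {c : Fin (2 * m) →o Fin (k + 1)} {h : Equiv.Perm (Fin (2 * m))}

/-- The left-to-right numbering of the vertices. -/
noncomputable def place (c : Fin (2 * m) →o Fin (k + 1)) : Vertex c ≃o Fin (2 * (m + k)) :=
  (monoEquivOfFin (Vertex c) (Vertex.card_eq.trans (by ring))).symm

theorem eq_place_of_strictMono {g : Vertex c → Fin (2 * (m + k))} (hg : StrictMono g) :
    g = place c := by
  have hmono : StrictMono (g ∘ (place c).symm) := hg.comp (place c).symm.strictMono
  have hrange : Set.range (g ∘ (place c).symm) = Set.range id := by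
    rw [(Finite.injective_iff_surjective.1 hmono.injective).range_eq, Set.range_id]
  funext x
  simpa using congrFun ((hmono.range_inj strictMono_id).1 hrange) (place c x)

/-- The diagram obtained from the chords of `h` by inserting `k` short chords at the places
prescribed by `c`. -/
noncomputable def insertShort (c : Fin (2 * m) →o Fin (k + 1)) (h : Equiv.Perm (Fin (2 * m))) :
    Equiv.Perm (Fin (2 * (m + k))) :=
  (place c).toEquiv.permCongr (mate c h)

@[simp]
theorem insertShort_place (x : Vertex c) :
    insertShort c h (place c x) = place c (mate c h x) := by
  simp [insertShort]

theorem isDiagram_insertShort (hh : IsDiagram m h) : IsDiagram (m + k) (insertShort c h) := by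
  constructor <;> refine (place c).surjective.forall.2 fun x => ?_
  · rcases x with i | ⟨j, b⟩ <;> simp [hh.1]
  · rcases x with i | ⟨j, b⟩ <;> simp [hh.2]

theorem shortEnd_place_short (j : Fin k) (b : Bool) :
    ShortEnd (m + k) (insertShort c h) (place c (short j b)) := by
  rw [shortEnd_iff_covBy, insertShort_place, apply_covBy_apply_iff, apply_covBy_apply_iff]
  cases b
  · exact Or.inl (short_false_covBy_short_true j)
  · exact Or.inr (short_false_covBy_short_true j)

theorem not_shortEnd_place_long (hc : ∀ i, c i ≠ c (h i)) (i : Fin (2 * m)) :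
    ¬ShortEnd (m + k) (insertShort c h) (place c (long i)) := by
  rw [shortEnd_iff_covBy, insertShort_place, apply_covBy_apply_iff, apply_covBy_apply_iff]
  rintro (hi | hi)
  · exact hc i (eq_of_long_covBy_long hi)
  · exact hc i (eq_of_long_covBy_long hi).symm

theorem crystallized_insertShort_iff
    (hlong : ∀ i, ¬ShortEnd (m + k) (insertShort c h) (place c (long i))) :
    Crystallized (m + k) (insertShort c h) ↔ ∀ i, c i ≠ c (h i) := by
  have hmem (x y z : Vertex c) :
      place c x ∈ Set.uIcc (place c y) (place c z) ↔ x ∈ Set.uIcc y z := by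
    simp [Set.mem_uIcc]
  simp only [crystallized_iff, (place c).surjective.forall, (place c).surjective.exists,
    insertShort_place, hmem, ← exists_short_mem_uIcc_iff]
  constructor
  · intro hcr i
    obtain ⟨i' | ⟨j, b⟩, hmem, hshort⟩ := hcr (long i)
    exacts [absurd hshort (hlong i'), ⟨j, b, hmem⟩]
  · rintro hc (i | ⟨j, b⟩)
    · obtain ⟨j, b, hmem⟩ := hc i
      exact ⟨short j b, hmem, shortEnd_place_short j b⟩
    · exact ⟨short j b, Set.left_mem_uIcc, shortEnd_place_short j b⟩

theorem range_place_long (hlong : ∀ i, ¬ShortEnd (m + k) (insertShort c h) (place c (long i))) :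
    Set.range (fun i => place c (long i)) = {i | ¬ShortEnd (m + k) (insertShort c h) i} := by
  ext v
  obtain ⟨i | ⟨j, b⟩, rfl⟩ := (place c).surjective v
  · simpa using hlong i
  · simpa using shortEnd_place_short j b

theorem range_place_short (hlong : ∀ i, ¬ShortEnd (m + k) (insertShort c h) (place c (long i))) :
    Set.range (fun j => place c (short j false)) =
      {i | (insertShort c h i).val = i.val + 1} := by
  ext v
  obtain ⟨i | ⟨j, b⟩, rfl⟩ := (place c).surjective v
  · simpa using fun hi => hlong i (Or.inl (by simpa using hi))
  · rw [Set.mem_ofPred, insertShort_place, eq_comm, ← Nat.covBy_iff_add_one_eq, ← Fin.covBy_iff,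
      apply_covBy_apply_iff]
    cases b
    · simpa using short_false_covBy_short_true j
    · simpa using fun hj => hj.lt.asymm (short_false_covBy_short_true j).lt

theorem shortChords_insertShort
    (hlong : ∀ i, ¬ShortEnd (m + k) (insertShort c h) (place c (long i))) :
    shortChords (m + k) (insertShort c h) = k := by
  have hinj : Function.Injective fun j => place c (short j false) :=
    (place c).injective.comp fun j j' hj => by simpa using hj
  calc
    shortChords (m + k) (insertShort c h)
      = Nat.card (Set.range fun j => place c (short j false)) := by
        rw [range_place_short hlong]; rfl
    _ = k := by rw [Nat.card_congr (Equiv.ofInjective _ hinj).symm, Nat.card_fin]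

theorem strictMono_place_long : StrictMono fun i => place c (long i) :=
  fun i i' hi => (place c).strictMono (by simpa using hi)

theorem strictMono_place_short : StrictMono fun j => place c (short j false) :=
  fun j j' hj => (place c).strictMono (by simpa using hj)

theorem insertShort_inj {c' : Fin (2 * m) →o Fin (k + 1)} {h' : Equiv.Perm (Fin (2 * m))}
    (hc : ∀ i, c i ≠ c (h i)) (hc' : ∀ i, c' i ≠ c' (h' i))
    (heq : insertShort c h = insertShort c' h') : c = c' ∧ h = h' := by
  have hlong (i) : place c (long i) = place c' (long i) :=
    congrFun ((strictMono_place_long.range_inj strictMono_place_long).1 (by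
      rw [range_place_long (not_shortEnd_place_long hc), heq,
        range_place_long (not_shortEnd_place_long hc')])) i
  have hshort (j) : place c (short j false) = place c' (short j false) :=
    congrFun ((strictMono_place_short.range_inj strictMono_place_short).1 (by
      rw [range_place_short (not_shortEnd_place_long hc), heq,
        range_place_short (not_shortEnd_place_long hc')])) j
  constructor
  · ext i
    refine eq_of_forall_lt_iff fun a => ?_
    by_cases ha : a < k
    · have hiff : place c (short ⟨a, ha⟩ false) < place c (long i) ↔
          place c' (short ⟨a, ha⟩ false) < place c' (long i) := by rw [hshort, hlong]
      simpa using hiff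
    · omega
  · ext1 i
    have hi : insertShort c h (place c (long i)) = insertShort c' h' (place c' (long i)) := by
      rw [heq, hlong]
    simpa [hlong (h i)] using hi

theorem insertShort_eq_of_elim_eq_place {f : Equiv.Perm (Fin (2 * (m + k)))}
    {t : Fin (2 * m) → Fin (2 * (m + k))} {s : Fin k → Fin (2 * (m + k))} (hf : ∀ i, f (f i) = i)
    (hplace : Vertex.elim t s (fun j => f (s j)) = place c) (ht : ∀ i, t (h i) = f (t i)) :
    insertShort c h = f := by
  ext1 v
  obtain ⟨x, rfl⟩ := (place c).surjective v
  rw [insertShort_place, ← hplace]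
  rcases x with i | ⟨j, _ | _⟩
  · exact ht i
  · rfl
  · exact (hf _).symm

theorem exists_insertShort_eq {f : Equiv.Perm (Fin (2 * (m + k)))} (hf : IsDiagram (m + k) f)
    (hk : shortChords (m + k) f = k) :
    ∃ (c : Fin (2 * m) →o Fin (k + 1)) (h : Equiv.Perm (Fin (2 * m))),
      IsDiagram m h ∧ insertShort c h = f ∧
        ∀ i, ¬ShortEnd (m + k) (insertShort c h) (place c (long i)) := by
  classical
  let t : Fin (2 * m) ≃o {i // ¬ShortEnd (m + k) f i} :=
    monoEquivOfFin _ (by rw [← Nat.card_eq_fintype_card, hf.card_not_shortEnd, hk]; omega)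
  let s : Fin k ≃o {i // (f i).val = i.val + 1} :=
    monoEquivOfFin _ (by rw [← Nat.card_eq_fintype_card]; exact hk)
  have ht : StrictMono fun i => (t i : Fin (2 * (m + k))) := t.strictMono
  have hsm : StrictMono fun j => (s j : Fin (2 * (m + k))) := s.strictMono
  have hs (j : Fin k) : (s j : Fin (2 * (m + k))) ⋖ f (s j) := by
    rw [Fin.covBy_iff, Nat.covBy_iff_add_one_eq, (s j).2]
  have hshort (j : Fin k) : ShortEnd (m + k) f (s j) := shortEnd_iff_covBy.2 (Or.inl (hs j))
  obtain ⟨c, hc⟩ := exists_orderHom_lt_iff ht.monotone hsm.monotone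
  have hplace : Vertex.elim (fun i => (t i : Fin (2 * (m + k)))) (fun j => s j)
      (fun j => f (s j)) = place c := by
    refine eq_place_of_strictMono (strictMono_elim ht hsm hs (fun j j' hj => ?_)
      (fun i j hi => (t i).2 (hi ▸ hshort j))
      (fun i j hi => (t i).2 (hi ▸ hf.shortEnd_apply.2 (hshort j))) hc)
    have hj' := (s j').2
    have hjj := (s j).2
    rw [← hj, hf.1] at hj'
    omega
  let h : Equiv.Perm (Fin (2 * m)) :=
    t.toEquiv.symm.permCongr (f.subtypePerm fun i => not_congr hf.shortEnd_apply)
  have hth (i : Fin (2 * m)) : (t (h i) : Fin (2 * (m + k))) = f (t i) := by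
    simp [h]
  have hfh : insertShort c h = f := insertShort_eq_of_elim_eq_place hf.1 hplace hth
  refine ⟨c, h, ⟨fun i => ?_, fun i hi => ?_⟩, hfh, fun i => ?_⟩
  · apply t.injective
    rw [Subtype.ext_iff, hth, hth, hf.1]
  · exact hf.2 (t i) (by rw [← hth, hi])
  · rw [hfh, ← hplace]
    exact (t i).2

/-- `c` and `h` describe the long chords of a crystallized diagram: every chord of `h` joins two
vertices separated by a short chord. -/
def IsSkeleton (c : Fin (2 * m) →o Fin (k + 1)) (h : Equiv.Perm (Fin (2 * m))) : Prop :=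
  IsDiagram m h ∧ ∀ i, c i ≠ c (h i)

theorem R_add_eq_card_isSkeleton (m k : ℕ) :
    R (m + k) k = Nat.card {x : (Fin (2 * m) →o Fin (k + 1)) × Equiv.Perm (Fin (2 * m)) //
      IsSkeleton x.1 x.2} := by
  refine (Nat.card_eq_of_bijective (fun x => ⟨insertShort x.1.1 x.1.2,
    isDiagram_insertShort x.2.1,
    (crystallized_insertShort_iff (not_shortEnd_place_long x.2.2)).2 x.2.2,
    shortChords_insertShort (not_shortEnd_place_long x.2.2)⟩) ⟨?_, ?_⟩).symm
  · intro x y hxy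
    obtain ⟨hc, hh⟩ := insertShort_inj x.2.2 y.2.2 (congrArg Subtype.val hxy)
    exact Subtype.ext (Prod.ext hc hh)
  · rintro ⟨f, hf, hcryst, hk⟩
    obtain ⟨c, h, hh, rfl, hlong⟩ := exists_insertShort_eq hf hk
    exact ⟨⟨(c, h), hh, (crystallized_insertShort_iff hlong).1 hcryst⟩, rfl⟩

end InsertShort

section DoubleCounting

theorem card_subtype_comp {α β : Type*} [Finite α] [Fintype β] (f : α → β) (P : β → Prop)
    [DecidablePred P] :
    Nat.card {a // P (f a)} = ∑ b with P b, Nat.card {a // f a = b} := by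
  classical
  have := Fintype.ofFinite α
  simp only [Nat.card_eq_fintype_card, Fintype.card_subtype]
  rw [Finset.card_eq_sum_card_fiberwise (f := f) (t := {b | P b}) (by intro a; simp)]
  refine Finset.sum_congr rfl fun b hb => congrArg Finset.card ?_
  ext a
  simp only [Finset.mem_filter, Finset.mem_univ, true_and] at hb ⊢
  exact ⟨And.right, fun h => ⟨h ▸ hb, h⟩⟩

theorem card_conj_eq_of_isConj {G : Type*} [Group G] {a b : G} (hab : IsConj a b) :
    Nat.card {g : G // g * a * g⁻¹ = b} = Nat.card (Subgroup.centralizer {a}) := by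
  obtain ⟨g₀, rfl⟩ := isConj_iff.1 hab
  refine Nat.card_congr ((Equiv.mulLeft g₀⁻¹).subtypeEquiv fun g => ?_)
  rw [Subgroup.mem_centralizer_singleton_iff, Equiv.coe_mulLeft, mul_inv_eq_iff_eq_mul,
    ← mul_right_inj g₀⁻¹]
  simp [mul_assoc]

theorem IsDiagram.cycleType_eq {m : ℕ} {φ : Equiv.Perm (Fin (2 * m))} (hφ : IsDiagram m φ) :
    φ.cycleType = Multiset.replicate m 2 := by
  have : Fact (Nat.Prime 2) := ⟨Nat.prime_two⟩
  have hsq : φ ^ 2 = 1 := Equiv.ext hφ.1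
  have hrep := Multiset.eq_replicate_card.2 (Equiv.Perm.pow_prime_eq_one_iff.1 hsq)
  have hsum := φ.sum_cycleType
  have hsupp : φ.support = Finset.univ := by
    ext i
    simp [hφ.2 i]
  rw [hsupp, hrep, Multiset.sum_replicate, Finset.card_univ, Fintype.card_fin, smul_eq_mul,
    mul_comm] at hsum
  rw [hrep, Nat.eq_of_mul_eq_mul_left two_pos hsum]

theorem IsDiagram.card_centralizer {m : ℕ} {φ : Equiv.Perm (Fin (2 * m))} (hφ : IsDiagram m φ) :
    Nat.card (Subgroup.centralizer {φ}) = 2 ^ m * m.factorial := by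
  rw [Equiv.Perm.nat_card_centralizer, hφ.cycleType_eq]
  rcases m.eq_zero_or_pos with rfl | hm
  · simp
  · simp [Multiset.toFinset_replicate, hm.ne', mul_comm m 2]

theorem IsDiagram.conj {m : ℕ} {φ : Equiv.Perm (Fin (2 * m))} (hφ : IsDiagram m φ)
    (σ : Equiv.Perm (Fin (2 * m))) : IsDiagram m (σ * φ * σ⁻¹) := by
  constructor
  · simp [hφ.1]
  · intro i hi
    refine hφ.2 (σ⁻¹ i) (σ.injective ?_)
    simpa using hi

theorem isSkeleton_conj_iff {m k : ℕ} {φ : Equiv.Perm (Fin (2 * m))} (hφ : IsDiagram m φ)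
    {c : Fin (2 * m) →o Fin (k + 1)} {σ : Equiv.Perm (Fin (2 * m))} :
    IsSkeleton c (σ * φ * σ⁻¹) ↔ ∀ i, (c ∘ σ) i ≠ (c ∘ σ) (φ i) := by
  rw [IsSkeleton, and_iff_right (hφ.conj σ), σ.surjective.forall]
  simp

theorem card_orderHom_comp_perm_eq {n : ℕ} {α : Type*} [LinearOrder α] [Fintype α] (g : Fin n → α) :
    Nat.card {x : (Fin n →o α) × Equiv.Perm (Fin n) // x.1 ∘ x.2 = g} =
      ∏ a, (Fintype.card {i // g i = a}).factorial := by
  rw [← DomMulAct.stabilizer_card, ← Nat.card_eq_fintype_card]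
  let unsort (τ : {τ : Equiv.Perm (Fin n) // g ∘ τ = g}) :
      {x : (Fin n →o α) × Equiv.Perm (Fin n) // x.1 ∘ x.2 = g} :=
    ⟨(⟨g ∘ Tuple.sort g, Tuple.monotone_sort g⟩, (Tuple.sort g)⁻¹ * τ), by
      ext i
      simpa using congrFun τ.2 i⟩
  refine (Nat.card_eq_of_bijective unsort ⟨?_, ?_⟩).symm
  · intro τ τ' h
    simpa [unsort, Subtype.ext_iff] using h
  · rintro ⟨⟨c, σ⟩, rfl⟩
    have hc : (c : Fin n → α) = (c ∘ σ) ∘ Tuple.sort (c ∘ σ) := by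
      rw [Tuple.comp_perm_comp_sort_eq_comp_sort, Tuple.sort_eq_refl_iff_monotone.2 c.monotone]
      rfl
    refine ⟨⟨Tuple.sort (c ∘ σ) * σ, ?_⟩, ?_⟩
    · rw [Equiv.Perm.coe_mul, ← Function.comp_assoc, ← hc]
    · refine Subtype.ext (Prod.ext (DFunLike.coe_injective hc.symm) ?_)
      simp [unsort]

theorem card_conj_eq_of_isDiagram {m : ℕ} {φ h : Equiv.Perm (Fin (2 * m))} (hφ : IsDiagram m φ)
    (hh : IsDiagram m h) :
    Nat.card {σ : Equiv.Perm (Fin (2 * m)) // σ * φ * σ⁻¹ = h} = 2 ^ m * m.factorial := by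
  have hconj : IsConj φ h := by
    rw [Equiv.Perm.isConj_iff_cycleType_eq, hφ.cycleType_eq, hh.cycleType_eq]
  rw [card_conj_eq_of_isConj hconj, hφ.card_centralizer]

-- Both sides count the pairs `(c, σ)` with `IsSkeleton c (σ * φ * σ⁻¹)`: on the left they are
-- grouped by `(c, σ * φ * σ⁻¹)`, on the right by the coloring `c ∘ σ`.
theorem R_add_mul_eq_sum {m : ℕ} {φ : Equiv.Perm (Fin (2 * m))} (hφ : IsDiagram m φ) (k : ℕ) :
    R (m + k) k * (2 ^ m * m.factorial) =
      ∑ g : Fin (2 * m) → Fin (k + 1) with ∀ i, g i ≠ g (φ i),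
        ∏ a, (Fintype.card {i // g i = a}).factorial := by
  classical
  have : Finite (Fin (2 * m) →o Fin (k + 1)) := DFunLike.finite _
  have := Fintype.ofFinite (Fin (2 * m) →o Fin (k + 1))
  let F (x : (Fin (2 * m) →o Fin (k + 1)) × Equiv.Perm (Fin (2 * m))) := (x.1, x.2 * φ * x.2⁻¹)
  let G (x : (Fin (2 * m) →o Fin (k + 1)) × Equiv.Perm (Fin (2 * m))) := x.1 ∘ x.2
  have hfiber {y} (hy : IsSkeleton y.1 y.2) : Nat.card {x // F x = y} = 2 ^ m * m.factorial := by
    rw [← card_conj_eq_of_isDiagram hφ hy.1]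
    refine (Nat.card_eq_of_bijective (fun σ => ⟨(y.1, σ), Prod.ext rfl σ.2⟩) ⟨?_, ?_⟩).symm
    · intro σ σ' h
      simpa [Subtype.ext_iff] using h
    · rintro ⟨⟨c, σ⟩, rfl⟩
      exact ⟨⟨σ, rfl⟩, rfl⟩
  calc
    R (m + k) k * (2 ^ m * m.factorial)
      = ∑ y : (Fin (2 * m) →o Fin (k + 1)) × _ with IsSkeleton y.1 y.2, 2 ^ m * m.factorial := by
        rw [R_add_eq_card_isSkeleton, Nat.card_eq_fintype_card, Fintype.card_subtype,
          Finset.sum_const, smul_eq_mul]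
    _ = ∑ y with IsSkeleton y.1 y.2, Nat.card {x // F x = y} :=
        Finset.sum_congr rfl fun y hy => (hfiber (Finset.mem_filter.1 hy).2).symm
    _ = Nat.card {x // IsSkeleton (F x).1 (F x).2} :=
        (card_subtype_comp F fun y => IsSkeleton y.1 y.2).symm
    _ = Nat.card {x // ∀ i, G x i ≠ G x (φ i)} := by simp only [F, G, isSkeleton_conj_iff hφ]
    _ = ∑ g with ∀ i, g i ≠ g (φ i), Nat.card {x // G x = g} :=
        card_subtype_comp G fun g => ∀ i, g i ≠ g (φ i)
    _ = _ := by simp only [G, card_orderHom_comp_perm_eq]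

end DoubleCounting

section StandardDiagram

/-- A labelling of the endpoints of `m` chords by the vertices of a diagram. -/
noncomputable def chordEquiv (m : ℕ) : Fin m × Bool ≃ Fin (2 * m) :=
  Fintype.equivFinOfCardEq (by simp [mul_comm])

/-- The diagram with chords `{chordEquiv m (j, false), chordEquiv m (j, true)}`. -/
noncomputable def standardDiagram (m : ℕ) : Equiv.Perm (Fin (2 * m)) :=
  (chordEquiv m).permCongr ((Equiv.refl _).prodCongr Equiv.boolNot)

@[simp]
theorem standardDiagram_chordEquiv (m : ℕ) (j : Fin m) (b : Bool) :
    standardDiagram m (chordEquiv m (j, b)) = chordEquiv m (j, !b) := by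
  simp [standardDiagram]

theorem isDiagram_standardDiagram (m : ℕ) : IsDiagram m (standardDiagram m) := by
  constructor <;> refine (chordEquiv m).surjective.forall.2 fun ⟨j, b⟩ => ?_ <;> simp

variable {A ι : Type*} [CommRing A] [Fintype ι]

theorem sum_offDiag_mul (x : ι → A) :
    ∑ p ∈ Finset.univ.offDiag, x p.1 * x p.2 = (∑ a, x a) ^ 2 - ∑ a, x a ^ 2 := by
  classical
  rw [pow_two, Finset.sum_mul_sum, ← Finset.sum_product', ← Finset.diag_union_offDiag,
    Finset.sum_union (Finset.disjoint_diag_offDiag _), Finset.sum_diag]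
  simp [pow_two]

theorem sum_prod_of_apply_ne [DecidableEq ι] (m : ℕ) (x : ι → A) :
    ∑ g : Fin (2 * m) → ι with ∀ i, g i ≠ g (standardDiagram m i), ∏ i, x (g i) =
      ((∑ a, x a) ^ 2 - ∑ a, x a ^ 2) ^ m := by
  let e : (Fin (2 * m) → ι) ≃ (Fin m → ι × ι) :=
    ((chordEquiv m).symm.arrowCongr (Equiv.refl ι)).trans <|
      (Equiv.curry _ _ _).trans ((Equiv.refl _).arrowCongr (Equiv.boolArrowEquivProd ι))
  have he (g : Fin (2 * m) → ι) (j : Fin m) :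
      e g j = (g (chordEquiv m (j, false)), g (chordEquiv m (j, true))) := rfl
  rw [← sum_offDiag_mul, Finset.sum_pow']
  refine Finset.sum_equiv e (fun g => ?_) fun g _ => ?_
  · simp [he, (chordEquiv m).surjective.forall, ne_comm]
  · rw [← (chordEquiv m).prod_comp, Fintype.prod_prod_type]
    simp [he, mul_comm]

end StandardDiagram

section Slice

open MeasureTheory

variable {k : ℕ}

/-- The point of the hyperplane `∑ a, x a = r` with coordinates `y` away from `a = 0`. -/
def slice (r : ℝ) (y : Fin k → ℝ) : Fin (k + 1) → ℝ := Fin.cons (r - ∑ i, y i) y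

@[simp]
theorem sum_slice (r : ℝ) (y : Fin k → ℝ) : ∑ a, slice r y a = r := by
  simp [slice, Fin.sum_cons]

theorem slice_add (r r' : ℝ) (y y' : Fin k → ℝ) :
    slice (r + r') (y + y') = slice r y + slice r' y' := by
  ext a
  cases a using Fin.cases with
  | zero => simp [slice, Finset.sum_add_distrib]; ring
  | succ i => simp [slice]

theorem slice_smul (t r : ℝ) (y : Fin k → ℝ) : slice (t * r) (t • y) = t • slice r y := by
  ext a
  cases a using Fin.cases with
  | zero => simp [slice, ← Finset.mul_sum]; ring
  | succ i => simp [slice]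

@[fun_prop]
theorem continuous_slice {X : Type*} [TopologicalSpace X] {r : X → ℝ} {y : X → Fin k → ℝ}
    (hr : Continuous r) (hy : Continuous y) : Continuous fun x => slice (r x) (y x) := by
  unfold slice
  fun_prop

theorem lintegral_eq_lintegral_slice {f : (Fin (k + 1) → ℝ) → ENNReal} (hf : Measurable f) :
    ∫⁻ x, f x = ∫⁻ r, ∫⁻ y, f (slice r y) := by
  have hcons : Continuous fun p : ℝ × (Fin k → ℝ) => (Fin.cons p.1 p.2 : Fin (k + 1) → ℝ) := by
    fun_prop
  have hslice : Continuous fun p : (Fin k → ℝ) × ℝ => slice p.2 p.1 := by fun_prop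
  calc
    ∫⁻ x, f x = ∫⁻ p : ℝ × (Fin k → ℝ), f (Fin.cons p.1 p.2) := by
        rw [← ((volume_preserving_piFinSuccAbove (fun _ : Fin (k + 1) => ℝ) 0).symm
          _).lintegral_comp hf]
        simp [MeasurableEquiv.piFinSuccAbove_symm_apply, Fin.insertNthEquiv, Fin.insertNth_zero']
    _ = ∫⁻ y : Fin k → ℝ, ∫⁻ r, f (Fin.cons r y) :=
        lintegral_prod_symm' _ (hf.comp hcons.measurable)
    _ = ∫⁻ y : Fin k → ℝ, ∫⁻ r, f (slice r y) :=
        lintegral_congr fun y => (lintegral_sub_right_eq_self (fun r => f (Fin.cons r y)) _).symm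
    _ = ∫⁻ r, ∫⁻ y : Fin k → ℝ, f (slice r y) :=
        lintegral_lintegral_swap (hf.comp hslice.measurable).aemeasurable

theorem lintegral_prod_ofReal {ι : Type*} [Fintype ι] {f : ι → ℝ → ℝ} (hf : ∀ i, Integrable (f i))
    (hf₀ : ∀ i x, 0 ≤ f i x) :
    ∫⁻ x : ι → ℝ, ENNReal.ofReal (∏ i, f i (x i)) = ENNReal.ofReal (∏ i, ∫ x, f i x) := by
  rw [← integral_fintype_prod_volume_eq_prod]
  exact (ofReal_integral_eq_lintegral_ofReal (Integrable.fintype_prod hf)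
    (.of_forall fun x => Finset.prod_nonneg fun i _ => hf₀ i (x i))).symm

theorem lintegral_eq_mul_lintegral_comp_smul {f : (Fin k → ℝ) → ENNReal} (hf : Measurable f) {r : ℝ}
    (hr : 0 < r) : ∫⁻ y, f y = ENNReal.ofReal (r ^ k) * ∫⁻ y, f (r • y) := by
  rw [← lintegral_map hf (measurable_const_smul r), Measure.map_addHaar_smul _ hr.ne',
    lintegral_smul_measure, smul_eq_mul, ← mul_assoc, ← ENNReal.ofReal_mul (by positivity)]
  simp [abs_of_pos hr, hr.ne']

end Slice

section Dirichlet

open MeasureTheory Set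

variable {k : ℕ}

/-- The unnormalized density of the Gamma distribution with shape `s + 1`. -/
noncomputable def gammaWeight (s : ℕ) : ℝ → ℝ :=
  (Ioi 0).indicator fun x => x ^ s * Real.exp (-x)

theorem gammaWeight_of_pos (s : ℕ) {x : ℝ} (hx : 0 < x) :
    gammaWeight s x = x ^ s * Real.exp (-x) :=
  indicator_of_mem (mem_Ioi.2 hx) _

theorem gammaWeight_of_nonpos (s : ℕ) {x : ℝ} (hx : x ≤ 0) : gammaWeight s x = 0 :=
  indicator_of_notMem (notMem_Ioi.2 hx) _

theorem gammaWeight_nonneg (s : ℕ) (x : ℝ) : 0 ≤ gammaWeight s x :=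
  indicator_nonneg (fun x (hx : 0 < x) => by positivity) x

@[fun_prop]
theorem measurable_gammaWeight (s : ℕ) : Measurable (gammaWeight s) :=
  Measurable.indicator (by fun_prop) measurableSet_Ioi

theorem integrable_gammaWeight (s : ℕ) : Integrable (gammaWeight s) := by
  rw [gammaWeight, integrable_indicator_iff measurableSet_Ioi]
  refine (Real.GammaIntegral_convergent (s := s + 1) (by positivity)).congr_fun (fun x _ => ?_)
    measurableSet_Ioi
  simp [mul_comm]

theorem integral_gammaWeight (s : ℕ) : ∫ x, gammaWeight s x = s.factorial := by
  rw [gammaWeight, integral_indicator measurableSet_Ioi, ← Real.Gamma_nat_eq_factorial,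
    Real.Gamma_eq_integral (by positivity)]
  refine setIntegral_congr_fun measurableSet_Ioi fun x _ => ?_
  simp [mul_comm]

/-- The open standard simplex in `ℝ^{k + 1}`, in the coordinates given by `slice 1`. -/
def openSimplex (k : ℕ) : Set (Fin k → ℝ) := {u | ∀ a, 0 < slice 1 u a}

theorem isOpen_openSimplex (k : ℕ) : IsOpen (openSimplex k) := by
  simp only [openSimplex, ofPred_forall]
  exact isOpen_iInter_of_finite fun a => isOpen_lt (by fun_prop) (by fun_prop)

theorem measurableSet_openSimplex (k : ℕ) : MeasurableSet (openSimplex k) :=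
  (isOpen_openSimplex k).measurableSet

theorem prod_gammaWeight_smul_slice (s : Fin (k + 1) → ℕ) {r : ℝ} (hr : 0 < r) (u : Fin k → ℝ) :
    ENNReal.ofReal (∏ a, gammaWeight (s a) (r * slice 1 u a)) =
      ENNReal.ofReal (r ^ (∑ a, s a) * Real.exp (-r)) *
        (openSimplex k).indicator (fun u => ENNReal.ofReal (∏ a, slice 1 u a ^ s a)) u := by
  by_cases hu : u ∈ openSimplex k
  · have hfactor (a : Fin (k + 1)) : gammaWeight (s a) (r * slice 1 u a) =
        r ^ s a * slice 1 u a ^ s a * Real.exp (-r * slice 1 u a) := by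
      rw [gammaWeight_of_pos _ (mul_pos hr (hu a)), mul_pow, neg_mul]
    rw [indicator_of_mem hu, ← ENNReal.ofReal_mul (by positivity)]
    simp only [hfactor, Finset.prod_mul_distrib, Finset.prod_pow_eq_pow_sum, ← Real.exp_sum,
      ← Finset.mul_sum, sum_slice]
    ring_nf
  · obtain ⟨a, ha⟩ : ∃ a, slice 1 u a ≤ 0 := by simpa [openSimplex] using hu
    rw [indicator_of_notMem hu, mul_zero, Finset.prod_eq_zero (Finset.mem_univ a),
      ENNReal.ofReal_zero]
    exact gammaWeight_of_nonpos _ (mul_nonpos_of_nonneg_of_nonpos hr.le ha)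

theorem lintegral_slice_gammaWeight (s : Fin (k + 1) → ℕ) (r : ℝ) :
    ∫⁻ y, ENNReal.ofReal (∏ a, gammaWeight (s a) (slice r y a)) =
      ENNReal.ofReal (gammaWeight (∑ a, s a + k) r) *
        ∫⁻ u in openSimplex k, ENNReal.ofReal (∏ a, slice 1 u a ^ s a) := by
  rcases le_or_gt r 0 with hr | hr
  · have hzero (y : Fin k → ℝ) : ∏ a, gammaWeight (s a) (slice r y a) = 0 := by
      obtain ⟨a, ha⟩ : ∃ a, slice r y a ≤ 0 := by
        by_contra! hpos
        have := Finset.sum_pos (fun a _ => hpos a) Finset.univ_nonempty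
        rw [sum_slice] at this
        linarith
      exact Finset.prod_eq_zero (Finset.mem_univ a) (gammaWeight_of_nonpos _ ha)
    simp [hzero, gammaWeight_of_nonpos _ hr]
  · have hscale (u : Fin k → ℝ) (a : Fin (k + 1)) : slice r (r • u) a = r * slice 1 u a := by
      simpa using congrFun (slice_smul r 1 u) a
    have hmeas : Measurable fun y => ENNReal.ofReal (∏ a, gammaWeight (s a) (slice r y a)) := by
      have := (continuous_slice continuous_const continuous_id (r := fun _ : Fin k → ℝ => r)
        ).measurable
      fun_prop
    rw [lintegral_eq_mul_lintegral_comp_smul hmeas hr]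
    simp only [hscale, prod_gammaWeight_smul_slice s hr]
    rw [lintegral_const_mul' _ _ ENNReal.ofReal_ne_top,
      lintegral_indicator (measurableSet_openSimplex k), ← mul_assoc,
      ← ENNReal.ofReal_mul (by positivity), gammaWeight_of_pos _ hr]
    ring_nf

theorem prod_factorial_eq_lintegral (s : Fin (k + 1) → ℕ) :
    ENNReal.ofReal (∏ a, ((s a).factorial : ℝ)) =
      ENNReal.ofReal (∑ a, s a + k).factorial *
        ∫⁻ u in openSimplex k, ENNReal.ofReal (∏ a, slice 1 u a ^ s a) := by
  calc
    ENNReal.ofReal (∏ a, ((s a).factorial : ℝ))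
      = ∫⁻ x : Fin (k + 1) → ℝ, ENNReal.ofReal (∏ a, gammaWeight (s a) (x a)) := by
        rw [lintegral_prod_ofReal (fun a => integrable_gammaWeight (s a))
          fun a => gammaWeight_nonneg (s a)]
        simp only [integral_gammaWeight]
    _ = ∫⁻ r, ENNReal.ofReal (gammaWeight (∑ a, s a + k) r) *
          ∫⁻ u in openSimplex k, ENNReal.ofReal (∏ a, slice 1 u a ^ s a) := by
        rw [lintegral_eq_lintegral_slice (by fun_prop)]
        simp only [lintegral_slice_gammaWeight]
    _ = _ := by
        rw [lintegral_mul_const _ (by fun_prop),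
          ← ofReal_integral_eq_lintegral_ofReal (integrable_gammaWeight _)
            (.of_forall (gammaWeight_nonneg _)), integral_gammaWeight]

end Dirichlet

section SimplexIntegral

open MeasureTheory

variable {k : ℕ}

/-- The integral of `(1 - ‖x‖ ^ 2) ^ m` over the open standard simplex of `ℝ^{k + 1}`, for the
Lebesgue measure in the coordinates given by `slice 1`. -/
noncomputable def simplexIntegral (k m : ℕ) : ℝ :=
  ∫ u in openSimplex k, (1 - ∑ a, slice 1 u a ^ 2) ^ m

theorem one_sub_sum_slice_sq_nonneg {u : Fin k → ℝ} (hu : u ∈ openSimplex k) :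
    0 ≤ 1 - ∑ a, slice 1 u a ^ 2 := by
  simpa using Finset.sum_sq_le_sq_sum_of_nonneg fun a (_ : a ∈ Finset.univ) => (hu a).le

theorem sum_card_fiber {ι α : Type*} [Fintype ι] [Fintype α] [DecidableEq α] (g : ι → α) :
    ∑ a, Fintype.card {i // g i = a} = Fintype.card ι := by
  rw [← Fintype.card_sigma, Fintype.card_congr (Equiv.sigmaFiberEquiv g)]

theorem prod_pow_card_fiber {ι α M : Type*} [Fintype ι] [Fintype α] [DecidableEq α] [CommMonoid M]
    (g : ι → α) (x : α → M) : ∏ a, x a ^ Fintype.card {i // g i = a} = ∏ i, x (g i) := by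
  simp_rw [Fintype.card_subtype, ← Finset.prod_fiberwise Finset.univ g, ← Finset.prod_const]
  refine Finset.prod_congr rfl fun a _ => Finset.prod_congr rfl fun i hi => ?_
  rw [(Finset.mem_filter.mp hi).2]

theorem ofReal_sum_prod_factorial_eq_lintegral (k m : ℕ) :
    ENNReal.ofReal (∑ g : Fin (2 * m) → Fin (k + 1) with ∀ i, g i ≠ g (standardDiagram m i),
        ∏ a, ((Fintype.card {i // g i = a}).factorial : ℝ)) =
      ENNReal.ofReal (2 * m + k).factorial *
        ∫⁻ u in openSimplex k, ENNReal.ofReal ((1 - ∑ a, slice 1 u a ^ 2) ^ m) := by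
  rw [ENNReal.ofReal_sum_of_nonneg fun g _ => by positivity]
  simp_rw [prod_factorial_eq_lintegral, sum_card_fiber, prod_pow_card_fiber, Fintype.card_fin]
  rw [← Finset.mul_sum, ← lintegral_finsetSum _ fun g _ => by fun_prop]
  congr 1
  refine setLIntegral_congr_fun (measurableSet_openSimplex k) fun u hu => ?_
  rw [← ENNReal.ofReal_sum_of_nonneg fun g _ => Finset.prod_nonneg fun i _ => (hu _).le,
    sum_prod_of_apply_ne, sum_slice, one_pow]

theorem R_add_mul_eq_factorial_mul_simplexIntegral (m k : ℕ) :
    (R (m + k) k : ℝ) * (2 ^ m * m.factorial) = (2 * m + k).factorial * simplexIntegral k m := by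
  have hsum := congrArg (Nat.cast (R := ℝ)) (R_add_mul_eq_sum (isDiagram_standardDiagram m) k)
  push_cast at hsum
  have hint := congrArg ENNReal.toReal (ofReal_sum_prod_factorial_eq_lintegral k m)
  rw [ENNReal.toReal_ofReal (by positivity), ENNReal.toReal_mul,
    ENNReal.toReal_ofReal (by positivity)] at hint
  rw [hsum, hint, simplexIntegral, integral_eq_lintegral_of_nonneg_ae]
  · filter_upwards [ae_restrict_mem (measurableSet_openSimplex k)] with u hu
    exact pow_nonneg (one_sub_sum_slice_sq_nonneg hu) m
  · exact (by fun_prop : Continuous fun u => (1 - ∑ a, slice 1 u a ^ 2) ^ m).aestronglyMeasurable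

end SimplexIntegral

section Gaussian

open MeasureTheory

variable {k : ℕ}

theorem slice_const_add (r : ℝ) (v : Fin k → ℝ) :
    slice r ((fun _ => r / (k + 1)) + v) = (fun _ => r / (k + 1)) + slice 0 v := by
  have hcentroid : slice r (fun _ : Fin k => r / (k + 1)) = fun _ => r / (k + 1) := by
    ext a
    cases a using Fin.cases with
    | zero =>
      simp only [slice, Fin.cons_zero, Finset.sum_const, Finset.card_univ, Fintype.card_fin,
        nsmul_eq_mul]
      field_simp
      ring
    | succ i => simp [slice]
  simpa [hcentroid] using slice_add r 0 (fun _ : Fin k => r / (k + 1)) v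

/-- Pythagoras: `slice 0 v` is orthogonal to the diagonal. -/
theorem sum_slice_const_add_sq (r : ℝ) (v : Fin k → ℝ) :
    ∑ a, slice r ((fun _ => r / (k + 1)) + v) a ^ 2 = r ^ 2 / (k + 1) + ∑ a, slice 0 v a ^ 2 := by
  simp only [slice_const_add, Pi.add_apply, add_sq, Finset.sum_add_distrib, ← Finset.mul_sum,
    sum_slice, Finset.sum_const, Finset.card_univ, Fintype.card_fin, nsmul_eq_mul]
  push_cast
  field_simp
  ring

theorem lintegral_exp_neg_mul_sum_slice_sq {c : ℝ} (hc : 0 < c) :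
    ∫⁻ v : Fin k → ℝ, ENNReal.ofReal (Real.exp (-c * ∑ a, slice 0 v a ^ 2)) =
      ENNReal.ofReal (√(Real.pi / c) ^ k / √(k + 1)) := by
  set I := ∫⁻ v : Fin k → ℝ, ENNReal.ofReal (Real.exp (-c * ∑ a, slice 0 v a ^ 2))
  have hinner (r : ℝ) : ∫⁻ y : Fin k → ℝ, ENNReal.ofReal (∏ a, Real.exp (-c * slice r y a ^ 2)) =
      ENNReal.ofReal (Real.exp (-(c / (k + 1)) * r ^ 2)) * I := by
    rw [← lintegral_add_left_eq_self _ (fun _ => r / (k + 1)),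
      ← lintegral_const_mul' _ _ ENNReal.ofReal_ne_top]
    refine lintegral_congr fun v => ?_
    rw [← ENNReal.ofReal_mul (by positivity), ← Real.exp_sum, ← Finset.mul_sum,
      sum_slice_const_add_sq, ← Real.exp_add]
    ring_nf
  have hmass : ENNReal.ofReal (√(Real.pi / c) ^ (k + 1)) =
      ENNReal.ofReal √(Real.pi / (c / (k + 1))) * I := by
    calc
      _ = ∫⁻ x : Fin (k + 1) → ℝ, ENNReal.ofReal (∏ a, Real.exp (-c * x a ^ 2)) := by
        rw [lintegral_prod_ofReal (f := fun _ x => Real.exp (-c * x ^ 2))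
          (fun _ => integrable_exp_neg_mul_sq hc) fun _ _ => (Real.exp_pos _).le]
        simp only [integral_gaussian, Finset.prod_const, Finset.card_univ, Fintype.card_fin]
      _ = ∫⁻ r, ENNReal.ofReal (Real.exp (-(c / (k + 1)) * r ^ 2)) * I := by
        rw [lintegral_eq_lintegral_slice (by fun_prop)]
        simp only [hinner]
      _ = _ := by
        rw [lintegral_mul_const _ (by fun_prop), ← ofReal_integral_eq_lintegral_ofReal
          (integrable_exp_neg_mul_sq (by positivity)) (.of_forall fun _ => (Real.exp_pos _).le),
          integral_gaussian]
  have hpos : 0 < √(Real.pi / (c / (k + 1))) := by positivity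
  rw [← ENNReal.mul_right_inj (ENNReal.ofReal_pos.2 hpos).ne' ENNReal.ofReal_ne_top, ← hmass,
    ← ENNReal.ofReal_mul hpos.le, div_div_eq_mul_div, mul_div_right_comm,
    Real.sqrt_mul (by positivity), pow_succ]
  congr 1
  field_simp

theorem integrable_exp_neg_mul_sum_slice_sq {c : ℝ} (hc : 0 < c) :
    Integrable fun v : Fin k → ℝ => Real.exp (-c * ∑ a, slice 0 v a ^ 2) := by
  rw [← lintegral_ofReal_ne_top_iff_integrable (by fun_prop)
    (.of_forall fun _ => (Real.exp_pos _).le), lintegral_exp_neg_mul_sum_slice_sq hc]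
  exact ENNReal.ofReal_ne_top

theorem integral_exp_neg_mul_sum_slice_sq {c : ℝ} (hc : 0 < c) :
    ∫ v : Fin k → ℝ, Real.exp (-c * ∑ a, slice 0 v a ^ 2) = √(Real.pi / c) ^ k / √(k + 1) := by
  rw [integral_eq_lintegral_of_nonneg_ae (.of_forall fun _ => (Real.exp_pos _).le) (by fun_prop),
    lintegral_exp_neg_mul_sum_slice_sq hc, ENNReal.toReal_ofReal (by positivity)]

end Gaussian

section Laplace

open MeasureTheory Set Filter Topology

variable {k m : ℕ}

/-- The point at offset `v / √m` from the centroid of `openSimplex k`. -/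
noncomputable def nearCentroid (m : ℕ) (v : Fin k → ℝ) : Fin k → ℝ :=
  (fun _ => 1 / ((k : ℝ) + 1)) + (√m)⁻¹ • v

/-- The integrand of `simplexIntegral k m`, divided by its value at the centroid of the simplex and
rescaled around the centroid by the factor `√m`. -/
noncomputable def rescaledIntegrand (k m : ℕ) (v : Fin k → ℝ) : ℝ :=
  (openSimplex k).indicator (fun u => ((k + 1) / k * (1 - ∑ a, slice 1 u a ^ 2)) ^ m)
    (nearCentroid m v)

theorem measurable_rescaledIntegrand (k m : ℕ) : Measurable (rescaledIntegrand k m) :=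
  (((by fun_prop : Continuous fun u => ((k + 1) / k * (1 - ∑ a, slice 1 u a ^ 2)) ^ m).measurable
    ).indicator (measurableSet_openSimplex k)).comp (by unfold nearCentroid; fun_prop)

theorem rescaledIntegrand_nonneg (k m : ℕ) (v : Fin k → ℝ) : 0 ≤ rescaledIntegrand k m v :=
  indicator_nonneg (fun u hu => by
    have := one_sub_sum_slice_sq_nonneg hu
    positivity) _

theorem integral_rescaledIntegrand (hm : 0 < m) :
    ∫ v, rescaledIntegrand k m v = simplexIntegral k m * √m ^ k * ((k + 1) / k) ^ m := by
  have : 0 < √(m : ℝ) := by positivity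
  unfold rescaledIntegrand nearCentroid
  rw [Measure.integral_comp_smul volume (fun v => (openSimplex k).indicator _ (_ + v)),
    integral_add_left_eq_self, integral_indicator (measurableSet_openSimplex k)]
  simp only [mul_pow, integral_const_mul, simplexIntegral, Module.finrank_fintype_fun_eq_card,
    Fintype.card_fin, smul_eq_mul]
  rw [abs_of_pos (by positivity), inv_pow, inv_inv]
  ring

theorem div_mul_one_sub_sum_slice_sq (hk : 0 < k) (hm : 0 < m) (v : Fin k → ℝ) :
    ((k : ℝ) + 1) / k * (1 - ∑ a, slice 1 (nearCentroid m v) a ^ 2) =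
      1 + -((k + 1) / k) * (∑ a, slice 0 v a ^ 2) / m := by
  have hscale (a : Fin (k + 1)) : slice 0 ((√m)⁻¹ • v) a = (√m)⁻¹ * slice 0 v a := by
    simpa using congrFun (slice_smul (√m)⁻¹ 0 v) a
  rw [nearCentroid, sum_slice_const_add_sq]
  simp only [hscale, mul_pow, ← Finset.mul_sum, inv_pow, Real.sq_sqrt m.cast_nonneg]
  field_simp
  ring

theorem rescaledIntegrand_le (hk : 0 < k) (hm : 0 < m) (v : Fin k → ℝ) :
    rescaledIntegrand k m v ≤ Real.exp (-((k + 1) / k) * ∑ a, slice 0 v a ^ 2) := by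
  by_cases hu : nearCentroid m v ∈ openSimplex k
  · have hbase := one_sub_sum_slice_sq_nonneg hu
    rw [rescaledIntegrand, indicator_of_mem hu, ← mul_div_cancel₀ (-((k + 1) / k : ℝ) * _)
      (by positivity : (m : ℝ) ≠ 0), Real.exp_nat_mul]
    refine pow_le_pow_left₀ (by positivity) ?_ m
    rw [div_mul_one_sub_sum_slice_sq hk hm, add_comm]
    exact Real.add_one_le_exp _
  · rw [rescaledIntegrand, indicator_of_notMem hu]
    positivity

theorem eventually_nearCentroid_mem (v : Fin k → ℝ) :
    ∀ᶠ m : ℕ in atTop, nearCentroid m v ∈ openSimplex k := by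
  have hcentroid : (fun _ => 1 / (k + 1) : Fin k → ℝ) ∈ openSimplex k := fun a => by
    have := congrFun (slice_const_add 1 (0 : Fin k → ℝ)) a
    have hzero : slice 0 (0 : Fin k → ℝ) = 0 := by simpa using slice_smul 0 0 (0 : Fin k → ℝ)
    rw [hzero, add_zero, add_zero] at this
    rw [this]
    positivity
  refine Tendsto.eventually_mem ?_ ((isOpen_openSimplex k).mem_nhds hcentroid)
  simpa [nearCentroid] using ((Real.tendsto_sqrt_atTop.comp
    tendsto_natCast_atTop_atTop).inv_tendsto_atTop.smul_const v).const_add _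

theorem tendsto_rescaledIntegrand (hk : 0 < k) (v : Fin k → ℝ) :
    Tendsto (fun m => rescaledIntegrand k m v) atTop
      (𝓝 (Real.exp (-((k + 1) / k) * ∑ a, slice 0 v a ^ 2))) := by
  refine (Real.tendsto_one_add_div_pow_exp _).congr' ?_
  filter_upwards [eventually_gt_atTop 0, eventually_nearCentroid_mem v] with m hm hmem
  rw [rescaledIntegrand, indicator_of_mem hmem, div_mul_one_sub_sum_slice_sq hk hm]

theorem tendsto_simplexIntegral (hk : 0 < k) :
    Tendsto (fun m => simplexIntegral k m * √m ^ k * ((k + 1) / k) ^ m) atTop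
      (𝓝 (√(Real.pi * k / (k + 1)) ^ k / √(k + 1))) := by
  have hc : (0 : ℝ) < (k + 1) / k := by positivity
  rw [← div_div_eq_mul_div, ← integral_exp_neg_mul_sum_slice_sq hc]
  refine Tendsto.congr' ?_ (tendsto_integral_filter_of_dominated_convergence _ ?_ ?_
    (integrable_exp_neg_mul_sum_slice_sq hc) (.of_forall (tendsto_rescaledIntegrand hk)))
  · filter_upwards [eventually_gt_atTop 0] with m hm using integral_rescaledIntegrand hm
  · exact .of_forall fun m => (measurable_rescaledIntegrand k m).aestronglyMeasurable
  · filter_upwards [eventually_gt_atTop 0] with m hm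
    refine .of_forall fun v => ?_
    rw [Real.norm_of_nonneg (rescaledIntegrand_nonneg k m v)]
    exact rescaledIntegrand_le hk hm v

end Laplace

section Asymptotics

open Filter Asymptotics

variable {k : ℕ}

theorem factorial_add_isEquivalent (k : ℕ) :
    (fun n : ℕ => ((n + k).factorial : ℝ)) ~[atTop] fun n => n.factorial * (n : ℝ) ^ k := by
  induction k with
  | zero => simpa using IsEquivalent.refl
  | succ k ih =>
    have hfactor : (fun n : ℕ => ((n + k + 1 : ℕ) : ℝ)) ~[atTop] fun n => (n : ℝ) := by
      simp only [add_assoc, Nat.cast_add (_ : ℕ) (k + 1)]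
      exact IsEquivalent.refl.add_isLittleO (isLittleO_const_left.2 <| .inr <|
        tendsto_norm_atTop_atTop.comp tendsto_natCast_atTop_atTop)
    refine (hfactor.mul ih).congr_left (.of_forall fun n => ?_) |>.congr_right
      (.of_forall fun n => ?_)
    · simp [← add_assoc, Nat.factorial_succ]
    · simp only [Pi.mul_apply, pow_succ]
      ring

theorem factorial_two_mul_div_isEquivalent :
    (fun m : ℕ => ((2 * m).factorial : ℝ) / (2 ^ m * m.factorial)) ~[atTop]
      fun m => √2 * (2 * m / Real.exp 1) ^ m := by
  have hdouble : Tendsto (fun m : ℕ => 2 * m) atTop atTop :=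
    tendsto_id.const_mul_atTop' two_pos
  refine ((Stirling.factorial_isEquivalent_stirling.comp_tendsto hdouble).div
    (IsEquivalent.refl.mul Stirling.factorial_isEquivalent_stirling)).congr_right ?_
  filter_upwards [eventually_gt_atTop 0] with m hm
  have hsqrt : √(2 * ↑(2 * m) * Real.pi) = √2 * √(2 * m * Real.pi) := by
    rw [← Real.sqrt_mul zero_le_two]
    push_cast
    ring_nf
  have : 0 < √(2 * m * Real.pi) := by positivity
  simp only [Function.comp_apply, Pi.mul_apply, Pi.div_apply, hsqrt]
  push_cast
  field_simp
  ring

theorem factorial_two_mul_add_div_isEquivalent (k : ℕ) :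
    (fun m : ℕ => ((2 * m + k).factorial : ℝ) / (2 ^ m * m.factorial)) ~[atTop]
      fun m => √2 * (2 * m / Real.exp 1) ^ m * (2 * m) ^ k := by
  have hdouble : Tendsto (fun m : ℕ => 2 * m) atTop atTop :=
    tendsto_id.const_mul_atTop' two_pos
  refine (((factorial_add_isEquivalent k).comp_tendsto hdouble).div .refl).trans
    ((factorial_two_mul_div_isEquivalent.mul .refl).congr_left (.of_forall fun m => ?_))
  simp only [Function.comp_apply, Pi.mul_apply, Pi.div_apply]
  push_cast
  ring

theorem simplexIntegral_isEquivalent (hk : 0 < k) :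
    simplexIntegral k ~[atTop] fun m =>
      √(Real.pi * k / (k + 1)) ^ k / √(k + 1) * ((√m ^ k)⁻¹ * (k / (k + 1)) ^ m) := by
  have hlim : 0 < √(Real.pi * k / (k + 1)) ^ k / √((k : ℝ) + 1) := by positivity
  refine (((isEquivalent_const_iff_tendsto hlim.ne').2 (tendsto_simplexIntegral hk)).mul
    IsEquivalent.refl).congr_left ?_
  filter_upwards [eventually_gt_atTop 0] with m hm
  have : 0 < √(m : ℝ) := by positivity
  simp only [Pi.mul_apply, div_pow]
  field_simp

theorem R_add_isEquivalent (hk : 0 < k) :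
    (fun m => (R (m + k) k : ℝ)) ~[atTop] fun m =>
      √2 / √(k + 1) * (2 * m / Real.exp 1 * (k / (k + 1))) ^ m *
        (2 * √(Real.pi * k * (m / (k + 1)))) ^ k := by
  refine ((factorial_two_mul_add_div_isEquivalent k).mul
    (simplexIntegral_isEquivalent hk)).congr_left (.of_forall fun m => ?_) |>.congr_right ?_
  · have hR := R_add_mul_eq_factorial_mul_simplexIntegral m k
    simp only [Pi.mul_apply]
    rw [div_mul_eq_mul_div, ← hR, mul_div_cancel_right₀ _ (by positivity)]
  filter_upwards [eventually_gt_atTop 0] with m hm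
  have hsqrt : √(Real.pi * k * (m / (k + 1))) = √(Real.pi * k / (k + 1)) * √m := by
    rw [← Real.sqrt_mul (by positivity)]
    ring_nf
  have hself : (m : ℝ) ^ k = √m ^ k * √m ^ k := by
    rw [← mul_pow, Real.mul_self_sqrt m.cast_nonneg]
  have : 0 < √(m : ℝ) := by positivity
  simp only [Pi.mul_apply, hsqrt, mul_pow, hself]
  field_simp

theorem rpow_natCast_add_natCast_div_two {x : ℝ} (hx : 0 < x) (m k : ℕ) :
    x ^ (m + k / 2 : ℝ) = x ^ m * √x ^ k := by
  rw [Real.rpow_add hx, Real.rpow_natCast, Real.rpow_div_two_eq_sqrt _ hx.le, Real.rpow_natCast]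

theorem rpow_prod_eq_pow_prod {k m n : ℕ} (hk : 0 < k) (hm : 0 < m) (hn : n = m + k) :
    ((k : ℝ) + 1) ^ (-(1 / 2 : ℝ)) * (2 : ℝ) ^ ((n : ℝ) + 1 / 2) *
          Real.exp ((k : ℝ) - (n : ℝ)) * (k : ℝ) ^ ((n : ℝ) - (k : ℝ) / 2) *
          Real.pi ^ ((k : ℝ) / 2) *
          (((n : ℝ) - (k : ℝ)) / ((k : ℝ) + 1)) ^ ((n : ℝ) - (k : ℝ) / 2) =
      √2 / √(k + 1) * (2 * m / Real.exp 1 * (k / (k + 1))) ^ m *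
        (2 * √(Real.pi * k * (m / (k + 1)))) ^ k := by
  have hn' : (n : ℝ) = m + k := by exact_mod_cast hn
  have hexponent : (n : ℝ) - k / 2 = m + k / 2 := by rw [hn']; ring
  have hexp : Real.exp ((k : ℝ) - n) = (Real.exp 1 ^ m)⁻¹ := by
    rw [← Real.exp_nat_mul, ← Real.exp_neg, hn']
    ring_nf
  have htwo : (2 : ℝ) ^ ((n : ℝ) + 1 / 2) = 2 ^ n * √2 := by
    simpa using rpow_natCast_add_natCast_div_two two_pos n 1
  have hpi : Real.pi ^ ((k : ℝ) / 2) = √Real.pi ^ k := by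
    simpa using rpow_natCast_add_natCast_div_two Real.pi_pos 0 k
  have hsucc : ((k : ℝ) + 1) ^ (-(1 / 2 : ℝ)) = (√(k + 1))⁻¹ := by
    rw [Real.rpow_neg (by positivity), Real.sqrt_eq_rpow]
  have hsub : (n : ℝ) - k = m := by rw [hn']; ring
  rw [hexponent, hexp, htwo, hpi, hsucc, hsub, rpow_natCast_add_natCast_div_two (by positivity),
    rpow_natCast_add_natCast_div_two (by positivity), Real.sqrt_mul (by positivity),
    Real.sqrt_mul Real.pi_nonneg, hn]
  ring

end Asymptotics

/-- For each fixed `k ≥ 1`, as `n → ∞`,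
`R n k ~ (k+1)^{-1/2} · 2^{n+1/2} · e^{k-n} · k^{n-k/2} · π^{k/2} · ((n-k)/(k+1))^{n-k/2}`. -/
theorem R_asymptotic (k : ℕ) (hk : 1 ≤ k) :
    Filter.Tendsto
      (fun n : ℕ => (R n k : ℝ) /
        (((k : ℝ) + 1) ^ (-(1 / 2 : ℝ)) * (2 : ℝ) ^ ((n : ℝ) + 1 / 2) *
          Real.exp ((k : ℝ) - (n : ℝ)) * (k : ℝ) ^ ((n : ℝ) - (k : ℝ) / 2) *
          Real.pi ^ ((k : ℝ) / 2) *
          (((n : ℝ) - (k : ℝ)) / ((k : ℝ) + 1)) ^ ((n : ℝ) - (k : ℝ) / 2)))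
      Filter.atTop (nhds 1) := by
  rw [← Filter.tendsto_add_atTop_iff_nat k]
  have hpos : ∀ᶠ m : ℕ in Filter.atTop, √2 / √(k + 1) * (2 * m / Real.exp 1 * (k / (k + 1))) ^ m *
      (2 * √(Real.pi * k * (m / (k + 1)))) ^ k ≠ 0 := by
    filter_upwards [Filter.eventually_gt_atTop 0] with m hm
    positivity
  refine ((Asymptotics.isEquivalent_iff_tendsto_one hpos).1 (R_add_isEquivalent hk)).congr' ?_
  filter_upwards [Filter.eventually_gt_atTop 0] with m hm
  rw [rpow_prod_eq_pow_prod hk hm rfl, Pi.div_apply]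

end ChordBubbles
end
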